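/- Let G be a finite non-cyclic nilpotent group and let p be the smallest prime divisor of |G|. Then the Noether number satisfies β(G) ≤ |G|/p + p − 1, except when p = 2 and G is a dicyclic group, in which case β(G) = |G|/2 + 2. -/

import Mathlib

open MvPolynomial

/-- The action of a group element on polynomial functions, induced by a linear
representation `ρ` on the variables. -/
noncomputable def polyAct {F : Type*} [Field F] {G : Type*} [Group G] {d : ℕ}
    (ρ : G →* Matrix.GeneralLinearGroup (Fin d) F) (g : G)
    (f : MvPolynomial (Fin d) F) : MvPolynomial (Fin d) F :=
  MvPolynomial.aeval (fun i => ∑ j, ((ρ g).val i j) • (MvPolynomial.X j)) f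

/-- A polynomial invariant of the representation `ρ`. -/
def IsPolyInvariant {F : Type*} [Field F] {G : Type*} [Group G] {d : ℕ}
    (ρ : G →* Matrix.GeneralLinearGroup (Fin d) F)
    (f : MvPolynomial (Fin d) F) : Prop :=
  ∀ g : G, polyAct ρ g f = f

/-- `β(G, V) ≤ s`: the invariant ring is generated as an algebra by its
invariants of degree at most `s`. -/
def NoetherBoundLe {F : Type*} [Field F] {G : Type*} [Group G] {d : ℕ}
    (ρ : G →* Matrix.GeneralLinearGroup (Fin d) F) (s : ℕ) : Prop :=
  ∀ f : MvPolynomial (Fin d) F, IsPolyInvariant ρ f →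
    f ∈ Algebra.adjoin F
      {h : MvPolynomial (Fin d) F | IsPolyInvariant ρ h ∧ h.totalDegree ≤ s}

/-- `G` is a dicyclic group `Dic_{4n} = ⟨a, b | a^{2n} = 1, b² = aⁿ, bab⁻¹ = a⁻¹⟩`. -/
def IsDicyclic (G : Type*) [Group G] : Prop :=
  ∃ (a b : G) (n : ℕ), 1 < n ∧ orderOf a = 2 * n ∧ b ^ 2 = a ^ n ∧
    b * a * b⁻¹ = a⁻¹ ∧ Subgroup.closure ({a, b} : Set G) = ⊤


namespace NB

/-- `S` can be partitioned into `n` nonempty zero-sum blocks. -/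
def Zs {ι A : Type*} [AddCommMonoid A] (w : ι → A) (n : ℕ) (S : Finset ι) : Prop :=
  ∃ c : ι → Fin n, ∀ k, (S.filter (fun i => c i = k)).Nonempty ∧
    ∑ i ∈ S.filter (fun i => c i = k), w i = 0

lemma Zs.one {ι A : Type*} [AddCommMonoid A] {w : ι → A} {S : Finset ι}
    (hS : S.Nonempty) (h : ∑ i ∈ S, w i = 0) : Zs w 1 S := by
  refine ⟨fun _ => 0, fun k => ?_⟩
  have : ∀ i : ι, ((0 : Fin 1) = k) := fun _ => Subsingleton.elim _ _
  simp [Subsingleton.elim (0 : Fin 1) k, hS, h]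

lemma Zs.cons {ι A : Type*} [DecidableEq ι] [AddCommMonoid A] {w : ι → A} {S T : Finset ι} {n : ℕ}
    (hTS : T ⊆ S) (hT : T.Nonempty) (h : ∑ i ∈ T, w i = 0) (hz : Zs w n (S \ T)) :
    Zs w (n + 1) S := by
  obtain ⟨c, hc⟩ := hz
  refine ⟨fun i => if i ∈ T then 0 else (c i).succ, fun k => ?_⟩
  refine Fin.cases ?_ (fun k => ?_) k
  · have : S.filter (fun i => (if i ∈ T then (0 : Fin (n+1)) else (c i).succ) = 0) = T := by
      ext i
      simp only [Finset.mem_filter]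
      constructor
      · rintro ⟨_, h2⟩
        by_contra hi
        simp [hi] at h2
      · intro hi
        simp [hi, hTS hi]
    rw [this]; exact ⟨hT, h⟩
  · have : S.filter (fun i => (if i ∈ T then (0 : Fin (n+1)) else (c i).succ) = k.succ)
        = (S \ T).filter (fun i => c i = k) := by
      ext i
      simp only [Finset.mem_filter, Finset.mem_sdiff]
      by_cases hi : i ∈ T
      · simp [hi, (Fin.succ_ne_zero k).symm]
      · simp [hi]
    rw [this]; exact hc k

lemma sum_comp_fiber {ι C : Type*} [AddCommMonoid C] {S : Finset ι} {m n : ℕ} (c : ι → Fin m)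
    (d : Fin m → Fin n) (k : Fin n) (f : ι → C) :
    ∑ i ∈ S.filter (fun i => (d ∘ c) i = k), f i =
      ∑ j ∈ Finset.univ.filter (fun j => d j = k), ∑ i ∈ S.filter (fun i => c i = j), f i := by
  classical
  rw [← Finset.sum_fiberwise_of_maps_to (s := S.filter (fun i => (d ∘ c) i = k))
    (t := Finset.univ.filter (fun j => d j = k)) (g := c)]
  · refine Finset.sum_congr rfl fun j hj => Finset.sum_congr ?_ fun _ _ => rfl
    ext i
    simp only [Finset.mem_filter, Function.comp, Finset.mem_univ, true_and] at hj ⊢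
    constructor
    · rintro ⟨⟨a, _⟩, b⟩; exact ⟨a, b⟩
    · rintro ⟨a, b⟩; exact ⟨⟨a, by rw [b]; exact hj⟩, b⟩
  · intro i hi
    simpa using (Finset.mem_filter.1 hi).2

/-- blocks of blocks -/
lemma Zs.comp {ι A B : Type*} [AddCommMonoid A] [AddCommMonoid B] {s : ι → A} {t : ι → B}
    {S : Finset ι} {m n : ℕ} (c : ι → Fin m)
    (hc : ∀ k, (S.filter (fun i => c i = k)).Nonempty ∧ ∑ i ∈ S.filter (fun i => c i = k), s i = 0)
    (hd : Zs (fun k : Fin m => ∑ i ∈ S.filter (fun i => c i = k), t i) n Finset.univ) :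
    Zs (fun i => (s i, t i)) n S := by
  classical
  obtain ⟨d, hd⟩ := hd
  refine ⟨d ∘ c, fun k => ?_⟩
  obtain ⟨⟨j, hj⟩, h0⟩ := hd k
  refine ⟨?_, ?_⟩
  · obtain ⟨i, hi⟩ := (hc j).1
    refine ⟨i, ?_⟩
    simp only [Finset.mem_filter, Function.comp, Finset.mem_univ, true_and] at hi hj ⊢
    exact ⟨hi.1, by rw [hi.2]; exact hj⟩
  · apply Prod.ext
    · rw [Prod.fst_sum, sum_comp_fiber]
      exact Finset.sum_eq_zero fun j _ => (hc j).2
    · rw [Prod.snd_sum, sum_comp_fiber]; exact h0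

lemma exists_zero_sum {ι : Type*} {p : ℕ} [Fact p.Prime] {k : ℕ} (S : Finset ι)
    (w : ι → Fin k → ZMod p) (h : k * (p - 1) < S.card) :
    ∃ T ⊆ S, T.Nonempty ∧ ∀ j, ∑ i ∈ T, w i j = 0 := by
  classical
  let f : Fin k → MvPolynomial S (ZMod p) := fun j => ∑ i : S, w i j • X i ^ (p - 1)
  have hdeg : ∑ j ∈ (Finset.univ : Finset (Fin k)), (f j).totalDegree < Fintype.card S := by
    calc _ ≤ ∑ j ∈ (Finset.univ : Finset (Fin k)), (p - 1) := by
          apply Finset.sum_le_sum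
          intro j _
          apply totalDegree_finsetSum_le
          intro i _
          exact (totalDegree_smul_le ..).trans (totalDegree_X_pow ..).le
      _ < _ := by simpa using h
  have hdvd := char_dvd_card_solutions_of_sum_lt p hdeg
  have hp := (Fact.out : p.Prime)
  let z : {x : S → ZMod p // ∀ i ∈ (Finset.univ : Finset (Fin k)), eval x (f i) = 0} :=
    ⟨0, by
      intro i _
      simp [f, map_sum, smul_eval, Nat.sub_ne_zero_of_lt hp.one_lt]⟩
  have hpos : 0 < Fintype.card
    {x : S → ZMod p // ∀ i ∈ (Finset.univ : Finset (Fin k)), eval x (f i) = 0} :=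
    @Fintype.card_pos _ _ ⟨z⟩
  obtain ⟨x, hx⟩ := Fintype.exists_ne_of_one_lt_card (hp.one_lt.trans_le
    (Nat.le_of_dvd hpos (by convert hdvd))) z
  refine ⟨(Finset.univ.filter (fun a : S => x.1 a ≠ 0)).map ⟨(↑), Subtype.val_injective⟩, ?_, ?_, ?_⟩
  · simp +contextual [Finset.subset_iff]
  · rw [Finset.map_nonempty]
    rw [← Subtype.coe_ne_coe, Function.ne_iff] at hx
    exact hx.imp (fun a ha ↦ Finset.mem_filter.2 ⟨Finset.mem_univ _, ha⟩)
  · intro j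
    have := x.2 j (Finset.mem_univ _)
    simpa [f, ZMod.pow_card_sub_one, Finset.sum_filter, smul_eval] using this

lemma sum_sdiff_zero {ι A : Type*} [DecidableEq ι] [AddCommGroup A] {w : ι → A} {S T : Finset ι}
    (hTS : T ⊆ S) (h : ∑ i ∈ T, w i = 0) (h2 : ∑ i ∈ S, w i = 0) : ∑ i ∈ S \ T, w i = 0 := by
  rw [← Finset.sum_sdiff hTS, h, add_zero] at h2
  exact h2

/-- generalized Davenport constant of a cyclic group of prime order -/
lemma zs_cyclic {ι : Type*} {p : ℕ} [Fact p.Prime] (w : ι → ZMod p) (n : ℕ) :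
    ∀ S : Finset ι, p * n + 1 ≤ S.card → ∑ i ∈ S, w i = 0 → Zs w (n + 1) S := by
  classical
  induction n with
  | zero =>
    intro S hS h
    exact Zs.one (Finset.card_pos.1 (by omega)) h
  | succ n ih =>
    intro S hS h
    have hp := (Fact.out : p.Prime)
    have hpos := hp.pos
    rw [Nat.mul_succ] at hS
    obtain ⟨S', hS', hc⟩ := Finset.exists_subset_card_eq (s := S) (n := p) (by omega)
    obtain ⟨T, hT, hne, hsum⟩ := exists_zero_sum S' (fun i (_ : Fin 1) => w i) (by omega)
    refine Zs.cons (hT.trans hS') hne (hsum 0) (ih _ ?_ (sum_sdiff_zero (hT.trans hS') (hsum 0) h))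
    rw [Finset.card_sdiff_of_subset (hT.trans hS')]
    have := Finset.card_le_card hT
    omega

/-- generalized Davenport constant of `C_p × C_p` -/
lemma zs_rank_two {ι : Type*} {p : ℕ} [Fact p.Prime] (w : ι → ZMod p × ZMod p) (n : ℕ) :
    ∀ S : Finset ι, p * n + p ≤ S.card → ∑ i ∈ S, w i = 0 → Zs w (n + 1) S := by
  classical
  have hp := (Fact.out : p.Prime)
  have hpos := hp.two_le
  have D2 : ∀ S : Finset ι, 2 * (p - 1) < S.card → ∃ T ⊆ S, T.Nonempty ∧ ∑ i ∈ T, w i = 0 := by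
    intro S hS
    obtain ⟨T, hT, hne, hsum⟩ := exists_zero_sum S (fun i => ![(w i).1, (w i).2]) hS
    refine ⟨T, hT, hne, Prod.ext ?_ ?_⟩
    · rw [Prod.fst_sum]; simpa using hsum 0
    · rw [Prod.snd_sum]; simpa using hsum 1
  have D2' : ∀ S : Finset ι, 2 * p ≤ S.card → ∑ i ∈ S, w i = 0 →
      ∃ T ⊆ S, T.Nonempty ∧ (S \ T).Nonempty ∧ ∑ i ∈ T, w i = 0 := by
    intro S hS h
    obtain ⟨S', hS', hc⟩ := Finset.exists_subset_card_eq (s := S) (n := 2 * (p - 1) + 1) (by omega)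
    obtain ⟨T, hT, hne, hsum⟩ := D2 S' (by omega)
    refine ⟨T, hT.trans hS', hne, ?_, hsum⟩
    rw [← Finset.card_pos, Finset.card_sdiff_of_subset (hT.trans hS')]
    have := Finset.card_le_card hT
    omega
  have eta : ∀ S : Finset ι, 3 * (p - 1) < S.card →
      ∃ T ⊆ S, T.Nonempty ∧ T.card ≤ p ∧ ∑ i ∈ T, w i = 0 := by
    intro S hS
    obtain ⟨S', hS', hc⟩ := Finset.exists_subset_card_eq (s := S) (n := 3 * (p - 1) + 1) (by omega)
    obtain ⟨T, hT, hne, hsum⟩ := exists_zero_sum S' (fun i => ![(w i).1, (w i).2, 1]) (by omega)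
    have hTc := Finset.card_le_card hT
    have hT0 : ∑ i ∈ T, w i = 0 := by
      apply Prod.ext
      · rw [Prod.fst_sum]; simpa using hsum 0
      · rw [Prod.snd_sum]; simpa using hsum 1
    have h3 : (T.card : ZMod p) = 0 := by simpa using hsum 2
    rw [ZMod.natCast_eq_zero_iff] at h3
    obtain ⟨m, hm⟩ := h3
    have hTpos := Finset.card_pos.2 hne
    have hm3 : m < 3 := by
      by_contra hcon
      have : p * 3 ≤ p * m := Nat.mul_le_mul_left _ (by omega)
      omega
    by_cases hle : T.card ≤ p
    · exact ⟨T, hT.trans hS', hne, hle, hT0⟩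
    have hm2 : T.card = 2 * p := by
      interval_cases m <;> omega
    obtain ⟨U, hU, hUne, hUne', hU0⟩ := D2' T hm2.ge hT0
    have hcs := Finset.card_sdiff_of_subset hU
    by_cases hle : U.card ≤ p
    · exact ⟨U, (hU.trans hT).trans hS', hUne, hle, hU0⟩
    · exact ⟨T \ U, (Finset.sdiff_subset.trans hT).trans hS', hUne', by omega,
        sum_sdiff_zero hU hU0 hT0⟩
  induction n with
  | zero =>
    intro S hS h
    exact Zs.one (Finset.card_pos.1 (by omega)) h
  | succ n ih =>
    intro S hS h
    rw [Nat.mul_succ] at hS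
    rcases Nat.eq_zero_or_pos n with rfl | hn
    · obtain ⟨U, hU, hUne, hUne', hU0⟩ := D2' S (by omega) h
      exact Zs.cons hU hUne hU0 (Zs.one hUne' (sum_sdiff_zero hU hU0 h))
    · have : p * 1 ≤ p * n := Nat.mul_le_mul_left _ hn
      obtain ⟨T, hT, hne, hle, hT0⟩ := eta S (by omega)
      refine Zs.cons hT hne hT0 (ih _ ?_ (sum_sdiff_zero hT hT0 h))
      rw [Finset.card_sdiff_of_subset hT]
      omega

/-- `C_2 × C_2 × C_q` -/
lemma zs_c22q {ι : Type*} {q : ℕ} [Fact q.Prime] (s : ι → ZMod 2 × ZMod 2) (t : ι → ZMod q)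
    (n : ℕ) (S : Finset ι) (hS : 2 * (q * n) + 2 ≤ S.card) (hs : ∑ i ∈ S, s i = 0)
    (ht : ∑ i ∈ S, t i = 0) : Zs (fun i => (s i, t i)) (n + 1) S := by
  classical
  obtain ⟨c, hc⟩ := zs_rank_two s (q * n) S hS hs
  refine Zs.comp c hc (zs_cyclic _ n _ (by simp) ?_)
  rw [Finset.sum_fiberwise]; exact ht

end NB


namespace NB

lemma zs_short {ι : Type*} {q : ℕ} [Fact q.Prime] (w : ι → ZMod q) (n : ℕ) (hn : 1 ≤ n)
    (S T : Finset ι) (hS : S.card = q * n) (h : ∑ i ∈ S, w i = 0) (hTS : T ⊆ S) (hT : T.Nonempty)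
    (hT0 : ∑ i ∈ T, w i = 0) (hTq : T.card < q) : Zs w (n + 1) S := by
  classical
  obtain ⟨m, rfl⟩ : ∃ m, n = m + 1 := ⟨n - 1, by omega⟩
  refine Zs.cons hTS hT hT0 (zs_cyclic w m _ ?_ (sum_sdiff_zero hTS hT0 h))
  rw [Finset.card_sdiff_of_subset hTS, hS, Nat.mul_succ]
  omega

open scoped Pointwise in
lemma sums_card {ι : Type*} [DecidableEq ι] {q : ℕ} [Fact q.Prime] (w : ι → ZMod q) (i j : ι)
    (hne : i ≠ j) (hij : w i ≠ w j) (h0 : w i + w j ≠ 0) (hi : w i ≠ 0) (hj : w j ≠ 0)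
    (T : Finset ι) : i ∉ T → j ∉ T → (∀ k ∈ T, w k ≠ 0) →
    ∃ A : Finset (ZMod q), min q (T.card + 4) ≤ A.card ∧
      ∀ a ∈ A, ∃ U ⊆ insert i (insert j T), ∑ k ∈ U, w k = a := by
  induction T using Finset.induction_on with
  | empty =>
    intro _ _ _
    refine ⟨{0, w i, w j, w i + w j}, ?_, ?_⟩
    · rw [Finset.card_insert_of_notMem, Finset.card_insert_of_notMem, Finset.card_insert_of_notMem]
      · simp
      · simpa using hi
      · simp [hij, hj]
      · simp [hi.symm, hj.symm, h0.symm]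
    · intro a ha
      simp only [Finset.mem_insert, Finset.mem_singleton] at ha
      rcases ha with rfl | rfl | rfl | rfl
      · exact ⟨∅, by simp, by simp⟩
      · exact ⟨{i}, by simp, by simp⟩
      · exact ⟨{j}, by simp, by simp⟩
      · exact ⟨{i, j}, by simp, by rw [Finset.sum_pair hne]⟩
  | insert k T hk ih =>
    intro hiT hjT hw
    simp only [Finset.mem_insert, not_or] at hiT hjT
    obtain ⟨A, hA, hA2⟩ := ih hiT.2 hjT.2 (fun k hk => hw k (Finset.mem_insert_of_mem hk))
    have hwk : w k ≠ 0 := hw k (Finset.mem_insert_self _ _)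
    have hAne : A.Nonempty := by
      rw [← Finset.card_pos]
      have := (Fact.out : q.Prime).pos
      omega
    have hcd := ZMod.cauchy_davenport (Fact.out : q.Prime) (s := A) (t := ({0, w k} : Finset (ZMod q))) hAne (by simp)
    refine ⟨A + ({0, w k} : Finset (ZMod q)), ?_, ?_⟩
    · rw [Finset.card_insert_of_notMem (by simpa using hwk.symm), Finset.card_singleton] at hcd
      rw [Finset.card_insert_of_notMem hk]
      omega
    · intro a ha
      obtain ⟨b, hb, c, hc, rfl⟩ := Finset.mem_add.1 ha
      obtain ⟨U, hU, rfl⟩ := hA2 b hb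
      have hsub : insert i (insert j T) ⊆ insert i (insert j (insert k T)) := by
        intro z; simp only [Finset.mem_insert]; tauto
      simp only [Finset.mem_insert, Finset.mem_singleton] at hc
      rcases hc with rfl | rfl
      · exact ⟨U, hU.trans hsub, by simp⟩
      · refine ⟨insert k U, ?_, ?_⟩
        · apply Finset.insert_subset _ (hU.trans hsub)
          simp
        · rw [Finset.sum_insert, add_comm]
          intro hkU
          have := hU hkU
          simp only [Finset.mem_insert] at this
          rcases this with h | h | h
          · exact hiT.1 h.symm
          · exact hjT.1 h.symm
          · exact hk h

lemma z3_key : ∀ a b : ZMod 3, a ≠ 0 → b ≠ 0 → a ≠ b → a + b = 0 := by decide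

lemma cyc_const {ι : Type*} {q : ℕ} [Fact q.Prime] (w : ι → ZMod q) (n : ℕ) (hn : 1 ≤ n)
    (hq : 3 ≤ q) (S : Finset ι) (hS : S.card = q * n) (h : ∑ i ∈ S, w i = 0)
    (hZ : ¬ Zs w (n + 1) S) : (∀ i ∈ S, w i ≠ 0) ∧ ∀ i ∈ S, ∀ j ∈ S, w i = w j := by
  classical
  have short : ∀ T ⊆ S, T.Nonempty → T.card < q → ∑ i ∈ T, w i ≠ 0 := fun T h1 h2 h3 h4 =>
    hZ (zs_short w n hn S T hS h h1 h2 h4 h3)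
  have hnz : ∀ i ∈ S, w i ≠ 0 := by
    intro i hi
    simpa using short {i} (by simpa using hi) (by simp) (by simp; omega)
  refine ⟨hnz, ?_⟩
  intro i hi j hj
  by_contra hij
  have hne : i ≠ j := by rintro rfl; exact hij rfl
  have h0 : w i + w j ≠ 0 := by
    have := short {i, j} (by intro k; simp only [Finset.mem_insert, Finset.mem_singleton]; rintro (rfl | rfl) <;> assumption)
      (by simp) (by rw [Finset.card_pair hne]; omega)
    rwa [Finset.sum_pair hne] at this
  have hq5 : 5 ≤ q := by
    by_contra hlt
    have h34 : q = 3 ∨ q = 4 := by omega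
    rcases h34 with rfl | rfl
    · exact h0 (z3_key _ _ (hnz i hi) (hnz j hj) hij)
    · exact absurd (Fact.out : Nat.Prime 4) (by decide)
  have hSq : q ≤ S.card := by rw [hS]; exact Nat.le_mul_of_pos_right _ hn
  have hsub2 : ({i, j} : Finset ι) ⊆ S := by
    intro k; simp only [Finset.mem_insert, Finset.mem_singleton]; rintro (rfl | rfl) <;> assumption
  have hc2 : (S \ {i, j}).card = S.card - 2 := by
    rw [Finset.card_sdiff_of_subset hsub2, Finset.card_pair hne]
  obtain ⟨T', hT', hTc'⟩ := Finset.exists_subset_card_eq (s := S \ {i, j}) (n := q - 3) (by omega)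
  obtain ⟨k, hk⟩ : T'.Nonempty := by rw [← Finset.card_pos]; omega
  have hkS := hT' hk
  simp only [Finset.mem_sdiff, Finset.mem_insert, Finset.mem_singleton, not_or] at hkS
  have hTS : ∀ z ∈ T', z ∈ S ∧ ¬ z = i ∧ ¬ z = j := by
    intro z hz
    have := hT' hz
    simpa only [Finset.mem_sdiff, Finset.mem_insert, Finset.mem_singleton, not_or] using this
  have hTc : (T'.erase k).card = q - 4 := by rw [Finset.card_erase_of_mem hk]; omega
  obtain ⟨A, hA, hA2⟩ := sums_card w i j hne hij h0 (hnz i hi) (hnz j hj) (T'.erase k)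
    (fun hh => (hTS i (Finset.mem_of_mem_erase hh)).2.1 rfl)
    (fun hh => (hTS j (Finset.mem_of_mem_erase hh)).2.2 rfl)
    (fun z hz => hnz z (hTS z (Finset.mem_of_mem_erase hz)).1)
  have hAu : A = Finset.univ := by
    apply Finset.eq_univ_of_card
    rw [ZMod.card]
    apply le_antisymm
    · have := Finset.card_le_univ A
      rwa [ZMod.card] at this
    · omega
  obtain ⟨U, hU, hUs⟩ := hA2 (- w k) (by rw [hAu]; simp)
  have hkU : k ∉ U := by
    intro hkU
    have := hU hkU
    simp [hkS.2.1, hkS.2.2] at this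
  have hUc : U.card ≤ q - 2 := by
    refine (Finset.card_le_card hU).trans ?_
    refine (Finset.card_insert_le _ _).trans ?_
    have := Finset.card_insert_le j (T'.erase k)
    omega
  apply short (insert k U)
  · intro z hz
    rcases Finset.mem_insert.1 hz with rfl | hz
    · exact hkS.1
    · have := hU hz
      simp only [Finset.mem_insert, Finset.mem_erase] at this
      rcases this with rfl | rfl | ⟨_, h⟩
      · exact hi
      · exact hj
      · exact (hTS z h).1
  · simp
  · rw [Finset.card_insert_of_notMem hkU]; omega
  · rw [Finset.sum_insert hkU, hUs]; simp

/-- data of a sequence over `C_2 × C_2 × C_q` of length `2qn+1` that cannot be split -/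
structure Bad {ι : Type*} (q n : ℕ) (s : ι → ZMod 2 × ZMod 2) (t : ι → ZMod q)
    (S : Finset ι) : Prop where
  hq : 3 ≤ q
  hn : 1 ≤ n
  card : S.card = 2 * (q * n) + 1
  s0 : ∑ i ∈ S, s i = 0
  t0 : ∑ i ∈ S, t i = 0
  nz : ¬ Zs (fun i => (s i, t i)) (n + 1) S

lemma Bad.s_ne {ι : Type*} {q n : ℕ} [Fact q.Prime] {s : ι → ZMod 2 × ZMod 2} {t : ι → ZMod q}
    {S : Finset ι} (B : Bad q n s t S) : ∀ i ∈ S, s i ≠ 0 := by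
  classical
  intro i hi h0
  have hqn : 1 ≤ q * n := Nat.mul_pos (by have := B.hq; omega) B.hn
  have hsub : ({i} : Finset ι) ⊆ S := by simpa using hi
  have hs0 : ∑ i ∈ ({i} : Finset ι), s i = 0 := by simpa using h0
  have h1 := zs_rank_two s (q * n - 1) (S \ {i}) (by
    rw [Finset.card_sdiff_of_subset hsub, B.card, Finset.card_singleton]; omega)
    (sum_sdiff_zero hsub hs0 B.s0)
  obtain ⟨c, hc⟩ := Zs.cons hsub (by simp) hs0 h1
  refine B.nz (Zs.comp c hc (zs_cyclic _ n _ (by simp; omega) ?_))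
  rw [Finset.sum_fiberwise]; exact B.t0

lemma cons_color {ι : Type*} [DecidableEq ι] {S T : Finset ι} {n : ℕ} (hTS : T ⊆ S)
    (c : ι → Fin n) : ∃ c' : ι → Fin (n + 1), S.filter (fun i => c' i = 0) = T ∧
      ∀ k : Fin n, S.filter (fun i => c' i = k.succ) = (S \ T).filter (fun i => c i = k) := by
  refine ⟨fun i => if i ∈ T then 0 else (c i).succ, ?_, fun k => ?_⟩
  · ext i
    simp only [Finset.mem_filter]
    constructor
    · rintro ⟨_, h2⟩
      by_contra hi
      simp [hi] at h2
    · intro hi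
      simp [hi, hTS hi]
  · ext i
    simp only [Finset.mem_filter, Finset.mem_sdiff]
    by_cases hi : i ∈ T
    · simp [hi, (Fin.succ_ne_zero k).symm]
    · simp [hi]

lemma Bad.two {ι : Type*} {q n : ℕ} [Fact q.Prime] {s : ι → ZMod 2 × ZMod 2} {t : ι → ZMod q}
    {S : Finset ι} (B : Bad q n s t S) (T1 T2 : Finset ι) (h1 : T1 ⊆ S) (h2 : T2 ⊆ S)
    (hd : Disjoint T1 T2) (hn1 : T1.Nonempty) (hn2 : T2.Nonempty) (hs1 : ∑ i ∈ T1, s i = 0)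
    (hs2 : ∑ i ∈ T2, s i = 0) (hcard : T1.card + T2.card ≤ 5) :
    ∑ i ∈ T1, t i = ∑ i ∈ T2, t i ∧ ∑ i ∈ T1, t i ≠ 0 := by
  classical
  have hqn : 3 ≤ q * n := by
    have := B.hq; have := B.hn; nlinarith
  have h2' : T2 ⊆ S \ T1 := by
    intro i hi
    exact Finset.mem_sdiff.2 ⟨h2 hi, fun h => (Finset.disjoint_left.1 hd h hi)⟩
  have hr : Zs s (q * n - 3 + 1) ((S \ T1) \ T2) := by
    apply zs_rank_two
    · rw [Finset.card_sdiff_of_subset h2', Finset.card_sdiff_of_subset h1, B.card]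
      omega
    · exact sum_sdiff_zero h2' hs2 (sum_sdiff_zero h1 hs1 B.s0)
  obtain ⟨c, hc⟩ := hr
  obtain ⟨c1, h10, h11⟩ := cons_color (S := S \ T1) h2' c
  obtain ⟨c2, h20, h21⟩ := cons_color h1 c1
  have hc2 : ∀ k, (S.filter (fun i => c2 i = k)).Nonempty ∧
      ∑ i ∈ S.filter (fun i => c2 i = k), s i = 0 := by
    intro k
    refine Fin.cases ?_ (fun k => ?_) k
    · rw [h20]; exact ⟨hn1, hs1⟩
    · rw [h21]
      refine Fin.cases ?_ (fun k => ?_) k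
      · rw [h10]; exact ⟨hn2, hs2⟩
      · rw [h11]; exact hc k
  obtain ⟨hz, he⟩ := cyc_const (fun k => ∑ i ∈ S.filter (fun i => c2 i = k), t i) n B.hn B.hq
    Finset.univ (by simp; omega) (by rw [Finset.sum_fiberwise]; exact B.t0)
    (fun hZ => B.nz (Zs.comp c2 hc2 hZ))
  have e := he 0 (Finset.mem_univ _) (Fin.succ 0) (Finset.mem_univ _)
  have z := hz 0 (Finset.mem_univ _)
  simp only [h20, h21, h10] at e z
  exact ⟨e, z⟩

end NB


namespace NB

lemma z2_ind : ∀ a x : ZMod 2 × ZMod 2, a ≠ 0 → x ≠ 0 →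
    (if x = a then (1 : ZMod 2) else 0) = 1 + a.1 * x.2 + a.2 * x.1 := by decide

lemma z2_third : ∀ a : ZMod 2 × ZMod 2, a ≠ 0 → ∃ b c, b ≠ 0 ∧ c ≠ 0 ∧ b ≠ a ∧ c ≠ a ∧ b ≠ c ∧
    b + c = a ∧ ∀ x, x = 0 ∨ x = a ∨ x = b ∨ x = c := by decide

lemma z2_add_self : ∀ a : ZMod 2 × ZMod 2, a + a = 0 := by decide

lemma two_ne {q : ℕ} [Fact q.Prime] (hq : 3 ≤ q) : (2 : ZMod q) ≠ 0 := by
  intro h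
  have : ((2 : ℕ) : ZMod q) = 0 := by exact_mod_cast h
  rw [ZMod.natCast_eq_zero_iff] at this
  have := Nat.le_of_dvd (by norm_num) this
  omega

lemma Bad.odd {ι : Type*} [Fintype ι] {q n : ℕ} [Fact q.Prime] {s : ι → ZMod 2 × ZMod 2}
    {t : ι → ZMod q} (B : Bad q n s t Finset.univ) (a : ZMod 2 × ZMod 2) (ha : a ≠ 0) :
    Odd (Finset.univ.filter (fun i => s i = a)).card := by
  have h : (((Finset.univ.filter (fun i => s i = a)).card : ℕ) : ZMod 2) = 1 := by
    rw [Finset.card_filter]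
    push_cast
    rw [Finset.sum_congr rfl (fun i _ => z2_ind a (s i) ha (B.s_ne i (Finset.mem_univ _)))]
    rw [Finset.sum_add_distrib, Finset.sum_add_distrib, ← Finset.mul_sum, ← Finset.mul_sum,
      ← Prod.snd_sum, ← Prod.fst_sum, B.s0]
    simp only [Finset.sum_const, B.card, nsmul_eq_mul, mul_one]
    push_cast
    have h2 : (2 : ZMod 2) = 0 := by decide
    rw [h2]; simp
  exact (ZMod.natCast_eq_one_iff_odd).1 h

lemma Bad.exists {ι : Type*} [Fintype ι] {q n : ℕ} [Fact q.Prime] {s : ι → ZMod 2 × ZMod 2}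
    {t : ι → ZMod q} (B : Bad q n s t Finset.univ) (a : ZMod 2 × ZMod 2) (ha : a ≠ 0) :
    ∃ i, s i = a := by
  obtain ⟨i, hi⟩ := Finset.card_pos.1 (B.odd a ha).pos
  exact ⟨i, (Finset.mem_filter.1 hi).2⟩

lemma Bad.five {ι : Type*} [Fintype ι] {q n : ℕ} [Fact q.Prime] {s : ι → ZMod 2 × ZMod 2}
    {t : ι → ZMod q} (B : Bad q n s t Finset.univ) {i j k b c : ι} (hij : i ≠ j) (hik : i ≠ k)
    (hjk : j ≠ k) (h1 : s i = s j) (h2 : s i = s k) (hb : s b ≠ s i) (hc : s c ≠ s i)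
    (hbc : s b + s c = s i) : t i + t j = t k + (t b + t c) ∧ t i + t j ≠ 0 := by
  classical
  have hbc' : b ≠ c := by
    rintro rfl
    rw [z2_add_self] at hbc
    exact B.s_ne i (Finset.mem_univ _) hbc.symm
  have hkb : k ≠ b := by rintro rfl; exact hb h2.symm
  have hkc : k ≠ c := by rintro rfl; exact hc h2.symm
  have hib : i ≠ b := by rintro rfl; exact hb rfl
  have hic : i ≠ c := by rintro rfl; exact hc rfl
  have hjb : j ≠ b := by rintro rfl; exact hb h1.symm
  have hjc : j ≠ c := by rintro rfl; exact hc h1.symm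
  have sum3 : ∀ {M : Type} [AddCommMonoid M] (f : ι → M),
      ∑ x ∈ ({k, b, c} : Finset ι), f x = f k + (f b + f c) := by
    intro M _ f
    rw [Finset.sum_insert (by simp [hkb, hkc]), Finset.sum_pair hbc']
  have := B.two {i, j} {k, b, c} (by simp) (by simp) (by
      simp [hik.symm, hjk.symm, hib.symm, hic.symm, hjb.symm, hjc.symm]) (by simp) (by simp)
    (by rw [Finset.sum_pair hij, h1, z2_add_self])
    (by rw [sum3, hbc, h2, z2_add_self])
    (by rw [Finset.card_pair hij, Finset.card_insert_of_notMem (by simp [hkb, hkc]),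
          Finset.card_pair hbc'])
  rwa [Finset.sum_pair hij, sum3] at this

lemma exists_other {ι : Type*} [DecidableEq ι] (S : Finset ι) (h : 3 ≤ S.card) (i j : ι) :
    ∃ k ∈ S, k ≠ i ∧ k ≠ j := by
  have : (S \ {i, j}).Nonempty := by
    rw [← Finset.card_pos]
    have := Finset.le_card_sdiff {i, j} S
    have := Finset.card_le_two (a := i) (b := j)
    omega
  obtain ⟨k, hk⟩ := this
  simp only [Finset.mem_sdiff, Finset.mem_insert, Finset.mem_singleton, not_or] at hk
  exact ⟨k, hk.1, hk.2⟩

/-- in a class with at least three elements, `t` is constant and nonzero -/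
lemma Bad.const {ι : Type*} [Fintype ι] {q n : ℕ} [Fact q.Prime] {s : ι → ZMod 2 × ZMod 2}
    {t : ι → ZMod q} (B : Bad q n s t Finset.univ) {a : ZMod 2 × ZMod 2}
    (h3 : 3 ≤ (Finset.univ.filter (fun i => s i = a)).card) {j : ι} (hj : s j = a) :
    t j ≠ 0 ∧ (∀ k, s k = a → t j = t k) ∧
      ∀ b c, s b ≠ a → s c ≠ a → s b + s c = a → t j = t b + t c := by
  classical
  have h2 := two_ne (q := q) B.hq
  have ha : a ≠ 0 := by rw [← hj]; exact B.s_ne j (Finset.mem_univ _)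
  obtain ⟨β, γ, hb0, hc0, hba, hca, -, hbc, -⟩ := z2_third a ha
  have eq : ∀ k, s k = a → t j = t k := by
    intro k hk
    by_cases hjk : j = k
    · rw [hjk]
    obtain ⟨b, hb⟩ := B.exists β hb0
    obtain ⟨c, hc⟩ := B.exists γ hc0
    obtain ⟨i, hi, hij, hik⟩ := exists_other _ h3 j k
    have hi := (Finset.mem_filter.1 hi).2
    have e1 := (B.five (b := b) (c := c) hij hik hjk (by rw [hi, hj]) (by rw [hi, hk]) (by rw [hb, hi]; exact hba)
      (by rw [hc, hi]; exact hca) (by rw [hb, hc, hi, hbc])).1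
    have e2 := (B.five (b := b) (c := c) hik hij (Ne.symm hjk) (by rw [hi, hk]) (by rw [hi, hj]) (by rw [hb, hi]; exact hba)
      (by rw [hc, hi]; exact hca) (by rw [hb, hc, hi, hbc])).1
    have : 2 * (t j - t k) = 0 := by linear_combination e1 - e2
    rcases mul_eq_zero.1 this with h | h
    · exact absurd h h2
    · exact sub_eq_zero.1 h
  obtain ⟨k, hk, hkj, -⟩ := exists_other _ h3 j j
  obtain ⟨l, hl, hlj, hlk⟩ := exists_other _ h3 j k
  have hk := (Finset.mem_filter.1 hk).2
  have hl := (Finset.mem_filter.1 hl).2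
  have key : ∀ b c, s b ≠ a → s c ≠ a → s b + s c = a → t j = t b + t c ∧ t j + t k ≠ 0 := by
    intro b c hb hc hbc
    have := B.five (b := b) (c := c) hkj.symm hlj.symm hlk.symm (by rw [hj, hk]) (by rw [hj, hl]) (by rwa [hj])
      (by rwa [hj]) (by rw [hbc, hj])
    refine ⟨?_, this.2⟩
    have e := this.1
    rw [← eq k hk, ← eq l hl] at e
    linear_combination e
  refine ⟨?_, eq, fun b c hb hc hbc => (key b c hb hc hbc).1⟩
  obtain ⟨b, hb⟩ := B.exists β hb0
  obtain ⟨c, hc⟩ := B.exists γ hc0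
  have := (key b c (by rwa [hb]) (by rwa [hc]) (by rw [hb, hc, hbc])).2
  rw [← eq k hk] at this
  intro h0
  rw [h0] at this
  simp at this

lemma odd_dich {m : ℕ} (h : Odd m) : m = 1 ∨ 3 ≤ m := by
  obtain ⟨k, hk⟩ := h; omega

/-- some class other than `c` (whose class is a singleton) is big -/
lemma Bad.exists_big {ι : Type*} [Fintype ι] {q n : ℕ} [Fact q.Prime] {s : ι → ZMod 2 × ZMod 2}
    {t : ι → ZMod q} (B : Bad q n s t Finset.univ) :
    ∃ a, a ≠ 0 ∧ 3 ≤ (Finset.univ.filter (fun i => s i = a)).card := by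
  classical
  by_contra hcon
  push Not at hcon
  have hN := B.card
  have h7 : 3 ≤ q * n := by have := B.hq; have := B.hn; nlinarith
  have hle : ∀ a, (Finset.univ.filter (fun i => s i = a)).card ≤ 1 := by
    intro a
    by_cases ha : a = 0
    · have : (Finset.univ.filter (fun i => s i = a)) = ∅ := by
        apply Finset.filter_eq_empty_iff.2
        intro i hi; rw [ha]; exact B.s_ne i hi
      rw [this]; simp
    · rcases odd_dich (B.odd a ha) with h | h
      · exact h.le
      · exact absurd h (not_le.2 (hcon a ha))
  have := Finset.card_eq_sum_card_fiberwise (f := s) (s := Finset.univ) (t := Finset.univ) (by simp)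
  have h4 := Finset.sum_le_sum (s := Finset.univ) (fun a _ => hle a)
  rw [← this, hN] at h4
  simp at h4
  omega

lemma Bad.ts {ι : Type*} [Fintype ι] {q n : ℕ} [Fact q.Prime] {s : ι → ZMod 2 × ZMod 2}
    {t : ι → ZMod q} (B : Bad q n s t Finset.univ) :
    ∃ t0, t0 ≠ 0 ∧ (Finset.univ.filter (fun k => t k ≠ t0)).card ≤ 2 := by
  classical
  have h2 := two_ne (q := q) B.hq
  obtain ⟨a, ha, ha3⟩ := B.exists_big
  obtain ⟨β, γ, hb0, hc0, hba, hca, hbc', hbc, hall⟩ := z2_third a ha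
  have hba' : β ≠ a := hba
  -- if β class is big then everything in it has the same t
  have big : ∀ β γ, β ≠ 0 → γ ≠ 0 → β ≠ a → γ ≠ a → β ≠ γ → β + γ = a →
      (∀ x, x = 0 ∨ x = a ∨ x = β ∨ x = γ) →
      3 ≤ (Finset.univ.filter (fun i => s i = β)).card →
      ∃ t0, t0 ≠ 0 ∧ (Finset.univ.filter (fun k => t k ≠ t0)).card ≤ 2 := by
    intro β γ hb0 hc0 hba hca hbc' hbc hall hb3
    obtain ⟨i, hi⟩ := B.exists a ha
    obtain ⟨b, hb⟩ := B.exists β hb0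
    obtain ⟨c, hc⟩ := B.exists γ hc0
    have hA := B.const ha3 hi
    have hB := B.const hb3 hb
    have hac : a + γ = β := by rw [← hbc, add_assoc, z2_add_self, add_zero]
    have key : ∀ c, s c = γ → t c = 0 ∧ t i = t b := by
      intro c hc
      have e1 := hA.2.2 b c (by rwa [hb]) (by rwa [hc]) (by rw [hb, hc, hbc])
      have e2 := hB.2.2 i c (by rw [hi]; exact hba.symm) (by rw [hc]; exact hbc'.symm)
        (by rw [hi, hc, hac])
      have : 2 * t c = 0 := by linear_combination -e1 - e2
      rcases mul_eq_zero.1 this with h | h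
      · exact absurd h h2
      · exact ⟨h, by rw [e1, h, add_zero]⟩
    have hc1 : (Finset.univ.filter (fun i => s i = γ)).card = 1 := by
      rcases odd_dich (B.odd γ hc0) with h | h
      · exact h
      · exact absurd (key c hc).1 (B.const h hc).1
    refine ⟨t i, hA.1, (Finset.card_le_card ?_).trans (hc1.le.trans (by norm_num))⟩
    intro k hk
    simp only [Finset.mem_filter, Finset.mem_univ, true_and] at hk ⊢
    rcases hall (s k) with h | h | h | h
    · exact absurd h (B.s_ne k (Finset.mem_univ _))
    · exact absurd (hA.2.1 k h).symm hk
    · rw [(key c hc).2] at hk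
      exact absurd (hB.2.1 k h).symm hk
    · exact h
  rcases odd_dich (B.odd β hb0) with h1 | h1
  · rcases odd_dich (B.odd γ hc0) with h3 | h3
    · obtain ⟨i, hi⟩ := B.exists a ha
      have hA := B.const ha3 hi
      refine ⟨t i, hA.1, (Finset.card_le_card (t := (Finset.univ.filter (fun i => s i = β)) ∪
        (Finset.univ.filter (fun i => s i = γ))) ?_).trans ((Finset.card_union_le _ _).trans ?_)⟩
      · intro k hk
        simp only [Finset.mem_filter, Finset.mem_univ, true_and, Finset.mem_union] at hk ⊢
        rcases hall (s k) with h | h | h | h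
        · exact absurd h (B.s_ne k (Finset.mem_univ _))
        · exact absurd (hA.2.1 k h).symm hk
        · exact Or.inl h
        · exact Or.inr h
      · omega
    · exact big γ β hc0 hb0 hca hba hbc'.symm (by rw [add_comm, hbc]) (by
        intro x; rcases hall x with h | h | h | h <;> tauto) h3
  · exact big β γ hb0 hc0 hba hca hbc' hbc hall h1

end NB


namespace NB

/-- block sums after a permutation of the slots -/
def pt {ι : Type*} {q : ℕ} (ψ : ι × Fin 2 → ZMod q) (σ : Equiv.Perm (ι × Fin 2)) (k : ι) :
    ZMod q := ψ (σ (k, 0)) + ψ (σ (k, 1))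

lemma pt_swap_other {ι : Type*} [DecidableEq ι] {q : ℕ} (ψ : ι × Fin 2 → ZMod q) (k1 k2 : ι)
    (i j : Fin 2) (k : ι) (h1 : k ≠ k1) (h2 : k ≠ k2) :
    pt ψ (Equiv.swap (k1, i) (k2, j)) k = pt ψ 1 k := by
  simp [pt, Equiv.swap_apply_def, h1, h2]

lemma pt_swap_left {ι : Type*} [DecidableEq ι] {q : ℕ} (ψ : ι × Fin 2 → ZMod q) (k1 k2 : ι)
    (i j : Fin 2) (h : k1 ≠ k2) :
    pt ψ (Equiv.swap (k1, i) (k2, j)) k1 = pt ψ 1 k1 - ψ (k1, i) + ψ (k2, j) := by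
  fin_cases i <;> simp [pt, Equiv.swap_apply_def, h] <;> ring

lemma pt_swap_right {ι : Type*} [DecidableEq ι] {q : ℕ} (ψ : ι × Fin 2 → ZMod q) (k1 k2 : ι)
    (i j : Fin 2) (h : k1 ≠ k2) :
    pt ψ (Equiv.swap (k1, i) (k2, j)) k2 = pt ψ 1 k2 - ψ (k2, j) + ψ (k1, i) := by
  rw [Equiv.swap_comm, pt_swap_left _ _ _ _ _ h.symm]

lemma mstep {ι : Type*} [Fintype ι] [DecidableEq ι] {q : ℕ} [Fact q.Prime] (hq : 3 ≤ q)
    (hc : 7 ≤ Fintype.card ι) (hc1 : ((Fintype.card ι : ℕ) : ZMod q) = 1)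
    (ψ : ι × Fin 2 → ZMod q) (h0 : ∑ x, ψ x = 0)
    (hts : ∀ σ, ∃ t0, t0 ≠ 0 ∧ (Finset.univ.filter (fun k => pt ψ σ k ≠ t0)).card ≤ 2) :
    ∃ h, h ≠ 0 ∧ (Finset.univ.filter (fun x => ψ x ≠ h)).card ≤ 2 := by
  have h2 := two_ne (q := q) hq
  obtain ⟨t0, ht0, hD⟩ := hts 1
  have hsw : ∀ k1 k2 i j, (Finset.univ.filter
      (fun k => pt ψ (Equiv.swap (k1, i) (k2, j)) k ≠ t0)).card ≤ 2 := by
    intro k1 k2 i j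
    obtain ⟨t1, -, hD1⟩ := hts (Equiv.swap (k1, i) (k2, j))
    have : ∃ k, k ∉ (Finset.univ.filter (fun k => pt ψ 1 k ≠ t0)) ∪ ((Finset.univ.filter
      (fun k => pt ψ (Equiv.swap (k1, i) (k2, j)) k ≠ t1)) ∪ {k1, k2}) := by
      by_contra hcon
      push Not at hcon
      have h1 := Finset.card_le_card (Finset.subset_iff.2 (fun x (_ : x ∈ Finset.univ) => hcon x))
      have h3 := Finset.card_union_le (Finset.univ.filter (fun k => pt ψ 1 k ≠ t0)) ((Finset.univ.filter
      (fun k => pt ψ (Equiv.swap (k1, i) (k2, j)) k ≠ t1)) ∪ {k1, k2})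
      have h4 := Finset.card_union_le (Finset.univ.filter
      (fun k => pt ψ (Equiv.swap (k1, i) (k2, j)) k ≠ t1)) {k1, k2}
      have h5 := Finset.card_le_two (a := k1) (b := k2)
      rw [Finset.card_univ] at h1
      omega
    obtain ⟨k, hk⟩ := this
    simp only [Finset.mem_union, Finset.mem_filter, Finset.mem_univ, true_and, not_or,
      Finset.mem_insert, Finset.mem_singleton, not_not] at hk
    have := pt_swap_other ψ k1 k2 i j k hk.2.2.1 hk.2.2.2
    rw [hk.1, hk.2.1] at this
    rwa [← this]
  have h0' : ∑ k, pt ψ 1 k = 0 := by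
    rw [← h0, Fintype.sum_prod_type]
    exact Finset.sum_congr rfl fun k _ => by simp [pt]
  -- D is nonempty
  obtain ⟨d, hd⟩ : ∃ d, pt ψ 1 d ≠ t0 := by
    by_contra hcon
    push Not at hcon
    rw [Finset.sum_congr rfl (fun k _ => hcon k)] at h0'
    simp [hc1, ht0] at h0'
  have hnd : ∀ k1 k2, k1 ≠ k2 → pt ψ 1 k1 = t0 → pt ψ 1 k2 = t0 → ∀ i j, ψ (k1, i) = ψ (k2, j) := by
    intro k1 k2 h12 e1 e2 i j
    by_contra hne
    have hs := hsw k1 k2 i j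
    have hd1 : d ≠ k1 := by rintro rfl; exact hd e1
    have hd2 : d ≠ k2 := by rintro rfl; exact hd e2
    have hsub : ({d, k1, k2} : Finset ι) ⊆ (Finset.univ.filter
      (fun k => pt ψ (Equiv.swap (k1, i) (k2, j)) k ≠ t0)) := by
      intro k hk
      simp only [Finset.mem_insert, Finset.mem_singleton, Finset.mem_filter, Finset.mem_univ,
        true_and] at hk ⊢
      rcases hk with rfl | rfl | rfl
      · rwa [pt_swap_other ψ k1 k2 i j k hd1 hd2]
      · rw [pt_swap_left ψ k k2 i j h12, e1]
        intro h; apply hne; linear_combination -h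
      · rw [pt_swap_right ψ k1 k i j h12, e2]
        intro h; apply hne; linear_combination h
    have := Finset.card_le_card hsub
    rw [Finset.card_insert_of_notMem (by simp [hd1, hd2]), Finset.card_pair h12] at this
    omega
  -- two good blocks
  have hgc : 5 ≤ (Finset.univ.filter (fun k => pt ψ 1 k = t0)).card := by
    have := Finset.card_filter_add_card_filter_not (s := (Finset.univ : Finset ι)) (fun k => pt ψ 1 k = t0)
    rw [Finset.card_univ] at this
    have hD' : (Finset.univ.filter (fun k => ¬ pt ψ 1 k = t0)).card ≤ 2 := hD
    omega
  obtain ⟨g, hg⟩ : ∃ g, pt ψ 1 g = t0 := by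
    obtain ⟨g, hg⟩ := Finset.card_pos.1 (by omega : 0 < (Finset.univ.filter (fun k => pt ψ 1 k = t0)).card)
    exact ⟨g, (Finset.mem_filter.1 hg).2⟩
  have hgood : ∀ k, pt ψ 1 k = t0 → ∀ i, ψ (k, i) = ψ (g, 0) := by
    intro k hk i
    obtain ⟨l, hl, hlk, hlg⟩ := exists_other _ (by omega : 3 ≤ (Finset.univ.filter (fun k => pt ψ 1 k = t0)).card) k g
    have hl := (Finset.mem_filter.1 hl).2
    rw [hnd k l hlk.symm hk hl i 0, hnd l g hlg hl hg 0 0]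
  set h := ψ (g, 0) with hh
  have hth : t0 = h + h := by
    rw [← hg, pt]
    simp [hgood g hg]
  refine ⟨h, ?_, ?_⟩
  · intro e
    rw [e] at hth
    simp at hth
    exact ht0 hth
  · have hDpos : 0 < (Finset.univ.filter (fun k => pt ψ 1 k ≠ t0)).card :=
      Finset.card_pos.2 ⟨d, by simpa using hd⟩
    have hsub : (Finset.univ.filter (fun x => ψ x ≠ h)) ⊆
        (Finset.univ.filter (fun k => pt ψ 1 k ≠ t0)) ×ˢ (Finset.univ : Finset (Fin 2)) := by
      rintro ⟨k, i⟩ hk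
      simp only [Finset.mem_filter, Finset.mem_univ, true_and, Finset.mem_product, and_true] at hk ⊢
      intro e
      exact hk (hgood k e i)
    rcases (by omega : (Finset.univ.filter (fun k => pt ψ 1 k ≠ t0)).card = 1 ∨
      (Finset.univ.filter (fun k => pt ψ 1 k ≠ t0)).card = 2) with h1 | h1
    · have := Finset.card_le_card hsub
      rw [Finset.card_product, h1] at this
      simpa using this
    · -- every exceptional block has an entry h
      have hex : ∀ k, pt ψ 1 k ≠ t0 → ψ (k, 0) = h ∨ ψ (k, 1) = h := by
        intro k hk
        by_contra hcon
        push Not at hcon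
        obtain ⟨e, he, hek⟩ : ∃ e, pt ψ 1 e ≠ t0 ∧ e ≠ k := by
          obtain ⟨e, he, hne⟩ := Finset.exists_mem_ne (by omega : 1 < (Finset.univ.filter (fun k => pt ψ 1 k ≠ t0)).card) k
          exact ⟨e, (Finset.mem_filter.1 he).2, hne⟩
        have hkg : k ≠ g := by rintro rfl; exact hk hg
        have heg : e ≠ g := by rintro rfl; exact he hg
        have hsub : ({e, k, g} : Finset ι) ⊆ (Finset.univ.filter
          (fun x => pt ψ (Equiv.swap (k, 1) (g, 0)) x ≠ t0)) := by
          intro x hx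
          simp only [Finset.mem_insert, Finset.mem_singleton, Finset.mem_filter, Finset.mem_univ,
            true_and] at hx ⊢
          rcases hx with rfl | rfl | rfl
          · rwa [pt_swap_other ψ k g 1 0 x hek heg]
          · rw [pt_swap_left ψ x g 1 0 hkg, ← hh, hth]
            intro h'; apply hcon.1
            simp only [pt, Equiv.Perm.coe_one, id] at h'
            linear_combination h'
          · rw [pt_swap_right ψ k x 1 0 hkg, hg, ← hh, hth]
            intro h'; apply hcon.2; linear_combination h'
        have := Finset.card_le_card hsub
        rw [Finset.card_insert_of_notMem (by simp [hek, heg]), Finset.card_pair hkg] at this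
        have := hsw k g 1 0
        omega
      refine le_trans ?_ h1.le
      apply Finset.card_le_card_of_injOn Prod.fst
      · intro x hx
        exact (Finset.mem_product.1 (hsub hx)).1
      · rintro ⟨k, i⟩ hx ⟨k', j⟩ hy hxy
        simp only at hxy
        subst hxy
        have hk := (Finset.mem_filter.1 (Finset.mem_product.1 (hsub hx)).1).2
        simp only [Finset.coe_filter, Set.mem_setOf_eq, Finset.mem_univ, true_and] at hx hy
        rcases hex k hk with h | h <;> fin_cases i <;> fin_cases j <;> first | rfl | (exact absurd h hx) | (exact absurd h hy)

end NB


namespace NB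

section
variable {κ R : Type*} [CommRing R]

/-- the four bilinear pairings of two copies of the two-dimensional module -/
def PP (x y : κ → R) (s : ZMod 2 × ZMod 2) (u v : κ) : R :=
  if s = (1, 0) then x u * x v + y u * y v
  else if s = (1, 1) then x u * x v - y u * y v
  else if s = (0, 1) then x u * y v + y u * x v
  else x u * y v - y u * x v

lemma PP_10 (x y : κ → R) (u v : κ) : PP x y (1, 0) u v = x u * x v + y u * y v := by simp [PP]
lemma PP_11 (x y : κ → R) (u v : κ) : PP x y (1, 1) u v = x u * x v - y u * y v := by simp [PP]
lemma PP_01 (x y : κ → R) (u v : κ) : PP x y (0, 1) u v = x u * y v + y u * x v := by simp [PP]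
lemma PP_00 (x y : κ → R) (u v : κ) : PP x y (0, 0) u v = x u * y v - y u * x v := by simp [PP]

lemma z2_four : ∀ s : ZMod 2 × ZMod 2, s ≠ (1, 0) → s ≠ (1, 1) → s ≠ (0, 1) → s = 0 := by decide

set_option synthInstance.maxSize 2000 in
set_option synthInstance.maxHeartbeats 200000 in
lemma z2_ac : ∀ s' a c : ZMod 2 × ZMod 2, a ≠ 0 → c ≠ 0 → a ≠ c → s' ≠ 0 → s' + a + c ≠ 0 →
      s' = a ∨ s' = c := by decide

lemma PP_symm (x y : κ → R) (s : ZMod 2 × ZMod 2) (hs : s ≠ 0) (u v : κ) :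
    PP x y s u v = PP x y s v u := by
  simp only [PP]
  split_ifs with h1 h2 h3
  · ring
  · ring
  · ring
  · exact absurd (z2_four s h1 h2 h3) hs

lemma sum_z2 {M : Type*} [AddCommMonoid M] (f : ZMod 2 × ZMod 2 → M) :
    ∑ s, f s = f (0, 0) + f (0, 1) + f (1, 0) + f (1, 1) := by
  rw [Fintype.sum_prod_type]
  have : ∀ g : ZMod 2 → M, ∑ i, g i = g 0 + g 1 := fun g => Fin.sum_univ_two g
  rw [this, this, this]
  simp [add_assoc]

/-- an integer-valued function on the Klein group -/
def eps (a b c d : ℤ) (s : ZMod 2 × ZMod 2) : ℤ :=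
  if s = (0, 0) then a else if s = (0, 1) then b else if s = (1, 0) then c else d

lemma eps00 (a b c d : ℤ) : eps a b c d (0, 0) = a := by simp [eps]
lemma eps01 (a b c d : ℤ) : eps a b c d (0, 1) = b := by simp [eps]
lemma eps10 (a b c d : ℤ) : eps a b c d (1, 0) = c := by simp [eps]
lemma eps11 (a b c d : ℤ) : eps a b c d (1, 1) = d := by simp [eps]

set_option synthInstance.maxSize 2000 in
set_option synthInstance.maxHeartbeats 200000 in
lemma z2_cases : ∀ a c : ZMod 2 × ZMod 2, a ≠ 0 → c ≠ 0 → a ≠ c →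
    (a = (0, 1) ∧ c = (1, 0)) ∨ (a = (0, 1) ∧ c = (1, 1)) ∨ (a = (1, 0) ∧ c = (0, 1)) ∨
    (a = (1, 0) ∧ c = (1, 1)) ∨ (a = (1, 1) ∧ c = (0, 1)) ∨ (a = (1, 1) ∧ c = (1, 0)) := by
  decide

lemma z2_11 : (1 : ZMod 2) + 1 = 0 := by decide

lemma exchange (x y : κ → R) (a c : ZMod 2 × ZMod 2) (ha : a ≠ 0) (hc : c ≠ 0) (hac : a ≠ c) :
    ∃ ε : ZMod 2 × ZMod 2 → ℤ, ε a = 1 ∧ ∀ u v w z,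
      2 * (PP x y a u v * PP x y c w z) =
        ∑ s, (ε s : R) * (PP x y s u w * PP x y (s + a + c) v z) := by
  rcases z2_cases a c ha hc hac with ⟨rfl, rfl⟩ | ⟨rfl, rfl⟩ | ⟨rfl, rfl⟩ | ⟨rfl, rfl⟩ |
    ⟨rfl, rfl⟩ | ⟨rfl, rfl⟩
  · refine ⟨eps (-1) 1 1 (-1), by simp [eps], fun u v w z => ?_⟩
    rw [sum_z2]
    simp only [Prod.mk_add_mk, z2_11, zero_add, add_zero, PP_00, PP_01, PP_10, PP_11, eps00, eps01, eps10, eps11]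
    push_cast; ring
  · refine ⟨eps (-1) 1 (-1) 1, by simp [eps], fun u v w z => ?_⟩
    rw [sum_z2]
    simp only [Prod.mk_add_mk, z2_11, zero_add, add_zero, PP_00, PP_01, PP_10, PP_11, eps00, eps01, eps10, eps11]
    push_cast; ring
  · refine ⟨eps 1 1 1 1, by simp [eps], fun u v w z => ?_⟩
    rw [sum_z2]
    simp only [Prod.mk_add_mk, z2_11, zero_add, add_zero, PP_00, PP_01, PP_10, PP_11, eps00, eps01, eps10, eps11]
    push_cast; ring
  · refine ⟨eps (-1) (-1) 1 1, by simp [eps], fun u v w z => ?_⟩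
    rw [sum_z2]
    simp only [Prod.mk_add_mk, z2_11, zero_add, add_zero, PP_00, PP_01, PP_10, PP_11, eps00, eps01, eps10, eps11]
    push_cast; ring
  · refine ⟨eps 1 1 1 1, by simp [eps], fun u v w z => ?_⟩
    rw [sum_z2]
    simp only [Prod.mk_add_mk, z2_11, zero_add, add_zero, PP_00, PP_01, PP_10, PP_11, eps00, eps01, eps10, eps11]
    push_cast; ring
  · refine ⟨eps 1 1 1 1, by simp [eps], fun u v w z => ?_⟩
    rw [sum_z2]
    simp only [Prod.mk_add_mk, z2_11, zero_add, add_zero, PP_00, PP_01, PP_10, PP_11, eps00, eps01, eps10, eps11]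
    push_cast; ring

end

section
variable {ι : Type*} [Fintype ι] [DecidableEq ι] {R : Type*} [CommRing R]

/-- product of pairings along a permuted pairing -/
def FF (x y : ι × Fin 2 → R) (σ : Equiv.Perm (ι × Fin 2)) (s : ι → ZMod 2 × ZMod 2) : R :=
  ∏ k, PP x y (s k) (σ (k, 0)) (σ (k, 1))

lemma prod_two (f : ι → R) (k1 k0 : ι) (h : k1 ≠ k0) :
    ∏ k, f k = f k1 * f k0 * ∏ k ∈ (Finset.univ.erase k1).erase k0, f k := by
  rw [← Finset.mul_prod_erase Finset.univ f (Finset.mem_univ k1),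
    ← Finset.mul_prod_erase (Finset.univ.erase k1) f (a := k0) (by simp [h.symm]), mul_assoc]

lemma FF_exchange (x y : ι × Fin 2 → R) (s : ι → ZMod 2 × ZMod 2) (k1 k0 : ι) (h : k1 ≠ k0)
    (ha : s k1 ≠ 0) (hc : s k0 ≠ 0) (hac : s k1 ≠ s k0) :
    ∃ ε : ZMod 2 × ZMod 2 → ℤ, ε (s k1) = 1 ∧ ∀ σ, 2 * FF x y σ s =
      ∑ s', (ε s' : R) * FF x y (σ * Equiv.swap (k1, 1) (k0, 0))
        (Function.update (Function.update s k1 s') k0 (s' + s k1 + s k0)) := by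
  obtain ⟨ε, he, hE⟩ := exchange x y (s k1) (s k0) ha hc hac
  refine ⟨ε, he, fun σ => ?_⟩
  rw [FF, prod_two _ k1 k0 h, ← mul_assoc, hE, Finset.sum_mul]
  refine Finset.sum_congr rfl fun s' _ => ?_
  rw [FF, prod_two _ k1 k0 h, mul_assoc]
  congr 2
  · simp [h, h.symm, Equiv.swap_apply_def]
  · refine Finset.prod_congr rfl fun k hk => ?_
    simp only [Finset.mem_erase, Finset.mem_univ, and_true] at hk
    simp [hk.1, hk.2, Equiv.swap_apply_def]

lemma FF_tau (x y : ι × Fin 2 → R) (s : ι → ZMod 2 × ZMod 2) (k1 : ι) (ha : s k1 ≠ 0)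
    (σ : Equiv.Perm (ι × Fin 2)) :
    FF x y (σ * Equiv.swap (k1, 0) (k1, 1)) s = FF x y σ s := by
  refine Finset.prod_congr rfl fun k hk => ?_
  by_cases hk : k = k1
  · subst hk
    simp only [Equiv.Perm.mul_apply, Equiv.swap_apply_left, Equiv.swap_apply_right]
    exact PP_symm _ _ _ ha _ _
  · simp [hk, Equiv.swap_apply_def]

variable {K : Type*} [Field K] [Algebra K R] {q n : ℕ} [Fact q.Prime]

lemma bad_of_notMem (hq : 3 ≤ q) (hn : 1 ≤ n) (hcard : Fintype.card ι = 2 * (q * n) + 1)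
    (J : Submodule K R) (ψ : ι × Fin 2 → ZMod q) (h0 : ∑ u, ψ u = 0) (x y : ι × Fin 2 → R)
    (H : ∀ σ s, (∑ k, s k = 0 → Zs (fun k => (s k, pt ψ σ k)) (n + 1) Finset.univ) →
      FF x y σ s ∈ J) (σ : Equiv.Perm (ι × Fin 2)) (s : ι → ZMod 2 × ZMod 2)
    (hs : FF x y σ s ∉ J) : Bad q n s (pt ψ σ) Finset.univ := by
  have := mt (H σ s) hs
  push Not at this
  refine ⟨hq, hn, by simpa using hcard, this.1, ?_, this.2⟩
  rw [← h0, ← Equiv.sum_comp σ ψ, Fintype.sum_prod_type]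
  exact Finset.sum_congr rfl fun k _ => by simp [pt]

lemma term_mem {s : ι → ZMod 2 × ZMod 2} {k1 k0 : ι} (h : k1 ≠ k0) (ha : s k1 ≠ 0) (hc : s k0 ≠ 0)
    (hac : s k1 ≠ s k0) (h3 : 3 ≤ (Finset.univ.filter (fun i => s i = s k1)).card)
    (s' : ZMod 2 × ZMod 2) (T : ι → ZMod q) (t0 : ZMod q)
    (hT : ∀ l, l ≠ k0 → l ≠ k1 → T l = t0) (hT0 : T k0 ≠ t0)
    (hs' : s' = s k1 → T k1 ≠ t0) :
    ¬ Bad q n (Function.update (Function.update s k1 s') k0 (s' + s k1 + s k0)) T Finset.univ := by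
  intro B
  set s'' := Function.update (Function.update s k1 s') k0 (s' + s k1 + s k0) with hs''
  have e1 : s'' k1 = s' := by simp [hs'', h]
  have e0 : s'' k0 = s' + s k1 + s k0 := by simp [hs'']
  have eo : ∀ l, l ≠ k0 → l ≠ k1 → s'' l = s l := by
    intro l hl0 hl1; simp [hs'', hl0, hl1]
  obtain ⟨l, hl, hl1, hl0⟩ := exists_other _ h3 k1 k0
  have hl := (Finset.mem_filter.1 hl).2
  have n1 := B.s_ne k1 (Finset.mem_univ _)
  have n0 := B.s_ne k0 (Finset.mem_univ _)
  rw [e1] at n1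
  rw [e0] at n0
  rcases z2_ac s' _ _ ha hc hac n1 n0 with hh | hh
  · have es : s'' = s := by
      funext k
      by_cases hk0 : k = k0
      · rw [hk0, e0, hh, z2_add_self, zero_add]
      by_cases hk1 : k = k1
      · rw [hk1, e1, hh]
      exact eo k hk0 hk1
    rw [es] at B
    have := (B.const h3 rfl).2.1 l hl
    rw [hT l hl0 hl1] at this
    exact hs' hh this
  · have e0' : s'' k0 = s k1 := by rw [e0, hh, add_right_comm, z2_add_self, zero_add]
    have h3' : 3 ≤ (Finset.univ.filter (fun i => s'' i = s k1)).card := by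
      have hsub : insert k0 ((Finset.univ.filter (fun i => s i = s k1)).erase k1) ⊆
          (Finset.univ.filter (fun i => s'' i = s k1)) := by
        intro k hk
        simp only [Finset.mem_insert, Finset.mem_erase, Finset.mem_filter, Finset.mem_univ,
          true_and] at hk ⊢
        rcases hk with rfl | ⟨hk1, hk⟩
        · exact e0'
        · have hk0 : k ≠ k0 := by rintro rfl; exact hac hk.symm
          rw [eo k hk0 hk1, hk]
      have := Finset.card_le_card hsub
      rw [Finset.card_insert_of_notMem (by simp [hac.symm]),
        Finset.card_erase_of_mem (by simp)] at this
      omega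
    have := (B.const h3' e0').2.1 l (by rw [eo l hl0 hl1, hl])
    rw [hT l hl0 hl1] at this
    exact hT0 this

lemma core_final (h2K : (2 : K) ≠ 0) (hq : 3 ≤ q) (hn : 1 ≤ n)
    (hcard : Fintype.card ι = 2 * (q * n) + 1)
    (J : Submodule K R) (ψ : ι × Fin 2 → ZMod q) (h0 : ∑ u, ψ u = 0) (x y : ι × Fin 2 → R)
    (H : ∀ σ s, (∑ k, s k = 0 → Zs (fun k => (s k, pt ψ σ k)) (n + 1) Finset.univ) →
      FF x y σ s ∈ J) (k0 : ι) (h : ZMod q) (hh : h ≠ 0)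
    (hψ : ∀ k i, k ≠ k0 → ψ (k, i) = h) (hψ0 : ψ (k0, 0) + ψ (k0, 1) = 0)
    (hx : (ψ (k0, 0) ≠ h ∧ ψ (k0, 1) ≠ h) ∨ ψ (k0, 0) = h) (s : ι → ZMod 2 × ZMod 2) :
    FF x y 1 s ∈ J := by
  by_contra hs
  have h2 := two_ne (q := q) hq
  have h2h : h + h ≠ 0 := by
    rw [← two_mul]; exact mul_ne_zero h2 hh
  have BB := bad_of_notMem hq hn hcard J ψ h0 x y H
  have B := BB 1 s hs
  have hpt0 : pt ψ 1 k0 = 0 := by simpa [pt] using hψ0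
  have hc : s k0 ≠ 0 := B.s_ne k0 (Finset.mem_univ _)
  obtain ⟨a, ha, h3⟩ := B.exists_big
  have hac : a ≠ s k0 := by
    rintro rfl
    exact (B.const h3 rfl).1 hpt0
  obtain ⟨k1, hk1⟩ := B.exists a ha
  subst hk1
  have hk10 : k1 ≠ k0 := by rintro rfl; exact hac rfl
  obtain ⟨ε, hε, hE⟩ := FF_exchange x y s k1 k0 hk10 ha hc hac
  have mulmem : ∀ (m : ℤ) (g : R), g ∈ J → (m : R) * g ∈ J := by
    intro m g hg
    rw [← zsmul_eq_mul]
    exact J.toAddSubgroup.zsmul_mem hg m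
  have half : ∀ g : R, 2 * g ∈ J → g ∈ J := by
    intro g hg
    have := J.smul_mem (2 : K)⁻¹ hg
    have e : (2 : R) * g = (2 : K) • g := by
      rw [Algebra.smul_def, map_ofNat]
    rwa [e, inv_smul_smul₀ h2K] at this
  rcases hx with ⟨hx0, hx1⟩ | hx
  · apply hs
    apply half
    rw [hE]
    refine J.sum_mem fun s' _ => mulmem _ _ ?_
    by_contra hcon
    refine term_mem hk10 ha hc hac h3 s' _ (h + h) ?_ ?_ ?_ (BB _ _ hcon)
    · intro l hl0 hl1
      simp [pt, Equiv.swap_apply_def, hl0, hl1, hψ]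
    · simp only [pt, one_mul, Equiv.swap_apply_def]
      simp [hk10.symm, hψ k1 _ hk10, hx1]
    · intro _
      have e1 : Equiv.swap (k1, (1 : Fin 2)) (k0, 0) (k1, 0) = (k1, 0) := by
        simp [Equiv.swap_apply_def, hk10]
      rw [pt, one_mul, e1, Equiv.swap_apply_left, hψ k1 _ hk10]
      intro e; exact hx0 (add_left_cancel e)
  · have key : ∀ σ : Equiv.Perm (ι × Fin 2), σ (k0, 1) = (k0, 1) →
        2 * FF x y σ s - FF x y (σ * Equiv.swap (k1, 1) (k0, 0)) s ∈ J := by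
      intro σ hσ
      rw [hE, ← Finset.add_sum_erase _ _ (Finset.mem_univ (s k1)), hε]
      have es : Function.update (Function.update s k1 (s k1)) k0 (s k1 + s k1 + s k0) = s := by
        rw [z2_add_self, zero_add]; simp
      rw [es, Int.cast_one, one_mul, add_sub_cancel_left]
      refine J.sum_mem fun s' hs' => mulmem _ _ ?_
      have hne := (Finset.mem_erase.1 hs').1
      by_contra hcon
      have hall : ∀ u, u ≠ (k0, 1) → ψ (σ u) = h := by
        intro u hu
        have : σ u ≠ (k0, 1) := fun e => hu (σ.injective (e.trans hσ.symm))
        obtain ⟨⟨k, i⟩, hku⟩ : ∃ v, v = σ u := ⟨_, rfl⟩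
        rw [← hku] at this ⊢
        by_cases hk : k = k0
        · subst hk
          have : i = 0 := by
            fin_cases i <;> simp at this ⊢
          rw [this, hx]
        · exact hψ k i hk
      refine term_mem hk10 ha hc hac h3 s' _ (h + h) ?_ ?_ ?_ (BB _ _ hcon)
      · intro l hl0 hl1
        rw [pt, Equiv.Perm.mul_apply, Equiv.Perm.mul_apply, hall, hall]
        · simp [Equiv.swap_apply_def, hl0, hl1]
        · simp [Equiv.swap_apply_def, hl0, hl1]
      · have e1 : Equiv.swap (k1, (1 : Fin 2)) (k0, 0) (k0, 1) = (k0, 1) := by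
          simp [Equiv.swap_apply_def, hk10.symm]
        rw [pt, Equiv.Perm.mul_apply, Equiv.Perm.mul_apply, e1, hσ, Equiv.swap_apply_right, hall _ (by simp [hk10])]
        intro e
        have : ψ (k0, 1) = h := by linear_combination e
        rw [hx, this] at hψ0
        exact h2h hψ0
      · intro e; exact absurd e hne
    set ρ := Equiv.swap (k1, (1 : Fin 2)) (k0, 0) with hρ
    set τ := Equiv.swap (k1, (0 : Fin 2)) (k1, 1) with hτ
    have fτ : τ (k0, 1) = (k0, 1) := by simp [hτ, Equiv.swap_apply_def, hk10.symm]
    have fρ : ρ (k0, 1) = (k0, 1) := by simp [hρ, Equiv.swap_apply_def, hk10.symm]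
    have br : τ * ρ * τ * ρ = ρ * τ := by
      ext1 u
      obtain ⟨k, i⟩ := u
      by_cases e1 : k = k1
      · subst e1
        fin_cases i <;> simp [hτ, hρ, Equiv.swap_apply_def, hk10, hk10.symm]
      by_cases e0 : k = k0
      · subst e0
        fin_cases i <;> simp [hτ, hρ, Equiv.swap_apply_def, hk10, hk10.symm]
      simp [hτ, hρ, Equiv.swap_apply_def, e1, e0]
    have k1' := key 1 rfl
    have k2' := key τ fτ
    have k3' := key (τ * ρ * τ) (by simp [fτ, fρ])
    have tt := FF_tau x y s k1 ha
    rw [← hτ] at tt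
    have t1 := tt 1
    rw [one_mul] at k1' t1
    rw [t1] at k2'
    rw [tt, br, tt] at k3'
    apply hs
    apply half
    have := J.sub_mem (J.add_mem (mulmem 2 _ k2') k3') k1'
    convert this using 1
    push_cast; ring

lemma mul_expand (h2K : (2 : K) ≠ 0) (x y : ι × Fin 2 → R) (i j : Fin 2) (u v : ι × Fin 2) :
    ∃ c : ZMod 2 × ZMod 2 → K, (if i = 0 then x u else y u) * (if j = 0 then x v else y v) =
      ∑ s, c s • PP x y s u v := by
  have h22 : (algebraMap K R 2⁻¹) * 2 = 1 := by
    rw [← map_ofNat (algebraMap K R) 2, ← map_mul, inv_mul_cancel₀ h2K, map_one]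
  have e : ∀ a b c d : ℤ, ∑ s, ((2 : K)⁻¹ * (eps a b c d s : K)) • PP x y s u v =
      algebraMap K R 2⁻¹ * (a * PP x y (0,0) u v + b * PP x y (0,1) u v + c * PP x y (1,0) u v
        + d * PP x y (1,1) u v) := by
    intro a b c d
    rw [sum_z2]
    simp only [eps00, eps01, eps10, eps11, Algebra.smul_def, map_mul, map_intCast]
    ring
  have key : ∃ a b c d : ℤ, 2 * ((if i = 0 then x u else y u) * (if j = 0 then x v else y v)) =
      (a * PP x y (0,0) u v + b * PP x y (0,1) u v + c * PP x y (1,0) u v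
        + d * PP x y (1,1) u v) := by
    simp only [PP_00, PP_01, PP_10, PP_11]
    fin_cases i <;> fin_cases j
    · exact ⟨0, 0, 1, 1, by simp; ring⟩
    · exact ⟨1, 1, 0, 0, by simp; ring⟩
    · exact ⟨-1, 1, 0, 0, by simp; ring⟩
    · exact ⟨0, 0, 1, -1, by simp; ring⟩
  obtain ⟨a, b, c, d, hk⟩ := key
  refine ⟨fun s => (2 : K)⁻¹ * (eps a b c d s : K), ?_⟩
  rw [e, ← hk, ← mul_assoc, h22, one_mul]

lemma prod_expand (h2K : (2 : K) ≠ 0) (J : Submodule K R) (x y : ι × Fin 2 → R)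
    (σ : Equiv.Perm (ι × Fin 2)) (hJ : ∀ s, FF x y σ s ∈ J) (e : ι × Fin 2 → Fin 2) :
    ∏ u, (if e u = 0 then x u else y u) ∈ J := by
  rw [← Equiv.prod_comp σ, Fintype.prod_prod_type]
  choose c hc using fun k : ι => mul_expand h2K x y (e (σ (k, 0))) (e (σ (k, 1))) (σ (k, 0)) (σ (k, 1))
  simp only [Fin.prod_univ_two, hc]
  rw [Finset.prod_univ_sum]
  refine J.sum_mem fun s _ => ?_
  rw [Finset.prod_smul]
  exact J.smul_mem _ (hJ s)

theorem core (h2K : (2 : K) ≠ 0) (hq : 3 ≤ q) (hn : 1 ≤ n)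
    (hcard : Fintype.card ι = 2 * (q * n) + 1)
    (J : Submodule K R) (ψ : ι × Fin 2 → ZMod q) (h0 : ∑ u, ψ u = 0) (x y : ι × Fin 2 → R)
    (H : ∀ σ s, (∑ k, s k = 0 → Zs (fun k => (s k, pt ψ σ k)) (n + 1) Finset.univ) →
      FF x y σ s ∈ J) (e : ι × Fin 2 → Fin 2) :
    ∏ u, (if e u = 0 then x u else y u) ∈ J := by
  by_contra hcon
  have hσ : ∀ σ, ∃ s, FF x y σ s ∉ J := by
    intro σ
    by_contra hc
    push Not at hc
    exact hcon (prod_expand h2K J x y σ hc e)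
  have BB := bad_of_notMem hq hn hcard J ψ h0 x y H
  have h7 : 3 ≤ q * n := by nlinarith
  have hc1 : ((Fintype.card ι : ℕ) : ZMod q) = 1 := by
    rw [hcard]; push_cast; simp
  obtain ⟨h, hh, hE⟩ := mstep hq (by omega) hc1 ψ h0 (fun σ => by
    obtain ⟨s, hs⟩ := hσ σ
    exact (BB σ s hs).ts)
  have hu : (Finset.univ : Finset (ι × Fin 2)).card = 2 * (2 * (q * n) + 1) := by
    rw [Finset.card_univ, Fintype.card_prod, hcard, Fintype.card_fin, mul_comm]
  obtain ⟨T, hET, hT2⟩ := Finset.exists_superset_card_eq hE (by rw [← Finset.card_univ, hu]; omega)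
  obtain ⟨X, Y, hXY, rfl⟩ := Finset.card_eq_two.1 hT2
  have hother : ∀ u, u ≠ X → u ≠ Y → ψ u = h := by
    intro u h1 h2
    by_contra h3
    have := hET (Finset.mem_filter.2 ⟨Finset.mem_univ u, h3⟩)
    simp [h1, h2] at this
  have hXY0 : ψ X + ψ Y = 0 := by
    have h1 := Finset.sum_add_sum_compl ({X, Y} : Finset (ι × Fin 2)) ψ
    rw [h0, Finset.sum_pair hXY, Finset.sum_congr rfl (g := fun _ => h)] at h1
    · rw [Finset.sum_const, Finset.card_compl, hT2, ← Finset.card_univ, hu] at h1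
      have : 2 * (2 * (q * n) + 1) - 2 = q * (4 * n) := by
        have : 2 * (2 * (q * n) + 1) - 2 = 4 * (q * n) := by omega
        rw [this]; ring
      rw [this, mul_smul, ← Nat.cast_smul_eq_nsmul (ZMod q) q] at h1
      simpa using h1
    · intro u hu
      simp at hu
      exact hother u hu.1 hu.2
  have main : ∀ X Y, X ≠ Y → (∀ u, u ≠ X → u ≠ Y → ψ u = h) → ψ X + ψ Y = 0 →
      ((ψ X ≠ h ∧ ψ Y ≠ h) ∨ ψ X = h) → False := by
    intro X Y hXY hother hXY0 hx
    obtain ⟨k0⟩ : Nonempty ι := Fintype.card_pos_iff.1 (by omega)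
    obtain ⟨π, hπX, hπY⟩ : ∃ π : Equiv.Perm (ι × Fin 2), π (k0, 0) = X ∧ π (k0, 1) = Y := by
      have hY : Equiv.swap (k0, 0) X Y ≠ (k0, 0) := by
        intro hc
        have := congrArg (Equiv.swap (k0, 0) X) hc
        rw [Equiv.swap_apply_self, Equiv.swap_apply_left] at this
        exact hXY this.symm
      refine ⟨Equiv.swap (k0, 0) X * Equiv.swap (k0, 1) (Equiv.swap (k0, 0) X Y), ?_, ?_⟩
      · rw [Equiv.Perm.mul_apply, Equiv.swap_apply_of_ne_of_ne (by simp) hY.symm,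
          Equiv.swap_apply_left]
      · rw [Equiv.Perm.mul_apply, Equiv.swap_apply_left, Equiv.swap_apply_self]
    have := core_final h2K hq hn hcard J (ψ ∘ π) (by rw [← h0]; exact Equiv.sum_comp π ψ)
      (x ∘ π) (y ∘ π) (fun σ s hs => H (π * σ) s hs) k0 h hh (fun k i hk => hother _ (by
        rw [← hπX]; intro e; apply hk; exact congrArg Prod.fst (π.injective e)) (by
        rw [← hπY]; intro e; apply hk; exact congrArg Prod.fst (π.injective e)))
      (by simpa [hπX, hπY] using hXY0) (by simpa [hπX, hπY] using hx)
    exact hcon (prod_expand h2K J x y π this e)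
  by_cases h1 : ψ X = h
  · exact main X Y hXY hother hXY0 (Or.inr h1)
  by_cases h2 : ψ Y = h
  · exact main Y X hXY.symm (fun u a b => hother u b a) (by rw [add_comm, hXY0]) (Or.inr h2)
  · exact main X Y hXY hother hXY0 (Or.inl ⟨h1, h2⟩)

end
end NB


namespace NB

section
variable {K : Type*} [Field K] {G : Type*} [Group G] {d : ℕ}

/-- the ideal generated by the invariants of `H` with zero constant term -/
noncomputable def PI (A : G →* (MvPolynomial (Fin d) K →ₐ[K] MvPolynomial (Fin d) K)) (H : Subgroup G) :
    Ideal (MvPolynomial (Fin d) K) :=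
  Ideal.span {u | (∀ h ∈ H, A h u = u) ∧ constantCoeff u = 0}

/-- the augmentation ideal -/
noncomputable def mm (K : Type*) [Field K] (d : ℕ) : Ideal (MvPolynomial (Fin d) K) :=
  RingHom.ker (constantCoeff (R := K) (σ := Fin d))

lemma PI_le (A : G →* (MvPolynomial (Fin d) K →ₐ[K] MvPolynomial (Fin d) K)) (H : Subgroup G) :
    PI A H ≤ mm K d := by
  rw [PI, Ideal.span_le]
  intro u hu
  exact hu.2

/-- the Reynolds operator -/
noncomputable def rey (A : G →* (MvPolynomial (Fin d) K →ₐ[K] MvPolynomial (Fin d) K))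
    (H : Subgroup G) [Fintype H] : MvPolynomial (Fin d) K →ₗ[K] MvPolynomial (Fin d) K :=
  (Fintype.card H : K)⁻¹ • ∑ h : H, (A h).toLinearMap

variable (A : G →* (MvPolynomial (Fin d) K →ₐ[K] MvPolynomial (Fin d) K)) (H : Subgroup G)

lemma rey_apply [Fintype H] (f : MvPolynomial (Fin d) K) :
    rey A H f = (Fintype.card H : K)⁻¹ • ∑ h : H, A h f := by
  simp [rey]

lemma act_rey [Fintype H] (f : MvPolynomial (Fin d) K) (g : G) (hg : g ∈ H) :
    A g (rey A H f) = rey A H f := by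
  rw [rey_apply, map_smul, map_sum]
  congr 1
  rw [← Equiv.sum_comp (Equiv.mulLeft (⟨g, hg⟩ : H)) (fun h : H => A h f)]
  refine Finset.sum_congr rfl fun h _ => ?_
  simp [map_mul]

lemma rey_act [Fintype H] (f : MvPolynomial (Fin d) K) (g : G) (hg : g ∈ H) :
    rey A H (A g f) = rey A H f := by
  rw [rey_apply, rey_apply]
  congr 1
  rw [← Equiv.sum_comp (Equiv.mulRight (⟨g, hg⟩ : H)) (fun h : H => A h f)]
  refine Finset.sum_congr rfl fun h _ => ?_
  simp [map_mul]

lemma rey_mul [Fintype H] (u f : MvPolynomial (Fin d) K) (hu : ∀ h ∈ H, A h u = u) :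
    rey A H (u * f) = u * rey A H f := by
  rw [rey_apply, rey_apply, mul_smul_comm, Finset.mul_sum]
  congr 1
  refine Finset.sum_congr rfl fun h _ => ?_
  rw [map_mul, hu h h.2]

lemma rey_self [Fintype H] (hK : (Fintype.card H : K) ≠ 0) (u : MvPolynomial (Fin d) K)
    (hu : ∀ h ∈ H, A h u = u) : rey A H u = u := by
  rw [rey_apply, Finset.sum_congr rfl (fun h _ => hu h.1 h.2), Finset.sum_const, Finset.card_univ,
    ← Nat.cast_smul_eq_nsmul K, inv_smul_smul₀ hK]

variable {A}

lemma act_hom (hX : ∀ g i, (A g (X i)).IsHomogeneous 1)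
    (g : G) {f : MvPolynomial (Fin d) K} {n : ℕ} (hf : f.IsHomogeneous n) :
    (A g f).IsHomogeneous n := by
  have : A g = aeval (fun i => A g (X i)) := by
    apply MvPolynomial.algHom_ext; intro i; simp
  rw [this]
  simpa using hf.aeval _ (hX g)

lemma act_const (hX : ∀ g i, (A g (X i)).IsHomogeneous 1)
    (g : G) (f : MvPolynomial (Fin d) K) : constantCoeff (A g f) = constantCoeff f := by
  have : ((aeval (fun _ => (0 : K)) : MvPolynomial (Fin d) K →ₐ[K] K)).comp (A g) =
      aeval (fun _ => (0 : K)) := by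
    apply MvPolynomial.algHom_ext; intro i
    have := (hX g i).coeff_eq_zero (d := 0) (by simp)
    simpa [← constantCoeff_eq] using this
  have := congrArg (fun φ => φ f) this
  simpa [aeval_def] using this

lemma act_comp (hX : ∀ g i, (A g (X i)).IsHomogeneous 1)
    (g : G) (n : ℕ) (f : MvPolynomial (Fin d) K) :
    A g (homogeneousComponent n f) = homogeneousComponent n (A g f) := by
  conv_rhs => rw [← sum_homogeneousComponent f, map_sum, map_sum]
  rw [Finset.sum_congr rfl (fun i _ => homogeneousComponent_of_mem (m := n)
    (act_hom hX g (homogeneousComponent_isHomogeneous i f)))]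
  rw [Finset.sum_ite_eq]
  split_ifs with h
  · rfl
  · rw [homogeneousComponent_eq_zero, map_zero]
    simpa [Nat.lt_succ_iff] using h

lemma rey_hom (hX : ∀ g i, (A g (X i)).IsHomogeneous 1)
    [Fintype H] {f : MvPolynomial (Fin d) K} {n : ℕ} (hf : f.IsHomogeneous n) :
    (rey A H f).IsHomogeneous n := by
  rw [rey_apply]
  apply (homogeneousSubmodule (Fin d) K n).smul_mem
  exact Submodule.sum_mem _ (fun h _ => act_hom hX h hf)

/-- Fogarty / Benson -/
theorem fogarty (hX : ∀ g i, (A g (X i)).IsHomogeneous 1)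
    [Fintype G] (hK : (Fintype.card G : K) ≠ 0) :
    PI A H ^ H.index ≤ PI A ⊤ := by
  classical
  have : Fintype (G ⧸ H) := Fintype.ofFinite _
  have hidx : H.index = (Finset.univ : Finset (G ⧸ H)).card := by
    rw [Finset.card_univ, Subgroup.index, Nat.card_eq_fintype_card]
  rw [hidx, ← Finset.prod_const, PI, Ideal.prod_span, Ideal.span_le]
  intro a ha
  obtain ⟨u, hu, rfl⟩ := (Set.mem_finsetProd _ _ _).1 ha
  have hu1 : ∀ c, ∀ h ∈ H, A h (u c) = u c := fun c => (hu (Finset.mem_univ c)).1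
  have hu2 : ∀ c, constantCoeff (u c) = 0 := fun c => (hu (Finset.mem_univ c)).2
  have hz : ∑ h : G, ∏ c : G ⧸ H, (A (h * c.out) (u c) + - u c) = 0 := by
    refine Finset.sum_eq_zero fun h _ => ?_
    refine Finset.prod_eq_zero (Finset.mem_univ ((h⁻¹ : G) : G ⧸ H)) ?_
    rw [hu1, add_neg_cancel]
    have : ((((h⁻¹ : G) : G ⧸ H).out : G) : G ⧸ H) = ((h⁻¹ : G) : G ⧸ H) := Quotient.out_eq _
    rw [QuotientGroup.eq] at this
    have := H.inv_mem this
    simpa using this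
  simp only [Fintype.prod_add] at hz
  rw [Finset.sum_comm, ← Finset.add_sum_erase _ _ (Finset.mem_univ (∅ : Finset (G ⧸ H)))] at hz
  have e0 : ∑ h : G, (∏ c ∈ (∅ : Finset (G ⧸ H)), A (h * c.out) (u c)) *
      ∏ c ∈ ∅ᶜ, - u c = (Fintype.card G : K) • ((-1) ^ Fintype.card (G ⧸ H) * ∏ c, u c) := by
    rw [Nat.cast_smul_eq_nsmul]
    simp [Finset.prod_neg]
  rw [e0] at hz
  have hmem : (Fintype.card G : K) • ((-1) ^ Fintype.card (G ⧸ H) * ∏ c, u c) ∈ PI A ⊤ := by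
    rw [eq_neg_of_add_eq_zero_left hz]
    refine (PI A ⊤).neg_mem (Submodule.sum_mem _ fun T hT => ?_)
    rw [← Finset.sum_mul]
    refine Ideal.mul_mem_right _ _ (Ideal.subset_span ⟨?_, ?_⟩)
    · intro g _
      rw [map_sum, ← Equiv.sum_comp (Equiv.mulLeft g) (fun h => ∏ c ∈ T, A (h * c.out) (u c))]
      refine Finset.sum_congr rfl fun h _ => ?_
      rw [map_prod]
      refine Finset.prod_congr rfl fun c _ => ?_
      simp [map_mul, mul_assoc]
    · rw [map_sum]
      refine Finset.sum_eq_zero fun h _ => ?_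
      obtain ⟨c, hc⟩ := Finset.nonempty_iff_ne_empty.2 (Finset.mem_erase.1 hT).1
      rw [map_prod]
      exact Finset.prod_eq_zero hc (by rw [act_const hX, hu2])
  have h1 := (PI A ⊤).mul_mem_left (C ((Fintype.card G : K)⁻¹) * (-1) ^ Fintype.card (G ⧸ H)) hmem
  rw [smul_eq_C_mul] at h1
  have e1 : (C ((Fintype.card G : K)⁻¹) * C (Fintype.card G : K) : MvPolynomial (Fin d) K) = 1 := by
    rw [← C_mul, inv_mul_cancel₀ hK, C_1]
  have e2 : ((-1) ^ Fintype.card (G ⧸ H) * (-1) ^ Fintype.card (G ⧸ H) : MvPolynomial (Fin d) K) = 1 := by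
    rw [← mul_pow]; simp
  have e3 : ∏ c, u c = C ((Fintype.card G : K)⁻¹) * (-1) ^ Fintype.card (G ⧸ H) *
      (C (Fintype.card G : K) * ((-1) ^ Fintype.card (G ⧸ H) * ∏ c, u c)) := by
    have e4 : ∏ c, u c = (C ((Fintype.card G : K)⁻¹) * C (Fintype.card G : K)) *
      ((-1) ^ Fintype.card (G ⧸ H) * (-1) ^ Fintype.card (G ⧸ H)) * ∏ c, u c := by
      rw [e1, e2]; ring
    refine e4.trans ?_
    ring
  rw [← e3] at h1
  exact h1

lemma comp_mul_mem (S : Subalgebra K (MvPolynomial (Fin d) K)) (φ : MvPolynomial (Fin d) K →ₗ[K] MvPolynomial (Fin d) K)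
    (k : ℕ) (u b : MvPolynomial (Fin d) K)
    (h : ∀ i j, i + j = k → φ (homogeneousComponent i u * homogeneousComponent j b) ∈ S) :
    φ (homogeneousComponent k (u * b)) ∈ S := by
  have e : homogeneousComponent k (u * b) = ∑ i ∈ Finset.range (u.totalDegree + 1),
      ∑ j ∈ Finset.range (b.totalDegree + 1), if k = i + j then
        homogeneousComponent i u * homogeneousComponent j b else 0 := by
    conv_lhs => rw [← sum_homogeneousComponent u, ← sum_homogeneousComponent b, Finset.sum_mul_sum]
    rw [map_sum]
    refine Finset.sum_congr rfl fun i _ => ?_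
    rw [map_sum]
    refine Finset.sum_congr rfl fun j _ => ?_
    exact homogeneousComponent_of_mem ((homogeneousComponent_isHomogeneous i u).mul
      (homogeneousComponent_isHomogeneous j b))
  rw [e, map_sum]
  refine S.sum_mem fun i _ => ?_
  rw [map_sum]
  refine S.sum_mem fun j _ => ?_
  split_ifs with hk
  · exact h i j hk.symm
  · rw [map_zero]; exact S.zero_mem

theorem bound_of_mem (hX : ∀ g i, (A g (X i)).IsHomogeneous 1)
    [Fintype G] (hK : (Fintype.card G : K) ≠ 0) (s : ℕ)
    (h : ∀ (f : MvPolynomial (Fin d) K) (k : ℕ), s < k → f.IsHomogeneous k → (∀ g, A g f = f) →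
      f ∈ PI A ⊤ * mm K d) (f : MvPolynomial (Fin d) K) (hf : ∀ g, A g f = f) :
    f ∈ Algebra.adjoin K {u : MvPolynomial (Fin d) K | (∀ g, A g u = u) ∧ u.totalDegree ≤ s} := by
  classical
  set S := Algebra.adjoin K {u : MvPolynomial (Fin d) K | (∀ g, A g u = u) ∧ u.totalDegree ≤ s}
  have hK' : (Fintype.card (⊤ : Subgroup G) : K) ≠ 0 := by
    rwa [Fintype.card_congr (Subgroup.topEquiv (G := G)).toEquiv]
  have key : ∀ k : ℕ, ∀ f : MvPolynomial (Fin d) K, f.IsHomogeneous k → (∀ g, A g f = f) →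
      f ∈ S := by
    intro k
    induction k using Nat.strong_induction_on with
    | _ k ih =>
    intro f hfk hf
    by_cases hk : k ≤ s
    · exact Algebra.subset_adjoin ⟨hf, hfk.totalDegree_le.trans hk⟩
    have hm := h f k (not_le.1 hk) hfk hf
    have main : ∀ x ∈ PI A ⊤ * mm K d, rey A ⊤ (homogeneousComponent k x) ∈ S := by
      intro x hx
      refine Submodule.mul_induction_on hx ?_ ?_
      · intro a ha
        refine Submodule.span_induction (p := fun a _ => ∀ b ∈ mm K d,
          rey A ⊤ (homogeneousComponent k (a * b)) ∈ S) ?_ ?_ ?_ ?_ ha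
        · rintro u ⟨hu, hu0⟩ b hb
          apply comp_mul_mem
          intro i j hij
          have hinv : ∀ h ∈ (⊤ : Subgroup G), A h (homogeneousComponent i u) = homogeneousComponent i u := by
            intro h _
            rw [act_comp hX, hu h trivial]
          rw [rey_mul _ _ _ _ hinv]
          by_cases hi : i = 0
          · subst hi
            rw [homogeneousComponent_zero, ← constantCoeff_eq, hu0]; simp
          by_cases hj : j = 0
          · subst hj
            rw [homogeneousComponent_zero, ← constantCoeff_eq, show constantCoeff b = 0 from hb]; simp
          refine S.mul_mem (ih i (by omega) _ (homogeneousComponent_isHomogeneous _ _) (fun g => hinv g trivial))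
            (ih j (by omega) _ (rey_hom _ hX (homogeneousComponent_isHomogeneous _ _))
              (fun g => act_rey A ⊤ _ g trivial))
        · intro b _; simp
        · intro x y _ _ h1 h2 b hb
          rw [add_mul, map_add, map_add]
          exact S.add_mem (h1 b hb) (h2 b hb)
        · intro r x _ h1 b hb
          rw [smul_eq_mul, mul_comm r x, mul_assoc]
          exact h1 _ (Ideal.mul_mem_left _ _ hb)
      · intro x y h1 h2
        rw [map_add, map_add]
        exact S.add_mem h1 h2
    have := main f hm
    rwa [homogeneousComponent_eq_self hfk, rey_self A ⊤ hK' f (fun g _ => hf g)] at this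
  rw [← sum_homogeneousComponent f]
  refine S.sum_mem fun k _ => key k _ (homogeneousComponent_isHomogeneous _ _) fun g => ?_
  rw [act_comp hX, hf]

end
end NB


namespace NB

section
variable {K : Type*} [Field K] {G : Type*} [Group G] {d : ℕ}
variable (A : G →* (MvPolynomial (Fin d) K →ₐ[K] MvPolynomial (Fin d) K)) (H : Subgroup G)

/-- elements whose Reynolds image lies in a power of the Hilbert ideal -/
noncomputable def JJ [Fintype H] (n : ℕ) : Submodule K (MvPolynomial (Fin d) K) :=
  (((PI A H) ^ (n + 1)).restrictScalars K).comap (rey A H)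

lemma mem_JJ [Fintype H] (n : ℕ) (f : MvPolynomial (Fin d) K) :
    f ∈ JJ A H n ↔ rey A H f ∈ (PI A H) ^ (n + 1) := Iff.rfl

/-- reduction to products of elements of a spanning set of the linear forms -/
lemma hom_reduce (J : Submodule K (MvPolynomial (Fin d) K)) (E : Set (MvPolynomial (Fin d) K))
    (hE : homogeneousSubmodule (Fin d) K 1 ≤ Submodule.span K E) (D : ℕ)
    (hJ : ∀ e : Fin D → MvPolynomial (Fin d) K, (∀ i, e i ∈ E) → ∏ i, e i ∈ J)
    (f : MvPolynomial (Fin d) K) (hf : f.IsHomogeneous D) : f ∈ J := by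
  have h1 : f ∈ homogeneousSubmodule (Fin d) K D := hf
  rw [← homogeneousSubmodule_one_pow] at h1
  have h2 := pow_le_pow_left' hE D h1
  rw [Submodule.span_pow] at h2
  refine (Submodule.span_le.2 ?_) h2
  intro a ha
  obtain ⟨e, rfl⟩ := Set.mem_pow.1 ha
  rw [List.prod_ofFn]
  exact hJ (fun i => e i) (fun i => (e i).2)

lemma inv_closure {S : Set G} {u : MvPolynomial (Fin d) K} (h : ∀ g ∈ S, A g u = u) :
    ∀ g ∈ Subgroup.closure S, A g u = u := by
  intro g hg
  induction hg using Subgroup.closure_induction with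
  | mem x hx => exact h x hx
  | one => simp
  | mul x y _ _ hx hy => rw [map_mul, AlgHom.mul_apply, hy, hx]
  | inv x _ hx =>
    conv_lhs => rw [← hx]
    rw [← AlgHom.mul_apply, ← map_mul]; simp

lemma rey_zero [Fintype H] (g : G) (hg : g ∈ H) (c : K) (hc : c ≠ 1) {u : MvPolynomial (Fin d) K}
    (h : A g u = c • u) : rey A H u = 0 := by
  have h1 := rey_act A H u g hg
  rw [h, map_smul] at h1
  have h2 : (c - 1) • rey A H u = 0 := by rw [sub_smul, h1, one_smul, sub_self]
  exact (smul_eq_zero.1 h2).resolve_left (sub_ne_zero.2 hc)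

lemma blocks [Fintype H] (hK : (Fintype.card H : K) ≠ 0) {M : Type*} [AddCommGroup M]
    (E : M → MvPolynomial (Fin d) K → Prop) (h1 : E 0 1)
    (hmul : ∀ a b u v, E a u → E b v → E (a + b) (u * v))
    (hinv : ∀ u, E 0 u → ∀ g ∈ H, A g u = u)
    (hrey : ∀ a u, a ≠ 0 → E a u → rey A H u = 0)
    {ι : Type*} [Fintype ι] (n : ℕ) (w : ι → M) (e : ι → MvPolynomial (Fin d) K)
    (he : ∀ i, E (w i) (e i)) (he0 : ∀ i, constantCoeff (e i) = 0)
    (hz : ∑ i, w i = 0 → Zs w (n + 1) Finset.univ) : ∏ i, e i ∈ JJ A H n := by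
  classical
  rw [mem_JJ]
  have hprod : ∀ S : Finset ι, E (∑ i ∈ S, w i) (∏ i ∈ S, e i) := by
    intro S
    induction S using Finset.induction_on with
    | empty => simpa using h1
    | insert a S ha ih =>
      rw [Finset.sum_insert ha, Finset.prod_insert ha]
      exact hmul _ _ _ _ (he a) ih
  by_cases h0 : ∑ i, w i = 0
  · obtain ⟨c, hc⟩ := hz h0
    rw [rey_self A H hK]
    · rw [← Finset.prod_fiberwise Finset.univ c]
      have := Ideal.prod_mem_prod (s := (Finset.univ : Finset (Fin (n+1)))) (I := fun _ => PI A H)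
        (x := fun k => ∏ i ∈ Finset.univ.filter (fun i => c i = k), e i) ?_
      · simpa using this
      · intro k _
        refine Ideal.subset_span ⟨hinv _ ?_, ?_⟩
        · have := hprod (Finset.univ.filter (fun i => c i = k))
          rwa [(hc k).2] at this
        · obtain ⟨i, hi⟩ := (hc k).1
          rw [map_prod]
          exact Finset.prod_eq_zero hi (he0 i)
    · apply hinv
      have := hprod Finset.univ
      rwa [h0] at this
  · rw [hrey _ _ h0 (hprod Finset.univ)]
    exact Ideal.zero_mem _

/-- eigenspace decomposition -/
lemma eigen {r : ℕ} [NeZero r] (g : G) (hr : (r : K) ≠ 0)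
    (χ : AddChar (ZMod r) K) (hχ : χ.IsPrimitive) (W : Submodule K (MvPolynomial (Fin d) K))
    (hg : ∀ v ∈ W, A (g ^ r) v = v)
    (hW : ∀ v ∈ W, A g v ∈ W) :
    W ≤ Submodule.span K {u | u ∈ W ∧ ∃ a : ZMod r, A g u = χ a • u} := by
  intro v hv
  have hpow : ∀ m : ℕ, A (g ^ m) v ∈ W := by
    intro m
    induction m with
    | zero => simpa using hv
    | succ m ih => rw [pow_succ', map_mul]; exact hW _ ih
  have hmod : ∀ m : ℕ, A (g ^ (m % r)) v = A (g ^ m) v := by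
    intro m
    have h1 : ∀ k : ℕ, A (g ^ (r * k)) v = v := by
      intro k
      induction k with
      | zero => simp
      | succ k ih => rw [Nat.mul_succ, pow_add, map_mul, AlgHom.mul_apply, hg v hv, ih]
    conv_rhs => rw [← Nat.mod_add_div m r, pow_add, map_mul, AlgHom.mul_apply, h1]
  have hstep : ∀ b : ZMod r, A (g ^ (b + 1).val) v = A g (A (g ^ b.val) v) := by
    intro b
    rw [ZMod.val_add, hmod, ← AlgHom.mul_apply, ← map_mul, ← pow_succ']
    rw [← hmod, ← hmod (b.val + 1)]
    congr 3
    rw [ZMod.val_one_eq_one_mod]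
    simp [Nat.add_mod]
  set P : ZMod r → MvPolynomial (Fin d) K := fun a => ∑ b : ZMod r, χ (-(b * a)) • A (g ^ b.val) v with hP
  have hPm : ∀ a, P a ∈ {u | u ∈ W ∧ ∃ a : ZMod r, A g u = χ a • u} := by
    intro a
    refine ⟨W.sum_mem fun b _ => W.smul_mem _ (hpow _), a, ?_⟩
    rw [hP]
    simp only
    rw [map_sum, Finset.smul_sum, ← Equiv.sum_comp (Equiv.addRight (1 : ZMod r))
      (fun b => χ a • χ (-(b * a)) • A (g ^ b.val) v)]
    refine Finset.sum_congr rfl fun b _ => ?_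
    rw [map_smul, Equiv.coe_addRight, smul_smul, ← AddChar.map_add_eq_mul, hstep]
    congr 2
    ring
  have hsum : v = (r : K)⁻¹ • ∑ a, P a := by
    rw [hP, Finset.sum_comm]
    simp_rw [← Finset.sum_smul]
    have : ∀ b : ZMod r, ∑ a, χ (-(b * a)) = if b = 0 then (r : K) else 0 := by
      intro b
      have h := AddChar.sum_mulShift (R := ZMod r) (R' := K) (-b) hχ
      rw [ZMod.card] at h
      simp only [neg_eq_zero] at h
      push_cast at h
      rw [← h]
      refine Finset.sum_congr rfl fun a _ => ?_
      congr 1; ring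
    simp_rw [this]
    simp [inv_smul_smul₀ hr]
  rw [hsum]
  exact Submodule.smul_mem _ _ (Submodule.sum_mem _ fun a _ => Submodule.subset_span (hPm a))

/-- eigenspace -/
def eigW (W : Submodule K (MvPolynomial (Fin d) K)) (g : G) (c : K) :
    Submodule K (MvPolynomial (Fin d) K) where
  carrier := {u | u ∈ W ∧ A g u = c • u}
  add_mem' := by
    rintro a b ⟨h1, h2⟩ ⟨h3, h4⟩
    exact ⟨W.add_mem h1 h3, by rw [map_add, h2, h4, smul_add]⟩
  zero_mem' := ⟨W.zero_mem, by simp⟩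
  smul_mem' := by
    rintro k a ⟨h1, h2⟩
    exact ⟨W.smul_mem k h1, by rw [map_smul, h2, smul_comm]⟩

lemma mem_eigW {W : Submodule K (MvPolynomial (Fin d) K)} {g : G} {c : K} {u : MvPolynomial (Fin d) K} :
    u ∈ eigW A W g c ↔ u ∈ W ∧ A g u = c • u := Iff.rfl

lemma eigW_stable {W : Submodule K (MvPolynomial (Fin d) K)} {g : G} {c : K} {h : G}
    (hc : Commute g h) (hW : ∀ v ∈ W, A h v ∈ W) : ∀ v ∈ eigW A W g c, A h v ∈ eigW A W g c := by
  rintro v ⟨h1, h2⟩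
  refine ⟨hW v h1, ?_⟩
  rw [← AlgHom.mul_apply, ← map_mul, hc.eq, map_mul, AlgHom.mul_apply, h2, map_smul]

/-- Noether-type bound for `C_r × C_r` subgroups -/
theorem lemC1 [Fintype H] (hX : ∀ g i, (A g (X i)).IsHomogeneous 1)
    (hK : (Fintype.card H : K) ≠ 0) {r : ℕ} [hr : Fact r.Prime] (hrK : (r : K) ≠ 0)
    (ζ : K) (hζ : IsPrimitiveRoot ζ r) (x y : G) (hx : x ^ r = 1) (hy : y ^ r = 1)
    (hxy : Commute x y) (hH : H = Subgroup.closure {x, y}) (n D : ℕ) (hD : r * n + r ≤ D)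
    (f : MvPolynomial (Fin d) K) (hf : f.IsHomogeneous D) : rey A H f ∈ (PI A H) ^ (n + 1) := by
  have : NeZero r := ⟨hr.out.ne_zero⟩
  set χ := AddChar.zmodChar r hζ.pow_eq_one with hχ
  have hprim : χ.IsPrimitive := AddChar.zmodChar_primitive_of_primitive_root r hζ
  have hne : ∀ a : ZMod r, a ≠ 0 → χ a ≠ 1 := by
    intro a ha h
    exact ha ((AddChar.IsPrimitive.zmod_char_eq_one_iff r hprim a).1 h)
  set V := homogeneousSubmodule (Fin d) K 1
  have hV : ∀ g : G, ∀ v ∈ V, A g v ∈ V := fun g v hv => act_hom hX g hv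
  have hxH : x ∈ H := hH ▸ Subgroup.subset_closure (by simp)
  have hyH : y ∈ H := hH ▸ Subgroup.subset_closure (by simp)
  refine hom_reduce (JJ A H n) {u | u ∈ V ∧ ∃ a b : ZMod r, A x u = χ a • u ∧ A y u = χ b • u} ?_ D ?_ f hf
  · refine (eigen A x hrK χ hprim V (by simp [hx]) (hV x)).trans ?_
    rw [Submodule.span_le]
    rintro u ⟨hu, a, ha⟩
    have h1 := eigen A y hrK χ hprim (eigW A V x (χ a)) (by simp [hy]) (eigW_stable A hxy (hV y)) ⟨hu, ha⟩
    refine Submodule.span_mono ?_ h1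
    rintro v ⟨⟨hv1, hv2⟩, b, hb⟩
    exact ⟨hv1, a, b, hv2, hb⟩
  · intro e he
    choose heV a b ha hb using he
    refine blocks A H hK (M := ZMod r × ZMod r) (fun w u => A x u = χ w.1 • u ∧ A y u = χ w.2 • u)
      ?_ ?_ ?_ ?_ n (fun i => (a i, b i)) e (fun i => ⟨ha i, hb i⟩) ?_ ?_
    · simp
    · rintro w w' u v ⟨h1, h2⟩ ⟨h3, h4⟩
      constructor
      · rw [map_mul, h1, h3, Prod.fst_add, AddChar.map_add_eq_mul, smul_mul_smul_comm]
      · rw [map_mul, h2, h4, Prod.snd_add, AddChar.map_add_eq_mul, smul_mul_smul_comm]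
    · rintro u ⟨h1, h2⟩
      rw [hH]
      apply inv_closure
      rintro g (rfl | rfl)
      · simpa using h1
      · simpa using h2
    · rintro w u hw ⟨h1, h2⟩
      by_cases hw1 : w.1 = 0
      · exact rey_zero A H y hyH _ (hne w.2 (fun hw2 => hw (Prod.ext hw1 hw2))) h2
      · exact rey_zero A H x hxH _ (hne w.1 hw1) h1
    · intro i
      have := (heV i : (e i).IsHomogeneous 1).coeff_eq_zero (d := 0) (by simp)
      simpa [← constantCoeff_eq] using this
    · intro h
      exact zs_rank_two _ n _ (by simpa using hD) h

end
end NB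


namespace NB

section
variable {K : Type*} [Field K] {G : Type*} [Group G] {d : ℕ}
variable (A : G →* (MvPolynomial (Fin d) K →ₐ[K] MvPolynomial (Fin d) K)) (H : Subgroup G)

/-- weight vectors of the even part -/
def EE {q : ℕ} (χ2 : AddChar (ZMod 2) K) (χ : AddChar (ZMod q) K) (i j z : G)
    (w : (ZMod 2 × ZMod 2) × ZMod q) (u : MvPolynomial (Fin d) K) : Prop :=
  A i u = χ2 w.1.1 • u ∧ A j u = χ2 w.1.2 • u ∧ A z u = χ w.2 • u

/-- weight vectors of the odd part -/
def OO {q : ℕ} (χ : AddChar (ZMod q) K) (t : K) (i z : G)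
    (ψ : ZMod q) (u : MvPolynomial (Fin d) K) : Prop :=
  A i u = t • u ∧ A z u = χ ψ • u

lemma zmod2_cases (a : ZMod 2) : a = 0 ∨ a = 1 := by
  revert a; decide

lemma spanQ {q : ℕ} [NeZero q] (χ2 : AddChar (ZMod 2) K) (χ : AddChar (ZMod q) K)
    (h2 : (2 : K) ≠ 0) (hχ21 : χ2 1 = -1) (hp2 : χ2.IsPrimitive) (hp : χ.IsPrimitive) (hq : (q : K) ≠ 0)
    (t : K) (ht : t * t = -1) (i j z : G) (hi : i ^ 4 = 1) (hj : j ^ 2 = i ^ 2)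
    (hij : i * j = j * i⁻¹) (hzi : Commute z i) (hzj : Commute z j) (hz : z ^ q = 1)
    (V : Submodule K (MvPolynomial (Fin d) K)) (hV : ∀ g : G, ∀ v ∈ V, A g v ∈ V) :
    V ≤ Submodule.span K ({u | u ∈ V ∧ ∃ w, EE A χ2 χ i j z w u} ∪
      {u | ∃ v ∈ V, ∃ ψ, OO A χ t i z ψ v ∧ (u = v ∨ u = A j v)}) := by
  set S := ({u | u ∈ V ∧ ∃ w, EE A χ2 χ i j z w u} ∪
      {u | ∃ v ∈ V, ∃ ψ, OO A χ t i z ψ v ∧ (u = v ∨ u = A j v)}) with hS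
  have hq2 : ((2 : ℕ) : K) ≠ 0 := by exact_mod_cast h2
  have hmm : ∀ (a b : G) (u : MvPolynomial (Fin d) K), A (a * b) u = A a (A b u) := by
    intro a b u; rw [map_mul]; rfl
  refine (eigen A z hq χ hp V (by simp [hz]) (hV z)).trans ?_
  rw [Submodule.span_le]
  rintro u ⟨hu, ψ, hψ⟩
  have hii : i ^ 2 * i ^ 2 = 1 := by rw [← pow_add]; exact hi
  have st1 : ∀ g, Commute z g → ∀ v ∈ eigW A V z (χ ψ), A g v ∈ eigW A V z (χ ψ) :=
    fun g hg => eigW_stable A hg (hV g)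
  have h1 := eigen A (i ^ 2) hq2 χ2 hp2 (eigW A V z (χ ψ)) (by simp [sq (i ^ 2), hii])
    (st1 _ (hzi.pow_right 2)) ⟨hu, hψ⟩
  refine (Submodule.span_le.2 ?_) h1
  rintro v ⟨hv, b, hb⟩
  obtain rfl | rfl := zmod2_cases b
  · -- even part
    rw [AddChar.map_zero_eq_one, one_smul] at hb
    have hinv : ∀ v, A (i ^ 2) v = v → A i⁻¹ v = A i v := by
      intro v hv
      conv_lhs => rw [← hv, ← hmm]
      congr 2; group
    have h3 := eigen A i hq2 χ2 hp2 (eigW A (eigW A V z (χ ψ)) (i ^ 2) 1)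
      (by rintro v ⟨_, h⟩; simpa using h)
      (eigW_stable A (Commute.pow_left (Commute.refl i) 2) (st1 _ hzi)) ⟨hv, by simpa using hb⟩
    refine (Submodule.span_le.2 ?_) h3
    rintro y ⟨hy, c, hc⟩
    have hst : ∀ v ∈ eigW A (eigW A (eigW A V z (χ ψ)) (i ^ 2) 1) i (χ2 c),
        A j v ∈ eigW A (eigW A (eigW A V z (χ ψ)) (i ^ 2) 1) i (χ2 c) := by
      rintro v ⟨⟨h4, h5⟩, h6⟩
      refine ⟨⟨st1 _ hzj _ h4, ?_⟩, ?_⟩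
      · rw [one_smul] at h5 ⊢
        rw [← hj] at h5 ⊢
        rw [← hmm, ← pow_succ, pow_succ', hmm, h5]
      · rw [← hmm, hij, hmm, hinv _ (by simpa using h5), h6, map_smul]
    have h7 := eigen A j hq2 χ2 hp2 (eigW A (eigW A (eigW A V z (χ ψ)) (i ^ 2) 1) i (χ2 c))
      (by rintro v ⟨⟨_, h⟩, _⟩; rw [hj]; simpa using h) hst ⟨hy, hc⟩
    refine Submodule.span_mono ?_ h7
    rintro x ⟨⟨⟨⟨h8, h9⟩, h10⟩, h11⟩, e, h12⟩
    exact Or.inl ⟨h8, ((c, e), ψ), h11, h12, h9⟩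
  · rw [hχ21, neg_one_smul] at hb
    have hi2 : A i (A i v) = -v := by rw [← hmm, ← sq, hb]
    have hzV := hv.1
    have hzv := hv.2
    have hziv : A z (A i v) = χ ψ • A i v := by rw [← hmm, hzi.eq, hmm, hzv, map_smul]
    have e1 : v = (2 : K)⁻¹ • (v - t • A i v) + (2 : K)⁻¹ • (v + t • A i v) := by
      rw [← smul_add]
      have : (v - t • A i v) + (v + t • A i v) = (2 : K) • v := by rw [two_smul]; abel
      rw [this, inv_smul_smul₀ h2]
    have hm1 : v - t • A i v ∈ S := by
      refine Or.inr ⟨_, V.sub_mem hzV (V.smul_mem _ (hV i v hzV)), ψ, ⟨?_, ?_⟩, Or.inl rfl⟩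
      · rw [map_sub, map_smul, hi2, smul_sub, smul_smul, ht]; simp; abel
      · rw [map_sub, map_smul, hziv, hzv, smul_sub, smul_comm]
    have hjj : ∀ u, A i (A i u) = -u → A j (A j u) = -u := by
      intro u hu
      rw [← hmm, ← sq, hj, sq, hmm, hu]
    set y := v + t • A i v with hy
    have hyV : y ∈ V := V.add_mem hzV (V.smul_mem _ (hV i v hzV))
    have hyi : A i y = -(t • y) := by
      rw [hy, map_add, map_smul, hi2, smul_add, smul_smul, ht]; simp
    have hyii : A i (A i y) = -y := by
      rw [hyi, map_neg, map_smul, hyi, smul_neg, smul_smul, ht]; simp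
    have hyi' : A i⁻¹ y = t • y := by
      have : A i (t • y) = y := by rw [map_smul, hyi, smul_neg, smul_smul, ht]; simp
      conv_lhs => rw [← this]
      rw [← hmm]; simp
    have hyz : A z y = χ ψ • y := by
      rw [hy, map_add, map_smul, hziv, hzv, smul_add, smul_comm]
    have hm2 : y ∈ S := by
      refine Or.inr ⟨-A j y, V.neg_mem (hV j y hyV), ψ, ⟨?_, ?_⟩, Or.inr ?_⟩
      · rw [map_neg, ← hmm, hij, hmm, hyi', map_smul, smul_neg]
      · rw [map_neg, ← hmm, hzj.eq, hmm, hyz, map_smul, smul_neg]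
      · rw [map_neg, hjj y hyii, neg_neg]
    show v ∈ Submodule.span K S
    rw [e1]
    exact Submodule.add_mem _ (Submodule.smul_mem _ _ (Submodule.subset_span hm1))
      (Submodule.smul_mem _ _ (Submodule.subset_span hm2))

lemma zs_c22q' {q : ℕ} (hq : q = 1 ∨ q.Prime) {ι : Type*} [Fintype ι] (w : ι → (ZMod 2 × ZMod 2) × ZMod q)
    (n : ℕ) (hc : 2 * (q * n) + 2 ≤ Fintype.card ι) (h0 : ∑ i, w i = 0) :
    Zs w (n + 1) Finset.univ := by
  have hs : ∑ i, (w i).1 = 0 := by rw [← Prod.fst_sum, h0]; rfl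
  have ht : ∑ i, (w i).2 = 0 := by rw [← Prod.snd_sum, h0]; rfl
  rcases hq with rfl | hq
  · obtain ⟨c, hc⟩ := zs_rank_two (fun i => (w i).1) n Finset.univ (by simpa using hc) hs
    refine ⟨c, fun k => ⟨(hc k).1, Prod.ext ?_ (Subsingleton.elim _ _)⟩⟩
    rw [Prod.fst_sum]
    exact (hc k).2
  · have : Fact q.Prime := ⟨hq⟩
    exact zs_c22q (fun i => (w i).1) (fun i => (w i).2) n Finset.univ hc hs ht

lemma EE_PP {q : ℕ} (χ2 : AddChar (ZMod 2) K) (χ : AddChar (ZMod q) K) (hχ21 : χ2 1 = -1)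
    (t : K) (ht : t * t = -1) (i j z : G) (hj : j ^ 2 = i ^ 2)
    (hij : i * j = j * i⁻¹) (hzj : Commute z j) {κ : Type*} (x : κ → MvPolynomial (Fin d) K)
    (ψ : κ → ZMod q) (hx : ∀ k, OO A χ t i z (ψ k) (x k)) (s : ZMod 2 × ZMod 2) (u v : κ) :
    EE A χ2 χ i j z (s, ψ u + ψ v) (PP x (fun k => A j (x k)) s u v) := by
  have hmm : ∀ (a b : G) (u : MvPolynomial (Fin d) K), A (a * b) u = A a (A b u) := by
    intro a b u; rw [map_mul]; rfl
  have hinv : ∀ k, A i⁻¹ (x k) = -t • x k := by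
    intro k
    have : A i (-t • x k) = x k := by rw [map_smul, (hx k).1, smul_smul]; simp [ht]
    conv_lhs => rw [← this]
    rw [← hmm]; simp
  have hiy : ∀ k, A i (A j (x k)) = -t • A j (x k) := by
    intro k; rw [← hmm, hij, hmm, hinv, map_smul]
  have hjy : ∀ k, A j (A j (x k)) = - x k := by
    intro k; rw [← hmm, ← sq, hj, sq, hmm, (hx k).1, map_smul, (hx k).1, smul_smul, ht]; simp
  have hzy : ∀ k, A z (A j (x k)) = χ (ψ k) • A j (x k) := by
    intro k; rw [← hmm, hzj.eq, hmm, (hx k).2, map_smul]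
  have hix : ∀ k, A i (x k) = t • x k := fun k => (hx k).1
  have hzx : ∀ k, A z (x k) = χ (ψ k) • x k := fun k => (hx k).2
  have hC : (C t * C t : MvPolynomial (Fin d) K) = -1 := by rw [← C_mul, ht]; simp
  have hcase : s = (1, 0) ∨ s = (1, 1) ∨ s = (0, 1) ∨ s = (0, 0) := by
    revert s; decide
  rcases hcase with rfl | rfl | rfl | rfl
  · rw [PP_10]
    refine ⟨?_, ?_, ?_⟩ <;>
    simp only [map_add, map_mul, hix, hiy, hjy, hzy, hzx, hχ21, AddChar.map_zero_eq_one,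
      AddChar.map_add_eq_mul, smul_eq_C_mul, C_mul, C_neg, C_1]
    · linear_combination (x u * x v + A j (x u) * A j (x v)) * hC
    · ring
    · ring
  · rw [PP_11]
    refine ⟨?_, ?_, ?_⟩ <;>
    simp only [map_sub, map_mul, hix, hiy, hjy, hzy, hzx, hχ21, AddChar.map_zero_eq_one,
      AddChar.map_add_eq_mul, smul_eq_C_mul, C_mul, C_neg, C_1]
    · linear_combination (x u * x v - A j (x u) * A j (x v)) * hC
    · ring
    · ring
  · rw [PP_01]
    refine ⟨?_, ?_, ?_⟩ <;>
    simp only [map_add, map_mul, hix, hiy, hjy, hzy, hzx, hχ21, AddChar.map_zero_eq_one,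
      AddChar.map_add_eq_mul, smul_eq_C_mul, C_mul, C_neg, C_1]
    · linear_combination (-x u * A j (x v) - A j (x u) * x v) * hC
    · ring
    · ring
  · rw [PP_00]
    refine ⟨?_, ?_, ?_⟩ <;>
    simp only [map_sub, map_mul, hix, hiy, hjy, hzy, hzx, hχ21, AddChar.map_zero_eq_one,
      AddChar.map_add_eq_mul, smul_eq_C_mul, C_mul, C_neg, C_1]
    · linear_combination (-x u * A j (x v) + A j (x u) * x v) * hC
    · ring
    · ring

end
end NB


namespace NB

section
variable {K : Type*} [Field K] {G : Type*} [Group G] {d : ℕ}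
variable (A : G →* (MvPolynomial (Fin d) K →ₐ[K] MvPolynomial (Fin d) K)) (H : Subgroup G)

lemma blocksQ [Fintype H] (hK : (Fintype.card H : K) ≠ 0)
    {q : ℕ} (χ2 : AddChar (ZMod 2) K) (χ : AddChar (ZMod q) K)
    (hne2 : ∀ a, a ≠ 0 → χ2 a ≠ 1) (hne : ∀ a, a ≠ 0 → χ a ≠ 1)
    (i j z : G) (hH : H = Subgroup.closure {i, j, z})
    {ι : Type*} [Fintype ι] (n : ℕ) (w : ι → (ZMod 2 × ZMod 2) × ZMod q)
    (e : ι → MvPolynomial (Fin d) K)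
    (he : ∀ k, EE A χ2 χ i j z (w k) (e k)) (he0 : ∀ i, constantCoeff (e i) = 0)
    (hz : ∑ i, w i = 0 → Zs w (n + 1) Finset.univ) : ∏ i, e i ∈ JJ A H n := by
  have hiH : i ∈ H := hH ▸ Subgroup.subset_closure (by simp)
  have hjH : j ∈ H := hH ▸ Subgroup.subset_closure (by simp)
  have hzH : z ∈ H := hH ▸ Subgroup.subset_closure (by simp)
  refine blocks A H hK (EE A χ2 χ i j z) ?_ ?_ ?_ ?_ n w e he he0 hz
  · simp [EE]
  · rintro w w' u v ⟨h1, h2, h3⟩ ⟨h4, h5, h6⟩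
    refine ⟨?_, ?_, ?_⟩
    · rw [map_mul, h1, h4, Prod.fst_add, Prod.fst_add, AddChar.map_add_eq_mul, smul_mul_smul_comm]
    · rw [map_mul, h2, h5, Prod.fst_add, Prod.snd_add, AddChar.map_add_eq_mul, smul_mul_smul_comm]
    · rw [map_mul, h3, h6, Prod.snd_add, AddChar.map_add_eq_mul, smul_mul_smul_comm]
  · rintro u ⟨h1, h2, h3⟩
    rw [hH]
    apply inv_closure
    rintro g (rfl | rfl | rfl)
    · simpa using h1
    · simpa using h2
    · simpa using h3
  · rintro w u hw ⟨h1, h2, h3⟩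
    by_cases hw1 : w.1.1 = 0
    · by_cases hw2 : w.1.2 = 0
      · exact rey_zero A H z hzH _ (hne w.2 (fun hw3 => hw (Prod.ext (Prod.ext hw1 hw2) hw3))) h3
      · exact rey_zero A H j hjH _ (hne2 _ hw2) h2
    · exact rey_zero A H i hiH _ (hne2 _ hw1) h1

/-- Noether-type bound for `Q_8 × C_q` subgroups (and `Q_8` if `q = 1`) -/
theorem lemQ [Fintype H] (hX : ∀ g i, (A g (X i)).IsHomogeneous 1)
    (hK : (Fintype.card H : K) ≠ 0) {q : ℕ} [NeZero q] (hq : q = 1 ∨ q.Prime) (h2 : (2 : K) ≠ 0)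
    (hqK : (q : K) ≠ 0) (ζ : K) (hζ : IsPrimitiveRoot ζ q) (t : K) (ht : t * t = -1)
    (i j z : G) (hi : i ^ 4 = 1) (hj : j ^ 2 = i ^ 2)
    (hij : i * j = j * i⁻¹) (hzi : Commute z i) (hzj : Commute z j) (hz : z ^ q = 1)
    (hH : H = Subgroup.closure {i, j, z}) (n D : ℕ)
    (hD : 4 * (q * n) + 3 ≤ D ∨ (D = 4 * (q * n) + 2 ∧ 3 ≤ q ∧ 1 ≤ n))
    (f : MvPolynomial (Fin d) K) (hf : f.IsHomogeneous D) : rey A H f ∈ (PI A H) ^ (n + 1) := by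
  classical
  have hneg : (-1 : K) ≠ 1 := by
    intro h; apply h2
    linear_combination -h
  have hζ2 : IsPrimitiveRoot (-1 : K) 2 :=
    IsPrimitiveRoot.mk_of_lt (-1) (by norm_num) (by ring) (by
      intro l hl hl2
      have : l = 1 := by omega
      subst this; simpa using hneg)
  have hpr : ∀ {r : ℕ} [NeZero r] {ζ : K} (hζ : IsPrimitiveRoot ζ r) (a : ZMod r), a ≠ 0 →
      AddChar.zmodChar r hζ.pow_eq_one a ≠ 1 := by
    intro r _ ζ hζ a ha h
    exact ha ((AddChar.IsPrimitive.zmod_char_eq_one_iff r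
      (AddChar.zmodChar_primitive_of_primitive_root r hζ) a).1 h)
  set χ2 : AddChar (ZMod 2) K := AddChar.zmodChar 2 hζ2.pow_eq_one with hχ2
  set χ : AddChar (ZMod q) K := AddChar.zmodChar q hζ.pow_eq_one with hχ
  have hχ21 : χ2 1 = -1 := by exact (AddChar.zmodChar_apply hζ2.pow_eq_one 1).trans (pow_one _)
  have hne2 : ∀ a, a ≠ 0 → χ2 a ≠ 1 := hpr hζ2
  have hne : ∀ a, a ≠ 0 → χ a ≠ 1 := hpr hζ
  have hiH : i ∈ H := hH ▸ Subgroup.subset_closure (by simp)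
  have hmm : ∀ (a b : G) (u : MvPolynomial (Fin d) K), A (a * b) u = A a (A b u) := by
    intro a b u; rw [map_mul]; rfl
  set V := homogeneousSubmodule (Fin d) K 1
  have hV : ∀ g : G, ∀ v ∈ V, A g v ∈ V := fun g v hv => act_hom hX g hv
  have hV0 : ∀ v ∈ V, constantCoeff v = 0 := by
    intro v hv
    have := (hv : v.IsHomogeneous 1).coeff_eq_zero (d := 0) (by simp)
    simpa [← constantCoeff_eq] using this
  refine hom_reduce (JJ A H n) _ (spanQ A χ2 χ h2 hχ21
    (AddChar.zmodChar_primitive_of_primitive_root 2 hζ2)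
    (AddChar.zmodChar_primitive_of_primitive_root q hζ) hqK t ht i j z hi hj hij hzi hzj hz V hV) D ?_ f hf
  intro e he
  set P : Fin D → Prop := fun k => e k ∈ V ∧ ∃ w, EE A χ2 χ i j z w (e k) with hP
  have hev : ∀ a : {k // P k}, ∃ w, EE A χ2 χ i j z w (e a) := fun a => a.2.2
  have hod : ∀ b : {k // ¬ P k}, ∃ v ∈ V, ∃ ψ, ∃ ε : Fin 2, OO A χ t i z ψ v ∧
      e b = if ε = 0 then v else A j v := by
    intro b
    rcases he b with h | ⟨v, hv, ψ, h1, h3 | h3⟩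
    · exact absurd h b.2
    · exact ⟨v, hv, ψ, 0, h1, by simpa using h3⟩
    · exact ⟨v, hv, ψ, 1, h1, by simpa using h3⟩
  choose wE hwE using hev
  choose xx hxV ψψ εε hO hxe using hod
  have hcard : Fintype.card {k // P k} + Fintype.card {k // ¬ P k} = D := by
    rw [Fintype.card_subtype_compl, Fintype.card_fin]
    have := Fintype.card_subtype_le P
    rw [Fintype.card_fin] at this
    omega
  rw [← Fintype.prod_subtype_mul_prod_subtype P e]
  obtain ⟨m, hm | hm⟩ := Nat.even_or_odd' (Fintype.card {k // ¬ P k})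
  · -- even number of odd factors
    have φ : Fin m × Fin 2 ≃ {k // ¬ P k} := Fintype.equivOfCardEq (by simp [hm]; ring)
    set x : Fin m × Fin 2 → MvPolynomial (Fin d) K := fun k => xx (φ k) with hx
    set ψ : Fin m × Fin 2 → ZMod q := fun k => ψψ (φ k) with hψ
    have hOx : ∀ k, OO A χ t i z (ψ k) (x k) := fun k => hO (φ k)
    set y : Fin m × Fin 2 → MvPolynomial (Fin d) K := fun k => A j (x k) with hy
    have hprod : ∏ b : {k // ¬ P k}, e b = ∏ u, (if εε (φ u) = 0 then x u else y u) := by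
      rw [← Equiv.prod_comp φ]
      exact Finset.prod_congr rfl fun u _ => hxe _
    rw [hprod]
    have hPP : ∀ s u v, EE A χ2 χ i j z (s, ψ u + ψ v) (PP x y s u v) :=
      fun s u v => EE_PP A χ2 χ hχ21 t ht i j z hj hij hzj x ψ hOx s u v
    have hx0 : ∀ u, constantCoeff (x u) = 0 := fun u => hV0 _ (hxV _)
    have hPP0 : ∀ s u v, constantCoeff (PP x y s u v) = 0 := by
      intro s u v
      have hy0 : ∀ u, constantCoeff (y u) = 0 := fun u => hV0 _ (hV j _ (hxV _))
      unfold PP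
      split_ifs <;> simp only [map_add, map_sub, map_mul, hx0, hy0] <;> simp
    have hptsum : ∀ σ, ∑ k, pt ψ σ k = ∑ u, ψ u := by
      intro σ
      rw [← Equiv.sum_comp σ, Fintype.sum_prod_type]
      simp [pt]
    by_cases hbig : 2 * (q * n) + 2 ≤ Fintype.card {k // P k} + m
    · set J' := (JJ A H n).comap (LinearMap.mulLeft K (∏ a : {k // P k}, e a)) with hJ'
      have := prod_expand h2 J' x y 1 ?_ (fun u => εε (φ u))
      · simpa [hJ'] using this
      · intro s
        have hb := blocksQ A H hK χ2 χ hne2 hne i j z hH (ι := {k // P k} ⊕ Fin m) n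
          (Sum.elim wE (fun k => (s k, pt ψ 1 k)))
          (Sum.elim (fun a => e a) (fun k => PP x y (s k) (k, 0) (k, 1))) ?_ ?_ ?_
        · rw [Fintype.prod_sum_type] at hb
          simpa [hJ', FF] using hb
        · rintro (a | k)
          · exact hwE a
          · exact hPP _ _ _
        · rintro (a | k)
          · exact hV0 _ a.2.1
          · exact hPP0 _ _ _
        · intro h0
          exact zs_c22q' hq _ n (by simpa using hbig) h0
    · -- the exceptional case
      have hD' : D = 4 * (q * n) + 2 ∧ 3 ≤ q ∧ 1 ≤ n := by
        rcases hD with hD | hD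
        · omega
        · exact hD
      have hEv : Fintype.card {k // P k} = 0 := by omega
      have hmm' : m = 2 * (q * n) + 1 := by omega
      have : IsEmpty {k // P k} := Fintype.card_eq_zero_iff.1 hEv
      rw [Finset.univ_eq_empty, Finset.prod_empty, one_mul]
      have hFF : ∀ σ (s : Fin m → ZMod 2 × ZMod 2),
          (∑ k, (s k, pt ψ σ k) = 0 → Zs (fun k => (s k, pt ψ σ k)) (n + 1) Finset.univ) →
          FF x y σ s ∈ JJ A H n := by
        intro σ s h
        exact blocksQ A H hK χ2 χ hne2 hne i j z hH n (fun k => (s k, pt ψ σ k))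
          (fun k => PP x y (s k) (σ (k, 0)) (σ (k, 1))) (fun k => hPP _ _ _) (fun k => hPP0 _ _ _) h
      by_cases h0 : ∑ u, ψ u = 0
      · have hqp : q.Prime := hq.resolve_left (by omega)
        have : Fact q.Prime := ⟨hqp⟩
        refine core h2 hD'.2.1 hD'.2.2 (by simpa using hmm') (JJ A H n) ψ h0 x y ?_ _
        intro σ s h
        refine hFF σ s (fun h3 => h ?_)
        have := congrArg Prod.fst h3
        rwa [Prod.fst_sum] at this
      · refine prod_expand h2 (JJ A H n) x y 1 (fun s => hFF 1 s (fun h3 => absurd ?_ h0)) _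
        have := congrArg Prod.snd h3
        rw [Prod.snd_sum] at this
        rw [← hptsum 1]; exact this
  · -- odd number of odd factors
    rw [mem_JJ, rey_zero A H (i ^ 2) (H.pow_mem hiH 2) (-1) hneg]
    · exact Ideal.zero_mem _
    · rw [map_mul, map_prod, map_prod]
      have h1 : ∀ a : {k // P k}, A (i ^ 2) (e a) = e a := by
        intro a
        rw [sq, hmm, (hwE a).1, map_smul, (hwE a).1, smul_smul, ← AddChar.map_add_eq_mul,
          CharTwo.add_self_eq_zero, AddChar.map_zero_eq_one, one_smul]
      have h3 : ∀ b : {k // ¬ P k}, A (i ^ 2) (e b) = - e b := by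
        intro b
        have hb : A (i ^ 2) (xx b) = - xx b := by
          rw [sq, hmm, (hO b).1, map_smul, (hO b).1, smul_smul, ht, neg_one_smul]
        rw [hxe b]
        split_ifs
        · exact hb
        · rw [← hmm, ← hj, ← pow_succ, pow_succ', hmm, hj, hb, map_neg]
      simp_rw [h1, h3]
      rw [Finset.prod_neg, Finset.card_univ, hm, pow_succ, pow_mul]
      simp

end
end NB


namespace NB

section
variable {F : Type*} [Field F] {G : Type*} [Group G] {d : ℕ}

/-- the left action attached to a representation -/
noncomputable def act (ρ : G →* Matrix.GeneralLinearGroup (Fin d) F) :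
    G →* (MvPolynomial (Fin d) F →ₐ[F] MvPolynomial (Fin d) F) where
  toFun g := aeval (fun i => ∑ j, ((ρ g⁻¹).val i j) • (X j))
  map_one' := by
    apply MvPolynomial.algHom_ext
    intro i
    simp [Matrix.one_apply]
  map_mul' g h := by
    apply MvPolynomial.algHom_ext
    intro i
    simp only [aeval_X, AlgHom.mul_apply, mul_inv_rev, map_mul, Units.val_mul, Matrix.mul_apply,
      map_sum, map_smul, Finset.sum_smul, Finset.smul_sum, smul_smul]
    rw [Finset.sum_comm]

lemma act_eq (ρ : G →* Matrix.GeneralLinearGroup (Fin d) F) (g : G) (f : MvPolynomial (Fin d) F) :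
    act ρ g f = polyAct ρ g⁻¹ f := rfl

lemma inv_iff (ρ : G →* Matrix.GeneralLinearGroup (Fin d) F) (f : MvPolynomial (Fin d) F) :
    IsPolyInvariant ρ f ↔ ∀ g, act ρ g f = f := by
  constructor
  · intro h g; exact h g⁻¹
  · intro h g
    have := h g⁻¹
    rwa [act_eq, inv_inv] at this

lemma act_X_hom (ρ : G →* Matrix.GeneralLinearGroup (Fin d) F) (g : G) (i : Fin d) :
    (act ρ g (X i)).IsHomogeneous 1 := by
  have : act ρ g (X i) = ∑ j, ((ρ g⁻¹).val i j) • (X j) := by simp [act]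
  rw [this]
  exact Submodule.sum_mem (homogeneousSubmodule (Fin d) F 1) fun j _ =>
    Submodule.smul_mem _ _ (isHomogeneous_X F j)

theorem nbound_of_sub [Fintype G] (hK : (Fintype.card G : F) ≠ 0)
    (ρ : G →* Matrix.GeneralLinearGroup (Fin d) F) (H : Subgroup G) [Fintype H] (s : ℕ)
    (h : ∀ D, s < D → ∀ f : MvPolynomial (Fin d) F, f.IsHomogeneous D →
      rey (act ρ) H f ∈ PI (act ρ) H ^ (H.index + 1)) : NoetherBoundLe ρ s := by
  intro f hf
  rw [inv_iff] at hf
  have hKH : (Fintype.card H : F) ≠ 0 := by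
    intro h0
    apply hK
    have h1 := H.card_mul_index
    rw [Nat.card_eq_fintype_card, Nat.card_eq_fintype_card] at h1
    rw [← h1, Nat.cast_mul, h0, zero_mul]
  have := bound_of_mem (act_X_hom ρ) hK s ?_ f hf
  · simpa only [inv_iff] using this
  · intro f k hk hfk hfi
    have h1 := h k hk f hfk
    rw [rey_self _ _ hKH f (fun g _ => hfi g), pow_succ] at h1
    exact Ideal.mul_mono (fogarty H (act_X_hom ρ) hK) (PI_le _ _) h1

/-- base change of a representation -/
noncomputable def bc (K : Type*) [Field K] [Algebra F K] (ρ : G →* Matrix.GeneralLinearGroup (Fin d) F) :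
    G →* Matrix.GeneralLinearGroup (Fin d) K :=
  (Matrix.GeneralLinearGroup.map (algebraMap F K)).comp ρ

variable (K : Type*) [Field K] [Algebra F K]

lemma act_bc (ρ : G →* Matrix.GeneralLinearGroup (Fin d) F) (g : G) (f : MvPolynomial (Fin d) F) :
    act (bc K ρ) g (map (algebraMap F K) f) = map (algebraMap F K) (act ρ g f) := by
  induction f using MvPolynomial.induction_on with
  | C a => simp [← algebraMap_eq]
  | add p q hp hq => simp only [map_add, hp, hq]
  | mul_X p i hp =>
    simp only [map_mul, hp, map_X]
    congr 1
    rw [show act (bc K ρ) g (X i) = ∑ j, ((bc K ρ g⁻¹).val i j) • (X j) from aeval_X _ _,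
      show act ρ g (X i) = ∑ j, ((ρ g⁻¹).val i j) • (X j) from aeval_X _ _, map_sum]
    refine Finset.sum_congr rfl fun j _ => ?_
    rw [smul_eq_C_mul, smul_eq_C_mul, map_mul, map_C, map_X]
    rfl

lemma descend_lin (T : Submodule F (MvPolynomial (Fin d) F)) (f : MvPolynomial (Fin d) F)
    (hf : map (algebraMap F K) f ∈ Submodule.span K (map (algebraMap F K) '' (T : Set (MvPolynomial (Fin d) F)))) :
    f ∈ T := by
  by_contra hfT
  obtain ⟨l, hl1, hl2⟩ := Submodule.exists_le_ker_of_notMem hfT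
  set L : MvPolynomial (Fin d) K →ₗ[K] K :=
    (basisMonomials (Fin d) K).constr K (fun m => algebraMap F K (l (monomial m 1))) with hL
  have key : ∀ h, L (map (algebraMap F K) h) = algebraMap F K (l h) := by
    intro h
    induction h using MvPolynomial.induction_on' with
    | monomial m a =>
      have e1 : map (algebraMap F K) (monomial m a) = algebraMap F K a • basisMonomials (Fin d) K m := by
        rw [map_monomial, coe_basisMonomials, smul_monomial, smul_eq_mul, mul_one]
      have e2 : monomial m a = a • monomial m (1 : F) := by rw [smul_monomial, smul_eq_mul, mul_one]
      rw [e1, map_smul, hL, Module.Basis.constr_basis, e2, map_smul]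
      simp
    | add p q hp hq => simp only [map_add, hp, hq]
  have h0 : Submodule.span K (map (algebraMap F K) '' (T : Set (MvPolynomial (Fin d) F))) ≤ LinearMap.ker L := by
    rw [Submodule.span_le]
    rintro _ ⟨h, hh, rfl⟩
    show L _ = 0
    rw [key, show l h = 0 from hl2 hh, map_zero]
  have h1 : L (map (algebraMap F K) f) = 0 := h0 hf
  rw [key] at h1
  exact hl1 ((map_eq_zero _).1 h1)

lemma rey_bc (ρ : G →* Matrix.GeneralLinearGroup (Fin d) F) (H : Subgroup G) [Fintype H]
    (f : MvPolynomial (Fin d) F) :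
    rey (act (bc K ρ)) H (map (algebraMap F K) f) = map (algebraMap F K) (rey (act ρ) H f) := by
  rw [rey_apply, rey_apply, smul_eq_C_mul, smul_eq_C_mul, map_mul, map_C, map_sum,
    map_inv₀ (algebraMap F K), map_natCast (algebraMap F K)]
  congr 1
  exact Finset.sum_congr rfl fun h _ => act_bc K ρ h f

theorem descend [Fintype G] (hF : (Fintype.card G : F) ≠ 0)
    (ρ : G →* Matrix.GeneralLinearGroup (Fin d) F) (s : ℕ) (h : NoetherBoundLe (bc K ρ) s) :
    NoetherBoundLe ρ s := by
  classical
  intro f hf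
  set S : Set (MvPolynomial (Fin d) F) := {h | IsPolyInvariant ρ h ∧ h.totalDegree ≤ s} with hS
  set SK : Set (MvPolynomial (Fin d) K) := {h | IsPolyInvariant (bc K ρ) h ∧ h.totalDegree ≤ s} with hSK
  have hK : (Fintype.card G : K) ≠ 0 := by
    rw [← map_natCast (algebraMap F K)]
    exact (map_ne_zero _).2 hF
  have hK' : (Fintype.card (⊤ : Subgroup G) : K) ≠ 0 := by
    rwa [Fintype.card_congr (Subgroup.topEquiv (G := G)).toEquiv]
  have hfi : IsPolyInvariant (bc K ρ) (map (algebraMap F K) f) := by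
    rw [inv_iff] at hf ⊢
    intro g
    rw [act_bc, hf]
  have h1 := h _ hfi
  have h2 : SK ⊆ (Algebra.adjoin K (map (algebraMap F K) '' S) : Set (MvPolynomial (Fin d) K)) := by
    rintro u ⟨hu1, hu2⟩
    rw [inv_iff] at hu1
    have e : u = rey (act (bc K ρ)) ⊤ u := (rey_self _ _ hK' u (fun g _ => hu1 g)).symm
    have e2 : rey (act (bc K ρ)) ⊤ u = ∑ m ∈ u.support, u.coeff m •
        map (algebraMap F K) (rey (act ρ) ⊤ (monomial m 1)) := by
      conv_lhs => rw [← support_sum_monomial_coeff u]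
      rw [map_sum]
      refine Finset.sum_congr rfl fun m _ => ?_
      rw [← rey_bc, map_monomial, map_one, ← map_smul, smul_monomial, smul_eq_mul, mul_one]
    rw [e, e2]
    refine Subalgebra.sum_mem _ fun m hm => Subalgebra.smul_mem _ ?_ _
    refine Algebra.subset_adjoin (Set.mem_image_of_mem _ ⟨?_, ?_⟩)
    · rw [inv_iff]
      intro g
      exact act_rey _ _ _ g trivial
    · have hm1 : (monomial m (1 : F)).IsHomogeneous m.degree := isHomogeneous_monomial _ rfl
      refine (rey_hom ⊤ (act_X_hom ρ) hm1).totalDegree_le.trans (le_trans ?_ hu2)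
      exact le_totalDegree hm
  have h3 : map (algebraMap F K) f ∈ Algebra.adjoin K (map (algebraMap F K) '' S) :=
    Algebra.adjoin_le h2 h1
  have h4 : map (algebraMap F K) f ∈ Submodule.span K (map (algebraMap F K) ''
      ((Subalgebra.toSubmodule (Algebra.adjoin F S) : Submodule F (MvPolynomial (Fin d) F)) :
        Set (MvPolynomial (Fin d) F))) := by
    have h5 : map (algebraMap F K) f ∈ Subalgebra.toSubmodule (Algebra.adjoin K (map (algebraMap F K) '' S)) := h3
    rw [Algebra.adjoin_eq_span] at h5
    refine Submodule.span_mono ?_ h5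
    intro x hx
    induction hx using Submonoid.closure_induction with
    | mem x hx =>
      obtain ⟨y, hy, rfl⟩ := hx
      exact ⟨y, Algebra.subset_adjoin hy, rfl⟩
    | one => exact ⟨1, Subalgebra.one_mem _, map_one _⟩
    | mul x y _ _ hx hy =>
      obtain ⟨a, ha, rfl⟩ := hx
      obtain ⟨b, hb, rfl⟩ := hy
      exact ⟨a * b, Subalgebra.mul_mem _ ha hb, map_mul _ _ _⟩
  exact descend_lin K _ f h4

end
end NB


namespace NB

section
variable {F : Type*} [Field F] {G : Type*} [Group G] {d : ℕ}

lemma cast_ne_of_dvd {F : Type*} [Field F] {m N : ℕ} (hN : (N : F) ≠ 0) (h : m ∣ N) : (m : F) ≠ 0 := by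
  obtain ⟨k, rfl⟩ := h
  intro h0
  apply hN
  rw [Nat.cast_mul, h0, zero_mul]

lemma exists_prim (K : Type*) [Field K] [IsAlgClosed K] (r : ℕ) (hr : (r : K) ≠ 0) :
    ∃ ζ : K, IsPrimitiveRoot ζ r := by
  have : NeZero (r : K) := ⟨hr⟩
  exact HasEnoughRootsOfUnity.exists_primitiveRoot K r

lemma cast_K [Fintype G] {N : ℕ} (hF : (N : F) ≠ 0) :
    (N : AlgebraicClosure F) ≠ 0 := by
  rw [← map_natCast (algebraMap F (AlgebraicClosure F))]
  exact (map_ne_zero _).2 hF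

theorem U1 [Fintype G] (hF : (Fintype.card G : F) ≠ 0)
    (ρ : G →* Matrix.GeneralLinearGroup (Fin d) F) {r : ℕ} (hr : r.Prime) (hrG : r ∣ Fintype.card G)
    (x y : G) (hx : x ^ r = 1) (hy : y ^ r = 1) (hxy : Commute x y)
    (hc : r * r ≤ Nat.card (Subgroup.closure {x, y})) :
    NoetherBoundLe ρ (Fintype.card G / r + r - 1) := by
  classical
  set K := AlgebraicClosure F
  have : Fact r.Prime := ⟨hr⟩
  set H := Subgroup.closure {x, y} with hH
  have hK : (Fintype.card G : K) ≠ 0 := cast_K (G := G) hF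
  have hci := H.card_mul_index
  rw [Nat.card_eq_fintype_card (α := G)] at hci
  have hKH : (Fintype.card H : K) ≠ 0 :=
    cast_ne_of_dvd hK ⟨H.index, by rw [← hci, Nat.card_eq_fintype_card]⟩
  have hrK : (r : K) ≠ 0 := cast_ne_of_dvd hK hrG
  obtain ⟨ζ, hζ⟩ := exists_prim K r hrK
  refine descend K hF ρ _ (nbound_of_sub hK _ H _ ?_)
  intro D hD f hf
  refine lemC1 _ H (act_X_hom _) hKH hrK ζ hζ x y hx hy hxy hH _ D ?_ f hf
  have h1 : r * H.index ≤ Fintype.card G / r := by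
    rw [Nat.le_div_iff_mul_le hr.pos, ← hci]
    calc r * H.index * r = (r * r) * H.index := by ring
      _ ≤ _ := Nat.mul_le_mul_right _ hc
  have := hr.pos
  omega

theorem U2 [Fintype G] (hF : (Fintype.card G : F) ≠ 0)
    (ρ : G →* Matrix.GeneralLinearGroup (Fin d) F) (h2G : 2 ∣ Fintype.card G)
    {q : ℕ} (hq : q = 1 ∨ (q.Prime ∧ 3 ≤ q)) (hqG : q ∣ Fintype.card G)
    (i j z : G) (hi : i ^ 4 = 1) (hj : j ^ 2 = i ^ 2)
    (hij : i * j = j * i⁻¹) (hzi : Commute z i) (hzj : Commute z j) (hz : z ^ q = 1)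
    (hc : 8 * q ≤ Nat.card (Subgroup.closure {i, j, z})) (s : ℕ)
    (hs : Fintype.card G / 2 + 2 ≤ s ∨ (Fintype.card G / 2 + 1 ≤ s ∧ 3 ≤ q)) :
    NoetherBoundLe ρ s := by
  classical
  set K := AlgebraicClosure F
  have hq0 : q ≠ 0 := by
    rcases hq with h | h
    · omega
    · omega
  have : NeZero q := ⟨hq0⟩
  set H := Subgroup.closure {i, j, z} with hH
  have hK : (Fintype.card G : K) ≠ 0 := cast_K (G := G) hF
  have hci := H.card_mul_index
  rw [Nat.card_eq_fintype_card (α := G)] at hci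
  have hKH : (Fintype.card H : K) ≠ 0 :=
    cast_ne_of_dvd hK ⟨H.index, by rw [← hci, Nat.card_eq_fintype_card]⟩
  have hqK : (q : K) ≠ 0 := cast_ne_of_dvd hK hqG
  have h2K : (2 : K) ≠ 0 := by exact_mod_cast cast_ne_of_dvd hK h2G
  obtain ⟨ζ, hζ⟩ := exists_prim K q hqK
  obtain ⟨t, ht⟩ := IsAlgClosed.exists_eq_mul_self (-1 : K)
  refine descend K hF ρ _ (nbound_of_sub hK _ H _ ?_)
  intro D hD f hf
  refine lemQ _ H (act_X_hom _) hKH (hq.imp_right And.left) h2K hqK ζ hζ t ht.symm i j z hi hj hij hzi hzj hz hH _ D ?_ f hf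
  have h1 : 4 * (q * H.index) ≤ Fintype.card G / 2 := by
    rw [Nat.le_div_iff_mul_le (by norm_num), ← hci]
    calc 4 * (q * H.index) * 2 = (8 * q) * H.index := by ring
      _ ≤ _ := Nat.mul_le_mul_right _ hc
  have hi1 : 1 ≤ H.index := by
    rw [Nat.one_le_iff_ne_zero]
    intro h0
    rw [h0, mul_zero] at hci
    exact Fintype.card_ne_zero hci.symm
  rcases hs with hs | ⟨hs, hq3⟩
  · left; omega
  · by_cases h5 : 4 * (q * H.index) + 3 ≤ D
    · exact Or.inl h5
    · exact Or.inr ⟨by omega, hq3, hi1⟩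

end
end NB

namespace NB

lemma two_gen {G : Type*} [Group G] [Finite G] {p : ℕ} (hp : p.Prime) (hG : IsPGroup p G)
    {x y : G} (hx : orderOf x = p) (hy : y ∉ Subgroup.zpowers x) :
    p * p ≤ Nat.card (Subgroup.closure ({x, y} : Set G)) := by
  have : Fact p.Prime := ⟨hp⟩
  have hle : Subgroup.zpowers x ≤ Subgroup.closure ({x, y} : Set G) := by
    rw [Subgroup.zpowers_le]; exact Subgroup.subset_closure (by simp)
  obtain ⟨k, hk⟩ := IsPGroup.iff_card.mp (hG.to_subgroup (Subgroup.closure ({x, y} : Set G)))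
  have hlt : Nat.card (Subgroup.zpowers x) < Nat.card (Subgroup.closure ({x, y} : Set G)) := by
    by_contra hcon
    have := Subgroup.eq_of_le_of_card_ge hle (not_lt.mp hcon)
    exact hy (this ▸ Subgroup.subset_closure (by simp))
  rw [Nat.card_zpowers, hx, hk] at hlt
  rw [hk]
  have : 1 < k := by
    by_contra hcon
    have := Nat.pow_le_pow_right hp.pos (not_lt.mp hcon)
    rw [pow_one] at this
    omega
  calc p * p = p ^ 2 := by ring
    _ ≤ p ^ k := Nat.pow_le_pow_right hp.pos this

lemma cyc_of_comm {A : Type*} [Group A] [Finite A] {p : ℕ} (hp : p.Prime) (hA : IsPGroup p A)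
    (hc : ∀ x y : A, x * y = y * x) (hu : Nat.card {x : A // x ^ p = 1} ≤ p) : IsCyclic A := by
  classical
  have := Fintype.ofFinite A
  have : Fact p.Prime := ⟨hp⟩
  have hu' : (Finset.univ.filter (fun x : A => x ^ p = 1)).card ≤ p := by
    rw [Nat.card_eq_fintype_card, Fintype.card_subtype] at hu; exact hu
  have key : ∀ k : ℕ, (Finset.univ.filter (fun x : A => x ^ p ^ k = 1)).card ≤ p ^ k := by
    intro k
    induction k with
    | zero =>
      simp only [pow_zero, pow_one]
      rw [Finset.card_le_one]
      intro a ha b hb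
      simp at ha hb; rw [ha, hb]
    | succ k ih =>
      refine (Finset.card_le_mul_card_image_of_maps_to (f := fun x : A => x ^ p)
        (t := Finset.univ.filter (fun x : A => x ^ p ^ k = 1)) ?_ p ?_).trans ?_
      · intro a ha
        simp only [Finset.mem_filter, Finset.mem_univ, true_and] at ha ⊢
        rw [← pow_mul, ← pow_succ']; exact ha
      · intro b hb
        by_cases hne : ∃ a : A, a ^ p = b
        · obtain ⟨a, ha⟩ := hne
          refine le_trans (Finset.card_le_card_of_injOn (fun x => a⁻¹ * x) ?_ ?_) hu'
          · intro x hx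
            simp only [Finset.coe_filter, Finset.mem_filter, Finset.mem_univ, true_and, Set.mem_ofPred_eq] at hx ⊢
            have : Commute a⁻¹ x := hc _ _
            rw [this.mul_pow, inv_pow, ha, hx.2]; simp
          · intro x _ y _ h
            simpa using h
        · rw [Finset.filter_eq_empty_iff.mpr]
          · simp
          · intro a _ h; exact hne ⟨a, h⟩
      · rw [pow_succ']; exact Nat.mul_le_mul_left _ ih
  apply isCyclic_of_card_pow_eq_one_le
  intro n hn
  obtain ⟨k, m, hm, rfl⟩ := Nat.exists_eq_pow_mul_and_not_dvd hn.ne' p hp.ne_one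
  have hm0 : 0 < m := by
    rcases Nat.eq_zero_or_pos m with h | h
    · subst h; simp at hm
    · exact h
  refine le_trans (Finset.card_le_card ?_) ((key k).trans (Nat.le_mul_of_pos_right _ hm0))
  intro a ha
  simp only [Finset.mem_filter, Finset.mem_univ, true_and] at ha ⊢
  rw [← orderOf_dvd_iff_pow_eq_one] at ha ⊢
  obtain ⟨j, hj⟩ := IsPGroup.iff_orderOf.mp hA a
  rw [hj] at ha ⊢
  refine Nat.Coprime.dvd_of_dvd_mul_right ?_ ha
  exact Nat.Coprime.pow_left _ ((Nat.Prime.coprime_iff_not_dvd hp).mpr hm)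

/-- subgroup version -/
lemma cyc_sub {G : Type*} [Group G] [Finite G] {p : ℕ} (hp : p.Prime) (hG : IsPGroup p G)
    (z : G) (hz : orderOf z = p) (hu : ∀ x : G, x ^ p = 1 → x ∈ Subgroup.zpowers z)
    (A : Subgroup G) (hA : ∀ x ∈ A, ∀ y ∈ A, x * y = y * x) : ∃ a, A = Subgroup.zpowers a := by
  have : IsCyclic A := by
    refine cyc_of_comm hp (hG.to_subgroup A) (fun x y => Subtype.ext (hA x x.2 y y.2)) ?_
    calc Nat.card {x : A // x ^ p = 1} ≤ Nat.card (Subgroup.zpowers z) := by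
          refine Nat.card_le_card_of_injective (fun x => ⟨x.1.1, hu _ (by
            have := x.2
            exact_mod_cast congrArg Subtype.val this)⟩) ?_
          intro x y h
          exact Subtype.ext (Subtype.ext (by simpa using h))
      _ = p := by rw [Nat.card_zpowers, hz]
  obtain ⟨a, ha⟩ := (Subgroup.isCyclic_iff_exists_zpowers_eq_top A).mp this
  exact ⟨a, ha.symm⟩

/-- existence of self-centralizing normal abelian subgroup -/
lemma self_cent {G : Type*} [Group G] [Finite G] (hnil : Group.IsNilpotent G) :
    ∃ A : Subgroup G, A.Normal ∧ (∀ x ∈ A, ∀ y ∈ A, x * y = y * x) ∧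
      ∀ x, (∀ y ∈ A, x * y = y * x) → x ∈ A := by
  let S : Set (Subgroup G) := {A | A.Normal ∧ ∀ x ∈ A, ∀ y ∈ A, x * y = y * x}
  have hS : S.Nonempty := ⟨⊥, inferInstance, by simp⟩
  obtain ⟨A, hA⟩ := Set.Finite.exists_maximal (Set.toFinite S) hS
  refine ⟨A, hA.prop.1, hA.prop.2, ?_⟩
  by_contra hcon
  push Not at hcon
  have := hA.prop.1
  have hex : ∃ k, ∃ x ∈ Subgroup.upperCentralSeries G k, (∀ y ∈ A, x * y = y * x) ∧ x ∉ A := by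
    obtain ⟨n, hn⟩ := Group.IsNilpotent.nilpotent G
    obtain ⟨x, hx⟩ := hcon
    exact ⟨n, x, by rw [hn]; trivial, hx⟩
  classical
  obtain ⟨x, hxk, hxc, hxA⟩ := Nat.find_spec hex
  have hk : Nat.find hex ≠ 0 := by
    intro h0
    rw [h0] at hxk
    simp at hxk
    exact hxA (hxk ▸ A.one_mem)
  obtain ⟨k, hk⟩ := Nat.exists_eq_succ_of_ne_zero hk
  rw [hk] at hxk
  have hcomm : ∀ g, x * g * x⁻¹ * g⁻¹ ∈ A := by
    intro g
    by_contra hg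
    refine Nat.find_min hex (m := k) (by omega) ⟨x * g * x⁻¹ * g⁻¹, ?_, ?_, hg⟩
    · exact (Subgroup.mem_upperCentralSeries_succ_iff.mp hxk g)
    · intro y hy
      have h1 : x * (g * x⁻¹ * g⁻¹) * y = x * y * (g * x⁻¹ * g⁻¹) := by
        have h2 := hxc (g⁻¹ * y * g) (by simpa using this.conj_mem y hy g⁻¹)
        have h3 : x⁻¹ * (g⁻¹ * y * g) = (g⁻¹ * y * g) * x⁻¹ := by
          rw [inv_mul_eq_iff_eq_mul, ← mul_assoc, h2]; simp
        calc x * (g * x⁻¹ * g⁻¹) * y = x * g * (x⁻¹ * (g⁻¹ * y * g)) * g⁻¹ := by group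
          _ = x * y * (g * x⁻¹ * g⁻¹) := by rw [h3]; group
      calc x * g * x⁻¹ * g⁻¹ * y = x * (g * x⁻¹ * g⁻¹) * y := by group
        _ = y * x * (g * x⁻¹ * g⁻¹) := by rw [h1, hxc y hy]
        _ = _ := by group
  let B := Subgroup.closure ((A : Set G) ∪ {x})
  have hAB : A ≤ B := fun y hy => Subgroup.subset_closure (Or.inl hy)
  have hxB : x ∈ B := Subgroup.subset_closure (Or.inr rfl)
  have hB : B ∈ S := by
    constructor
    · constructor
      intro n hn g
      induction hn using Subgroup.closure_induction with
      | mem y hy =>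
        rcases hy with hy | hy
        · exact hAB (this.conj_mem y hy g)
        · have : y = x := hy
          subst this
          have h := B.mul_mem (B.inv_mem (hAB (hcomm g))) hxB
          convert h using 1; group
      | one => simp
      | mul a b _ _ ha hb => convert B.mul_mem ha hb using 1; group
      | inv a _ ha => convert B.inv_mem ha using 1; group
    · intro u hu v hv
      have hcl := Subgroup.isMulCommutative_closure (k := (A : Set G) ∪ {x}) (by
        intro a ha b hb
        rcases ha with ha | ha <;> rcases hb with hb | hb
        · exact hA.prop.2 a ha b hb
        · rw [Set.mem_singleton_iff.mp hb]; exact (hxc a ha).symm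
        · rw [Set.mem_singleton_iff.mp ha]; exact (hxc b hb)
        · rw [Set.mem_singleton_iff.mp ha, Set.mem_singleton_iff.mp hb])
      have := hcl.is_comm.comm ⟨u, hu⟩ ⟨v, hv⟩
      exact congrArg Subtype.val this
  exact hxA (hA.le_of_ge hB hAB hxB)

end NB

namespace NB

section
variable {G : Type*} [Group G]

lemma cj_zpow {a b : G} {t : ℤ} (h : b * a * b⁻¹ = a ^ t) (n : ℤ) : b * a ^ n * b⁻¹ = a ^ (t * n) := by
  rw [zpow_mul, ← h, conj_zpow]

lemma cj_mul {a b c : G} {t u : ℤ} (hb : b * a * b⁻¹ = a ^ t) (hc : c * a * c⁻¹ = a ^ u) :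
    (b * c) * a * (b * c)⁻¹ = a ^ (t * u) := by
  rw [← cj_zpow hb, ← hc]; group

lemma cj_pow {a b : G} {t : ℤ} (h : b * a * b⁻¹ = a ^ t) (n : ℕ) :
    b ^ n * a * (b ^ n)⁻¹ = a ^ (t ^ n) := by
  induction n with
  | zero => simp
  | succ n ih => rw [pow_succ, pow_succ]; exact cj_mul ih h

lemma pow_ab {a b : G} {t : ℤ} (h : b * a * b⁻¹ = a ^ t) (c : ℤ) (n : ℕ) :
    (a ^ c * b) ^ n = a ^ (c * ∑ i ∈ Finset.range n, t ^ i) * b ^ n := by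
  induction n with
  | zero => simp
  | succ n ih =>
    rw [pow_succ, ih, Finset.sum_range_succ, mul_add, zpow_add, mul_comm c (t ^ n), ← cj_zpow (cj_pow h n),
      pow_succ]
    group

lemma cj_mem {a x : G} (hx : x ∈ Subgroup.zpowers a) : x * a * x⁻¹ = a := by
  obtain ⟨n, rfl⟩ := Subgroup.mem_zpowers_iff.mp hx
  group

lemma zpow_eq_iff' {a : G} {m n : ℤ} : a ^ m = a ^ n ↔ (orderOf a : ℤ) ∣ m - n := by
  rw [zpow_eq_zpow_iff_modEq, Int.modEq_comm, Int.modEq_iff_dvd]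

lemma eq_z {z x : G} (hz : orderOf z = 2) (hx : x ∈ Subgroup.zpowers z) (h1 : x ≠ 1) : x = z := by
  obtain ⟨n, rfl⟩ := Subgroup.mem_zpowers_iff.mp hx
  conv_rhs => rw [← zpow_one z]
  rw [zpow_eq_iff', hz]
  have h : ¬ ((2 : ℕ) : ℤ) ∣ n := by
    intro h; apply h1; rw [← hz] at h; exact orderOf_dvd_iff_zpow_eq_one.mp h
  omega

lemma L0 {a b z : G} {t s : ℤ} {k : ℕ} (ha : orderOf a = 2 ^ k) (hz : orderOf z = 2)
    (hu : ∀ x : G, x ^ 2 = 1 → x ∈ Subgroup.zpowers z) (hza : z ∈ Subgroup.zpowers a)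
    (hb : b ∉ Subgroup.zpowers a) (hbs : b ^ 2 = a ^ s) (hbt : b * a * b⁻¹ = a ^ t)
    (ht : t % 4 = 3) : b ^ 2 = z := by
  have hle : Subgroup.zpowers z ≤ Subgroup.zpowers a := by rwa [Subgroup.zpowers_le]
  have h1 : a ^ (t * s) = a ^ s := by
    rw [← cj_zpow hbt, ← hbs]; group
  rw [zpow_eq_iff', ha] at h1
  obtain ⟨w, hw⟩ : ∃ w, t = 4 * w + 3 := ⟨t / 4, by omega⟩
  have h2 : ((2 ^ k : ℕ) : ℤ) ∣ 2 * s := by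
    have h3 : t * s - s = (2 * w + 1) * (2 * s) := by rw [hw]; ring
    rw [h3] at h1
    refine IsCoprime.dvd_of_dvd_mul_left ?_ h1
    push_cast
    apply IsCoprime.pow_left
    exact ⟨-w, 1, by ring⟩
  apply eq_z hz
  · apply hu
    rw [hbs, ← zpow_natCast, ← zpow_mul]
    apply orderOf_dvd_iff_zpow_eq_one.mp
    rw [ha, mul_comm]; exact h2
  · intro h; exact hb (hle (hu _ h))

lemma L1 {p : ℕ} (hp : p.Prime) {a b z : G} {t s : ℤ} {k : ℕ} (ha : orderOf a = p ^ k) (hz : orderOf z = p)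
    (hu : ∀ x : G, x ^ p = 1 → x ∈ Subgroup.zpowers z) (hza : z ∈ Subgroup.zpowers a)
    (hb : b ∉ Subgroup.zpowers a) (hbs : b ^ p = a ^ s) (hbt : b * a * b⁻¹ = a ^ t)
    (hne : b * a * b⁻¹ ≠ a) : p = 2 ∧ 2 ≤ k ∧ b * a * b⁻¹ = a⁻¹ ∧ b ^ 2 = z := by
  have hle : Subgroup.zpowers z ≤ Subgroup.zpowers a := by rwa [Subgroup.zpowers_le]
  have hpi : Prime (p : ℤ) := Nat.prime_iff_prime_int.mp hp
  have : Fact p.Prime := ⟨hp⟩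
  have hn1 : ¬ ((p ^ k : ℕ) : ℤ) ∣ t - 1 := by
    rw [← ha, ← zpow_eq_iff', zpow_one, ← hbt]; exact hne
  have hk1 : k ≠ 0 := by rintro rfl; simp at hn1
  have hkp : (p : ℤ) ∣ ((p ^ k : ℕ) : ℤ) := by
    push_cast; exact dvd_pow_self _ hk1
  have htp : ((p ^ k : ℕ) : ℤ) ∣ t ^ p - 1 := by
    rw [← ha, ← zpow_eq_iff', zpow_one, ← cj_pow hbt, hbs]; group
  have hpt : (p : ℤ) ∣ t - 1 := by
    have h := hkp.trans htp
    rw [← ZMod.intCast_zmod_eq_zero_iff_dvd] at h ⊢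
    push_cast at h ⊢
    rwa [ZMod.pow_card] at h
  have hk2 : 2 ≤ k := by
    by_contra hcon
    have : k = 1 := by omega
    subst this
    apply hn1; simpa using hpt
  have hs1 : ((p ^ k : ℕ) : ℤ) ∣ s * (t - 1) := by
    have : s * (t - 1) = t * s - s := by ring
    rw [this, ← ha, ← zpow_eq_iff', ← cj_zpow hbt, ← hbs]; group
  have hps : (p : ℤ) ∣ s := by
    by_contra hcon
    apply hn1
    refine IsCoprime.dvd_of_dvd_mul_left ?_ hs1
    push_cast
    exact IsCoprime.pow_left ((Prime.coprime_iff_not_dvd hpi).mpr hcon)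
  obtain ⟨s', rfl⟩ := hps
  have hN : ∀ n' : ℤ, ∑ i ∈ Finset.range p, t ^ i = p * n' → ¬ (p : ℤ) ∣ n' → False := by
    intro n' hn' hpn
    have hco : IsCoprime n' (((p ^ k : ℕ) : ℤ)) := by
      push_cast
      exact (IsCoprime.pow_left ((Prime.coprime_iff_not_dvd hpi).mpr hpn)).symm
    obtain ⟨u, v, huv⟩ := hco
    have h1 : (a ^ (-(s' * u)) * b) ^ p = 1 := by
      rw [pow_ab hbt, hn', hbs, ← zpow_add]
      apply orderOf_dvd_iff_zpow_eq_one.mp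
      rw [ha]
      refine ⟨p * s' * v, ?_⟩
      linear_combination (-(p : ℤ) * s') * huv
    have h2 := hle (hu _ h1)
    apply hb
    have h3 := (Subgroup.zpowers a).mul_mem ((Subgroup.zpowers a).inv_mem (Subgroup.zpow_mem _ (Subgroup.mem_zpowers a) (-(s' * u)))) h2
    rwa [inv_mul_cancel_left] at h3
  have hp2 : p = 2 := by
    by_contra hcon
    have hodd := hp.odd_of_ne_two hcon
    obtain ⟨w, hw⟩ := hpt
    have h := odd_sq_dvd_geom_sum₂_sub (R := ℤ) (a := 1) (b := w) hodd
    obtain ⟨y, hy⟩ := h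
    have ht : t = 1 + p * w := by linear_combination hw
    refine hN (1 + p * y) ?_ ?_
    · rw [ht]
      simp only [one_pow, mul_one] at hy
      linear_combination hy
    · intro h
      have : (p : ℤ) ∣ 1 := by
        have h2 := dvd_sub h (dvd_mul_right (p : ℤ) y)
        simpa using h2
      exact hpi.not_isUnit (isUnit_of_dvd_one this)
  subst hp2
  have ht4 : t % 4 = 3 := by
    by_contra hcon
    have h1 : t % 4 = 1 := by push_cast at hpt; omega
    refine hN ((1 + t) / 2) ?_ ?_
    · simp [Finset.sum_range_succ]; omega
    · push_cast; omega
  have hbz := L0 ha hz hu hza hb hbs hbt ht4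
  refine ⟨rfl, hk2, ?_, hbz⟩
  have hab : (a * b) ^ 2 = z := by
    refine L0 (s := (1 + t) + (2 : ℕ) * s') (t := t) ha hz hu hza ?_ ?_ ?_ ht4
    · intro h; apply hb
      have h3 := (Subgroup.zpowers a).mul_mem ((Subgroup.zpowers a).inv_mem (Subgroup.mem_zpowers a)) h
      rwa [inv_mul_cancel_left] at h3
    · have := pow_ab hbt 1 2
      rw [zpow_one] at this
      rw [this, hbs, ← zpow_add]
      simp [Finset.sum_range_succ]
    · rw [← hbt]
      have : a * (b * a * b⁻¹) * a⁻¹ = b * a * b⁻¹ := by rw [hbt]; group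
      rw [← this]; group
  have h5 : a * (b * a * b⁻¹) * b ^ 2 = b ^ 2 := by
    have h7 : a * (b * a * b⁻¹) * b ^ 2 = (a * b) ^ 2 := by rw [sq, sq]; group
    rw [h7, hab, hbz]
  have h6 : a * (b * a * b⁻¹) = 1 := by simpa using h5
  rw [eq_inv_of_mul_eq_one_right h6]

end

theorem pgroup_thm {G : Type*} [Group G] [Finite G] {p : ℕ} (hp : p.Prime) (hG : IsPGroup p G)
    (hnc : ¬ IsCyclic G) :
    (∃ x y : G, x ^ p = 1 ∧ y ^ p = 1 ∧ Commute x y ∧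
      p * p ≤ Nat.card (Subgroup.closure ({x, y} : Set G))) ∨
    (p = 2 ∧ ∃ (a b : G) (m : ℕ), orderOf a = 2 * m ∧ 2 ∣ m ∧ m ≠ 0 ∧ b ^ 2 = a ^ m ∧
      b * a * b⁻¹ = a⁻¹ ∧ Subgroup.closure ({a, b} : Set G) = ⊤) := by
  have : Fact p.Prime := ⟨hp⟩
  by_cases hneg : (∃ x y : G, x ^ p = 1 ∧ y ^ p = 1 ∧ Commute x y ∧
      p * p ≤ Nat.card (Subgroup.closure ({x, y} : Set G)))
  · exact Or.inl hneg
  right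
  have hnt : Nontrivial G := by
    by_contra h
    rw [not_nontrivial_iff_subsingleton] at h
    exact hnc inferInstance
  -- central z
  obtain ⟨z, hzc, hz⟩ : ∃ z : G, z ∈ Subgroup.center G ∧ orderOf z = p := by
    have hcn := hG.center_nontrivial
    have hd : p ∣ Nat.card (Subgroup.center G) := by
      obtain ⟨n, hn0, hn⟩ := (hG.to_subgroup (Subgroup.center G)).nontrivial_iff_card.mp hcn
      exact hn.symm ▸ dvd_pow_self _ (ne_of_gt hn0)
    obtain ⟨z, hz⟩ := exists_prime_orderOf_dvd_card' p hd
    exact ⟨z, z.2, by rw [Subgroup.orderOf_coe]; exact hz⟩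
  have hu : ∀ x : G, x ^ p = 1 → x ∈ Subgroup.zpowers z := by
    intro x hx
    by_contra hxz
    refine hneg ⟨z, x, ?_, hx, ?_, two_gen hp hG hz hxz⟩
    · rw [← hz]; exact pow_orderOf_eq_one z
    · exact ((Subgroup.mem_center_iff.mp hzc) x).symm
  obtain ⟨A, hAn, hAc, hAs⟩ := self_cent (G := G) hG.isNilpotent
  obtain ⟨a, rfl⟩ := cyc_sub hp hG z hz hu A hAc
  obtain ⟨k, hk⟩ := IsPGroup.iff_orderOf.mp hG a
  have hza : z ∈ Subgroup.zpowers a := by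
    apply hAs
    intro y _; exact ((Subgroup.mem_center_iff.mp hzc) y).symm
  have hcent : ∀ b : G, b * a * b⁻¹ = a → b ∈ Subgroup.zpowers a := by
    intro b hb
    apply hAs
    intro y hy
    obtain ⟨n, rfl⟩ := Subgroup.mem_zpowers_iff.mp hy
    have : Commute b a := by
      rw [mul_inv_eq_iff_eq_mul] at hb; exact hb
    exact (this.zpow_right n)
  have hconj : ∀ b : G, ∃ t : ℤ, b * a * b⁻¹ = a ^ t := by
    intro b
    obtain ⟨t, ht⟩ := Subgroup.mem_zpowers_iff.mp (hAn.conj_mem a (Subgroup.mem_zpowers a) b)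
    exact ⟨t, ht.symm⟩
  have main : ∀ b : G, b ∉ Subgroup.zpowers a → b ^ p ∈ Subgroup.zpowers a →
      p = 2 ∧ 2 ≤ k ∧ b * a * b⁻¹ = a⁻¹ ∧ b ^ 2 = z := by
    intro b hb hbp
    obtain ⟨t, ht⟩ := hconj b
    obtain ⟨s, hs⟩ := Subgroup.mem_zpowers_iff.mp hbp
    exact L1 hp hk hz hu hza hb hs.symm ht (fun h => hb (hcent b h))
  have hex : ∀ c : G, c ∉ Subgroup.zpowers a → ∃ j : ℕ, c ^ p ^ j ∉ Subgroup.zpowers a ∧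
      c ^ p ^ (j + 1) ∈ Subgroup.zpowers a ∧ ∀ i ≤ j, c ^ p ^ i ∉ Subgroup.zpowers a := by
    classical
    intro c hc
    have hx : ∃ j, c ^ p ^ j ∈ Subgroup.zpowers a := by
      obtain ⟨n, hn⟩ := hG c
      exact ⟨n, hn ▸ one_mem _⟩
    have h0 : Nat.find hx ≠ 0 := by
      intro h
      have := Nat.find_spec hx
      rw [h] at this; simp at this; exact hc (by simpa using this)
    obtain ⟨j, hj⟩ := Nat.exists_eq_succ_of_ne_zero h0
    refine ⟨j, Nat.find_min hx (by omega), ?_, fun i hi => Nat.find_min hx (by omega)⟩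
    have := Nat.find_spec hx
    rwa [hj] at this
  obtain ⟨c, hc⟩ : ∃ c, c ∉ Subgroup.zpowers a := by
    by_contra hcon
    push Not at hcon
    exact hnc ⟨a, hcon⟩
  obtain ⟨j, hj1, hj2, -⟩ := hex c hc
  obtain ⟨hp2, hk2, hb1, hb2⟩ := main (c ^ p ^ j) hj1 (by rwa [← pow_mul, ← pow_succ])
  subst hp2
  refine ⟨rfl, a, c ^ 2 ^ j, 2 ^ (k - 1), ?_, ?_, by positivity, ?_, hb1, ?_⟩
  · rw [hk, ← pow_succ']; congr 1; omega
  · exact dvd_pow_self _ (by omega)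
  · rw [hb2]
    symm
    apply eq_z hz
    · apply hu
      rw [← pow_mul, ← pow_succ, show k - 1 + 1 = k by omega, ← hk, pow_orderOf_eq_one]
    · intro h
      have := orderOf_dvd_of_pow_eq_one h
      rw [hk, Nat.pow_dvd_pow_iff_le_right (by norm_num)] at this
      omega
  · rw [eq_top_iff]
    intro d _
    have hacl : Subgroup.zpowers a ≤ Subgroup.closure ({a, c ^ 2 ^ j} : Set G) := by
      rw [Subgroup.zpowers_le]; exact Subgroup.subset_closure (by simp)
    by_cases hd : d ∈ Subgroup.zpowers a
    · exact hacl hd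
    have hda : d * a * d⁻¹ = a⁻¹ := by
      obtain ⟨i, hi1, hi2, hi3⟩ := hex d hd
      obtain ⟨-, -, h1, -⟩ := main (d ^ 2 ^ i) hi1 (by rwa [← pow_mul, ← pow_succ])
      rcases i with _ | i
      · simpa using h1
      exfalso
      obtain ⟨t, ht⟩ := hconj (d ^ 2 ^ i)
      have h2 := cj_pow ht 2
      rw [← pow_mul, ← pow_succ, h1, ← zpow_neg_one, zpow_eq_iff', hk] at h2
      have h4 : (4 : ℤ) ∣ ((2 ^ k : ℕ) : ℤ) := by
        push_cast
        exact pow_dvd_pow 2 hk2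
      have h5 := h4.trans h2
      rcases Int.even_or_odd' t with ⟨w, rfl | rfl⟩
      · ring_nf at h5; omega
      · ring_nf at h5; omega
    have h7 : d * c ^ 2 ^ j ∈ Subgroup.zpowers a := by
      apply hcent
      rw [← zpow_neg_one a] at hda hb1
      have := cj_mul hda hb1
      simpa using this
    have h8 := Subgroup.mul_mem _ (hacl h7) (Subgroup.inv_mem _ (Subgroup.subset_closure (show c ^ 2 ^ j ∈ ({a, c ^ 2 ^ j} : Set G) by simp)))
    rwa [mul_inv_cancel_right] at h8

end NB

namespace NB

lemma nb_mono {F : Type*} [Field F] {G : Type*} [Group G] {d : ℕ}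
    {ρ : G →* Matrix.GeneralLinearGroup (Fin d) F} {s t : ℕ} (h : s ≤ t) (hs : NoetherBoundLe ρ s) :
    NoetherBoundLe ρ t := by
  intro f hf
  refine Algebra.adjoin_mono ?_ (hs f hf)
  rintro g ⟨hg, hg2⟩
  exact ⟨hg, hg2.trans h⟩

lemma arith {N p r : ℕ} (hp : p.Prime) (hr : r.Prime) (hpr : p ≤ r) (hpN : p ∣ N) (hrN : r * r ∣ N)
    (hN : 0 < N) : N / r + r - 1 ≤ N / p + p - 1 := by
  rcases hpr.eq_or_lt with rfl | hlt
  · exact le_rfl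
  have hco : Nat.Coprime p (r * r) := by
    have := (Nat.coprime_primes hp hr).mpr hlt.ne
    exact Nat.Coprime.mul_right this this
  obtain ⟨n, rfl⟩ := hco.mul_dvd_of_dvd_of_dvd hpN hrN
  have hn : 0 < n := Nat.pos_of_mul_pos_left hN |> fun h => by
    rcases Nat.eq_zero_or_pos n with h0 | h0
    · subst h0; simp at hN
    · exact h0
  have h1 : p * (r * r) * n / r = p * r * n := by
    rw [show p * (r * r) * n = r * (p * r * n) by ring, Nat.mul_div_cancel_left _ hr.pos]
  have h2 : p * (r * r) * n / p = r * r * n := by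
    rw [mul_assoc, Nat.mul_div_cancel_left _ hp.pos]
  rw [h1, h2]
  have : p * r * n + r ≤ r * r * n + p := by
    obtain ⟨e, rfl⟩ := Nat.exists_eq_add_of_lt hlt
    have h3 : 1 ≤ (p + e + 1) * n := Nat.mul_pos (by omega) hn
    nlinarith
  omega

lemma card_cl {G : Type*} [Group G] (P : Subgroup G) (S : Set P) :
    Nat.card (Subgroup.closure ((fun x : P => (x : G)) '' S)) = Nat.card (Subgroup.closure S) := by
  have : Subgroup.closure ((fun x : P => (x : G)) '' S) = (Subgroup.closure S).map P.subtype := by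
    rw [MonoidHom.map_closure]; rfl
  rw [this]
  exact Subgroup.card_map_of_injective P.subtype_injective

lemma q8 {F : Type*} [Field F] {G : Type*} [Group G] [Fintype G] (hF : (Fintype.card G : F) ≠ 0)
    {d : ℕ} (ρ : G →* Matrix.GeneralLinearGroup (Fin d) F)
    (a b : G) (m : ℕ)
    (P : Subgroup G) (hP : IsPGroup 2 P) (haP : a ∈ P) (hbP : b ∈ P)
    (ha : orderOf a = 2 * m) (h2m : 2 ∣ m) (hb : b ^ 2 = a ^ m)
    (hab : b * a * b⁻¹ = a⁻¹) {q : ℕ} (hq : q = 1 ∨ (q.Prime ∧ 3 ≤ q)) (z : G)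
    (hza : Commute z a) (hzb : Commute z b) (hz : orderOf z = q) (s : ℕ)
    (hs : Fintype.card G / 2 + 2 ≤ s ∨ (Fintype.card G / 2 + 1 ≤ s ∧ 3 ≤ q)) : NoetherBoundLe ρ s := by
  have : Fact (Nat.Prime 2) := ⟨Nat.prime_two⟩
  obtain ⟨l, rfl⟩ := h2m
  have hm0 : l ≠ 0 := by
    rintro rfl
    exact (isOfFinOrder_of_finite a).orderOf_pos.ne' (by rw [ha])
  have hi4 : orderOf (a ^ l) = 4 := by
    rw [orderOf_pow' a hm0, ha, show 2 * (2 * l) = 4 * l by ring, Nat.gcd_mul_left_left,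
      Nat.mul_div_cancel _ (Nat.pos_of_ne_zero hm0)]
  have hij : a ^ l * b = b * (a ^ l)⁻¹ := by
    have h := cj_zpow (t := -1) (by rw [hab]; simp) (-(l : ℤ))
    simp at h
    rw [mul_inv_eq_iff_eq_mul] at h
    exact h.symm
  have hc4 : 8 ≤ Nat.card (Subgroup.closure ({a ^ l, b} : Set G)) := by
    have hle : Subgroup.zpowers (a ^ l) ≤ Subgroup.closure ({a ^ l, b} : Set G) := by
      rw [Subgroup.zpowers_le]; exact Subgroup.subset_closure (by simp)
    have hd := Subgroup.card_dvd_of_le hle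
    have hlt : Nat.card (Subgroup.zpowers (a ^ l)) < Nat.card (Subgroup.closure ({a ^ l, b} : Set G)) := by
      by_contra hcon
      have h := Subgroup.eq_of_le_of_card_ge hle (not_lt.mp hcon)
      have h2 : b ∈ Subgroup.zpowers (a ^ l) := h ▸ Subgroup.subset_closure (by simp)
      obtain ⟨n, hn⟩ := Subgroup.mem_zpowers_iff.mp h2
      have h3 : a ^ l * b = b * a ^ l := by rw [← hn]; group
      rw [hij] at h3
      have h4 : (a ^ l) ^ 2 = 1 := by
        have := mul_left_cancel h3
        rw [sq]; nth_rewrite 1 [← this]; simp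
      have := orderOf_dvd_of_pow_eq_one h4
      rw [hi4] at this; norm_num at this
    rw [Nat.card_zpowers, hi4] at hd hlt
    omega
  have hsub : Subgroup.closure ({a ^ l, b} : Set G) ≤ Subgroup.closure ({a ^ l, b, z} : Set G) :=
    Subgroup.closure_mono (by intro x; simp; tauto)
  have hclP : Subgroup.closure ({a ^ l, b} : Set G) ≤ P := by
    rw [Subgroup.closure_le]
    rintro x (rfl | rfl)
    · exact P.pow_mem haP l
    · exact hbP
  have hdz : q ∣ Nat.card (Subgroup.closure ({a ^ l, b, z} : Set G)) := by
    rw [← hz, ← Nat.card_zpowers]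
    apply Subgroup.card_dvd_of_le
    rw [Subgroup.zpowers_le]; exact Subgroup.subset_closure (by simp)
  have hco : Nat.Coprime (Nat.card (Subgroup.closure ({a ^ l, b} : Set G))) q := by
    obtain ⟨e, he⟩ := IsPGroup.iff_card.mp (hP.to_le hclP)
    rw [he]
    apply Nat.Coprime.pow_left
    rcases hq with rfl | ⟨hq, hq3⟩
    · simp
    · exact (Nat.coprime_primes Nat.prime_two hq).mpr (by omega)
  have hc : 8 * q ≤ Nat.card (Subgroup.closure ({a ^ l, b, z} : Set G)) :=
    (Nat.mul_le_mul_right q hc4).trans (Nat.le_of_dvd Nat.card_pos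
      (hco.mul_dvd_of_dvd_of_dvd (Subgroup.card_dvd_of_le hsub) hdz))
  refine U2 hF ρ ?_ hq ?_ (a ^ l) b z ?_ ?_ hij (hza.pow_right l) hzb ?_ hc s hs
  · have : orderOf a ∣ Fintype.card G := orderOf_dvd_card
    rw [ha] at this
    exact (dvd_mul_right _ _).trans this
  · rw [← hz]; exact orderOf_dvd_card
  · rw [← hi4]; exact pow_orderOf_eq_one _
  · rw [hb, ← pow_mul, mul_comm]
  · rw [← hz]; exact pow_orderOf_eq_one _

theorem nil_thm {F : Type*} [Field F] {G : Type*} [Group G] [Fintype G] (hF : (Fintype.card G : F) ≠ 0)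
    (hnc : ¬ IsCyclic G) (hnil : Group.IsNilpotent G) :
    (∃ r : ℕ, r.Prime ∧ r * r ∣ Fintype.card G ∧ ∀ (d : ℕ) (ρ : G →* Matrix.GeneralLinearGroup (Fin d) F),
      NoetherBoundLe ρ (Fintype.card G / r + r - 1)) ∨
    (2 ∣ Fintype.card G ∧ ∀ (d : ℕ) (ρ : G →* Matrix.GeneralLinearGroup (Fin d) F),
      NoetherBoundLe ρ (Fintype.card G / 2 + 1)) ∨
    (2 ∣ Fintype.card G ∧ IsDicyclic G ∧ ∀ (d : ℕ) (ρ : G →* Matrix.GeneralLinearGroup (Fin d) F),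
      NoetherBoundLe ρ (Fintype.card G / 2 + 2)) := by
  have hnz : ¬ IsZGroup G := fun h => hnc inferInstance
  rw [isZGroup_iff] at hnz
  push Not at hnz
  obtain ⟨r, hr, P, hP⟩ := hnz
  have : Fact r.Prime := ⟨hr⟩
  rcases pgroup_thm hr P.isPGroup' hP with ⟨x, y, hx, hy, hxy, hc⟩ | ⟨rfl, a, b, m, ha, h2m, hm0, hb, hab, hcl⟩
  · left
    have hdr : r * r ∣ Fintype.card G := by
      obtain ⟨k, hk⟩ := IsPGroup.iff_card.mp P.isPGroup'
      have h1 := hc.trans (Subgroup.card_le_card_group _)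
      have h2 : 2 ≤ k := by
        by_contra hcon
        have h3 := Nat.pow_le_pow_right hr.pos (show k ≤ 1 by omega)
        have h4 := hr.two_le
        have h5 : Nat.card P = r ^ k := hk
        rw [h5] at h1
        nlinarith
      rw [← Nat.card_eq_fintype_card]
      refine dvd_trans ?_ (Subgroup.card_subgroup_dvd_card (P : Subgroup G))
      rw [hk, ← sq]
      exact pow_dvd_pow r h2
    refine ⟨r, hr, hdr, fun d ρ => ?_⟩
    refine U1 hF ρ hr (dvd_trans (dvd_mul_right _ _) hdr) (x : G) (y : G) ?_ ?_ ?_ ?_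
    · exact_mod_cast congrArg Subtype.val hx
    · exact_mod_cast congrArg Subtype.val hy
    · exact congrArg Subtype.val hxy.eq
    · have := card_cl (P : Subgroup G) {x, y}
      rw [Set.image_pair] at this
      rw [this]; exact hc
  · right
    have ha' : orderOf (a : G) = 2 * m := by rw [Subgroup.orderOf_coe]; exact ha
    have hb' : (b : G) ^ 2 = (a : G) ^ m := by exact_mod_cast congrArg Subtype.val hb
    have hab' : (b : G) * a * (b : G)⁻¹ = (a : G)⁻¹ := by exact_mod_cast congrArg Subtype.val hab
    have h2G : 2 ∣ Fintype.card G := by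
      have : orderOf (a : G) ∣ Fintype.card G := orderOf_dvd_card
      rw [ha'] at this
      exact (dvd_mul_right _ _).trans this
    by_cases hPt : (P : Subgroup G) = ⊤
    · right
      refine ⟨h2G, ⟨a, b, m, by omega, ha', hb', hab', ?_⟩, fun d ρ => ?_⟩
      · have h := MonoidHom.map_closure (P : Subgroup G).subtype {a, b}
        rw [hcl, Set.image_pair, ← MonoidHom.range_eq_map, Subgroup.range_subtype] at h
        exact h.symm.trans hPt
      · exact q8 hF ρ a b m (P : Subgroup G) P.isPGroup' a.2 b.2 ha' h2m hb' hab' (Or.inl rfl) 1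
          (Commute.one_left _) (Commute.one_left _) orderOf_one _ (Or.inl le_rfl)
    · left
      refine ⟨h2G, fun d ρ => ?_⟩
      have hi1 : (P : Subgroup G).index ≠ 1 := by rwa [Ne, Subgroup.index_eq_one]
      have hqp := Nat.minFac_prime hi1
      have hqd := Nat.minFac_dvd (P : Subgroup G).index
      set q := (P : Subgroup G).index.minFac
      have : Fact q.Prime := ⟨hqp⟩
      have hq2 : q ≠ 2 := by
        intro h
        rw [h] at hqd
        exact P.not_dvd_index hqd
      have hq3 : 3 ≤ q := by have := hqp.two_le; omega
      have hqG : q ∣ Nat.card G := hqd.trans (Subgroup.index_dvd_card _)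
      obtain ⟨z, hz⟩ := exists_prime_orderOf_dvd_card' q hqG
      have hzq : IsPGroup q (Subgroup.zpowers z) := by
        apply IsPGroup.of_card (n := 1)
        rw [Nat.card_zpowers, hz, pow_one]
      obtain ⟨Q, hQ⟩ := hzq.exists_le_sylow
      have hzQ : z ∈ (Q : Subgroup G) := hQ (Subgroup.mem_zpowers z)
      have hcom : ∀ x ∈ (P : Subgroup G), Commute z x := fun x hx =>
        Subgroup.commute_of_normal_of_disjoint (Q : Subgroup G) P inferInstance inferInstance
          (IsPGroup.disjoint_of_ne q 2 hq2 _ _ Q.isPGroup' P.isPGroup') z x hzQ hx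
      exact q8 hF ρ a b m (P : Subgroup G) P.isPGroup' a.2 b.2 ha' h2m hb' hab' (Or.inr ⟨hqp, hq3⟩) z
          (hcom _ a.2) (hcom _ b.2) hz _ (Or.inr ⟨le_rfl, hq3⟩)

end NB

namespace NB

/-- identification with Mathlib's quaternion group -/
lemma dic_equiv {G : Type*} [Group G] [Finite G] {a b : G} {n : ℕ} (hn : 1 < n) (ha : orderOf a = 2 * n)
    (hb : b ^ 2 = a ^ n) (hab : b * a * b⁻¹ = a⁻¹) (hcl : Subgroup.closure ({a, b} : Set G) = ⊤) :
    Nonempty (QuaternionGroup n ≃* G) := by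
  have : NeZero (2 * n) := ⟨by omega⟩
  let α : ZMod (2 * n) → G := fun i => a ^ i.val
  have hmod : ∀ k : ℕ, a ^ (k % (2 * n)) = a ^ k := by
    intro k; rw [← ha, pow_mod_orderOf]
  have hadd : ∀ i j, α (i + j) = α i * α j := by
    intro i j
    simp only [α]
    rw [ZMod.val_add, hmod, pow_add]
  have hnat : ∀ k : ℕ, α (k : ZMod (2 * n)) = a ^ k := by
    intro k
    simp only [α]
    rw [ZMod.val_natCast, hmod]
  have hsub : ∀ i j, α (i - j) = α i * (α j)⁻¹ := by
    intro i j
    rw [eq_mul_inv_iff_mul_eq, ← hadd, sub_add_cancel]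
  have hcj : ∀ i, b * α i = (α i)⁻¹ * b := by
    intro i
    have h := cj_zpow (t := -1) (by rw [hab]; simp) (i.val : ℤ)
    rw [neg_one_mul, zpow_neg] at h
    simp only [zpow_natCast] at h
    rw [mul_inv_eq_iff_eq_mul] at h
    exact h
  have hcj' : ∀ i, α i * b = b * (α i)⁻¹ := by
    intro i
    rw [eq_mul_inv_iff_mul_eq, mul_assoc, hcj]; simp
  have hcomm : ∀ i j, (α i)⁻¹ * α j = α j * (α i)⁻¹ := by
    intro i j
    rw [eq_mul_inv_iff_mul_eq, mul_assoc, ← hadd, add_comm, hadd]; simp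
  let f : QuaternionGroup n →* G := MonoidHom.mk' (fun g => match g with
    | .a i => α i
    | .xa i => b * α i) (by
      rintro (i | i) (j | j)
      · simp only [QuaternionGroup.a_mul_a, hadd]
      · simp only [QuaternionGroup.a_mul_xa, hsub]
        rw [← mul_assoc (α i), hcj', mul_assoc, hcomm]
      · simp only [QuaternionGroup.xa_mul_a, hadd, mul_assoc]
      · simp only [QuaternionGroup.xa_mul_xa, hsub, hadd, hnat]
        rw [← hb]
        have h1 : b * α i * (b * α j) = b * (α i * b) * α j := by group
        rw [h1, hcj', mul_assoc, ← hcomm, sq]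
        group)
  have hbn : ∀ i, b * α i ≠ 1 := by
    intro i h
    have h1 : b = (α i)⁻¹ := eq_inv_of_mul_eq_one_left h
    have h2 : b * a * b⁻¹ = a := by rw [h1]; simp only [α]; group
    rw [h2] at hab
    have h3 : a ^ 2 = 1 := by rw [sq]; nth_rewrite 1 [hab]; simp
    have h4 := Nat.le_of_dvd (by norm_num) (orderOf_dvd_of_pow_eq_one h3)
    omega
  refine ⟨MulEquiv.ofBijective f ⟨?_, ?_⟩⟩
  · rw [injective_iff_map_eq_one]
    rintro (i | i) hi
    · have h1 : a ^ i.val = 1 := hi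
      have h2 := orderOf_dvd_of_pow_eq_one h1
      rw [ha] at h2
      have h3 : i.val = 0 := Nat.eq_zero_of_dvd_of_lt h2 (ZMod.val_lt i)
      rw [(ZMod.val_eq_zero i).mp h3]; rfl
    · exact absurd hi (hbn i)
  · rw [← MonoidHom.range_eq_top, eq_top_iff, ← hcl, Subgroup.closure_le]
    rintro x (rfl | rfl)
    · exact ⟨.a 1, by
        have := hnat 1
        rw [Nat.cast_one, pow_one] at this
        exact this⟩
    · exact ⟨.xa 0, by
        have := hnat 0
        rw [Nat.cast_zero, pow_zero] at this
        change x * α 0 = x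
        rw [this, mul_one]⟩

section
variable {K : Type*} [Field K]

noncomputable def diagA (c : Fin 2 → K) : MvPolynomial (Fin 2) K →ₐ[K] MvPolynomial (Fin 2) K :=
  aeval (fun i => C (c i) * X i)

lemma coeff_diagA (c : Fin 2 → K) (P : MvPolynomial (Fin 2) K) (m : Fin 2 →₀ ℕ) :
    coeff m (diagA c P) = (c 0 ^ m 0 * c 1 ^ m 1) * coeff m P := by
  classical
  induction P using MvPolynomial.induction_on' with
  | monomial u r =>
    have : diagA c (monomial u r) = monomial u ((c 0 ^ u 0 * c 1 ^ u 1) * r) := by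
      rw [diagA, aeval_monomial, Finsupp.prod_fintype _ _ (by simp), monomial_eq,
        Finsupp.prod_fintype _ _ (by simp)]
      simp only [Fin.prod_univ_two, mul_pow, algebraMap_eq, map_mul, map_pow]
      ring
    rw [this, coeff_monomial, coeff_monomial]
    split_ifs with h
    · rw [h]
    · simp
  | add p q hp hq => rw [map_add, coeff_add, coeff_add, hp, hq]; ring

noncomputable def sw : MvPolynomial (Fin 2) K →ₐ[K] MvPolynomial (Fin 2) K :=
  rename (Equiv.swap (0 : Fin 2) 1)

lemma coeff_sw (P : MvPolynomial (Fin 2) K) (m : Fin 2 →₀ ℕ) :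
    coeff (m.mapDomain (Equiv.swap (0 : Fin 2) 1)) (sw P) = coeff m P :=
  coeff_rename_mapDomain _ (Equiv.injective _) _ _

lemma low_sym {n : ℕ} (hn : 0 < n) {ζ : K} (hζ : IsPrimitiveRoot ζ (2 * n)) (h2 : (2 : K) ≠ 0)
    (P : MvPolynomial (Fin 2) K) (hP : P.totalDegree ≤ 2 * n + 1)
    (ha : diagA ![ζ, ζ⁻¹] P = P) (hb : sw (diagA ![1, -1] P) = P) : sw P = P := by
  have hζ0 : ζ ≠ 0 := hζ.ne_zero (by omega)
  ext m'
  obtain ⟨m, rfl⟩ : ∃ m : Fin 2 →₀ ℕ, m' = m.mapDomain (Equiv.swap (0 : Fin 2) 1) := by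
    refine ⟨m'.mapDomain (Equiv.swap (0 : Fin 2) 1), ?_⟩
    ext i
    rw [Finsupp.mapDomain_equiv_apply, Finsupp.mapDomain_equiv_apply]
    simp
  rw [coeff_sw]
  have h1 : coeff (m.mapDomain (Equiv.swap (0 : Fin 2) 1)) P = (-1) ^ m 1 * coeff m P := by
    conv_lhs => rw [← hb]
    rw [coeff_sw, coeff_diagA]; simp
  by_cases h0 : coeff m P = 0
  · rw [h1, h0]; simp
  have h3 := coeff_diagA ![ζ, ζ⁻¹] P m
  rw [ha] at h3
  simp at h3
  have hdeg : m 0 + m 1 ≤ 2 * n + 1 := by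
    have := (le_totalDegree (mem_support_iff.mpr h0)).trans hP
    rw [Finsupp.sum_fintype _ _ (by simp)] at this
    simpa using this
  have h4 : ζ ^ ((m 0 : ℤ) - m 1) = 1 := by
    have h5 : ζ ^ m 0 * (ζ ^ m 1)⁻¹ = 1 := by
      exact mul_right_cancel₀ h0 (by rw [one_mul]; exact h3.symm)
    rw [zpow_sub₀ hζ0, zpow_natCast, zpow_natCast, div_eq_mul_inv, h5]
  rw [hζ.zpow_eq_one_iff_dvd] at h4
  rcases Nat.even_or_odd (m 1) with he | ho
  · rw [h1, he.neg_one_pow, one_mul]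
  · exfalso
    have hm : m 0 = m 1 := by
      obtain ⟨w, hw⟩ := h4
      obtain ⟨y, hy⟩ := ho
      push_cast at hw
      have hw0 : w = 0 := by
        by_contra hw0
        rcases lt_or_gt_of_ne hw0 with h | h
        · have : w ≤ -1 := by omega
          have : (m 0 : ℤ) - m 1 ≤ -(2 * n) := by rw [hw]; nlinarith
          have h8 : m 0 = 0 := by omega
          have h9 : (m 1 : ℤ) = 2 * (n * (-w)) := by rw [h8] at hw; push_cast at hw; linarith
          omega
        · have : 1 ≤ w := by omega
          have : (m 0 : ℤ) - m 1 ≥ (2 * n) := by rw [hw]; nlinarith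
          omega
      rw [hw0] at hw; omega
    have hmm : m.mapDomain (Equiv.swap (0 : Fin 2) 1) = m := by
      ext i
      rw [Finsupp.mapDomain_equiv_apply]
      fin_cases i <;> simp [hm]
    rw [hmm, ho.neg_one_pow] at h1
    apply h0
    have : (2 : K) * coeff m P = 0 := by linear_combination h1
    exact (mul_eq_zero.mp this).resolve_left h2
end

end NB

namespace NB

/-- right regular representation -/
noncomputable def regM (F : Type*) [Field F] {G : Type*} [Group G] {N : ℕ} (e : G ≃ Fin N) :
    G →* Matrix (Fin N) (Fin N) F where
  toFun g := Matrix.of fun i j => if j = e (e.symm i * g) then 1 else 0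
  map_one' := by
    ext i j
    simp [Matrix.one_apply, eq_comm]
  map_mul' g h := by
    ext i j
    simp only [Matrix.of_apply, Matrix.mul_apply, ite_mul, one_mul, zero_mul, Finset.sum_ite_eq',
      Finset.mem_univ, if_true, Equiv.symm_apply_apply, mul_assoc]

noncomputable def regR (F : Type*) [Field F] {G : Type*} [Group G] {N : ℕ} (e : G ≃ Fin N) :
    G →* Matrix.GeneralLinearGroup (Fin N) F := (regM F e).toHomUnits

lemma regR_act (F : Type*) [Field F] {G : Type*} [Group G] {N : ℕ} (e : G ≃ Fin N) (g h : G) :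
    polyAct (regR F e) g (X (e h)) = X (e (h * g)) := by
  simp [polyAct, regR, regM, MonoidHom.coe_toHomUnits]

lemma deg_aeval {F K : Type*} [Field F] [Field K] [Algebra F K] {N : ℕ} (v : Fin N → MvPolynomial (Fin 2) K)
    (hv : ∀ i, (v i).totalDegree ≤ 1) (f : MvPolynomial (Fin N) F) :
    (aeval v f).totalDegree ≤ f.totalDegree := by
  rw [aeval_def, eval₂_eq]
  apply totalDegree_finsetSum_le
  intro m hm
  refine (totalDegree_mul _ _).trans ?_
  have h1 : (algebraMap F (MvPolynomial (Fin 2) K) (coeff m f)).totalDegree = 0 := by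
    rw [MvPolynomial.algebraMap_apply]; exact totalDegree_C _
  rw [h1, zero_add]
  refine (totalDegree_finsetProd _ _).trans ?_
  refine le_trans ?_ (le_totalDegree hm)
  rw [Finsupp.sum]
  apply Finset.sum_le_sum
  intro i _
  refine (totalDegree_pow _ _).trans ?_
  have := Nat.mul_le_mul_left (m i) (hv i)
  simpa using this

theorem lower {F : Type*} [Field F] {G : Type*} [Group G] [Fintype G] (hF : (Fintype.card G : F) ≠ 0)
    (hD : IsDicyclic G) : ∃ (d : ℕ) (ρ : G →* Matrix.GeneralLinearGroup (Fin d) F),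
        ¬ NoetherBoundLe ρ (Fintype.card G / 2 + 1) := by
  classical
  obtain ⟨a, b, n, hn, ha, hb, hab, hcl⟩ := hD
  obtain ⟨φ⟩ := dic_equiv hn ha hb hab hcl
  clear hb hab hcl ha a b
  have hn0 : NeZero n := ⟨by omega⟩
  have h2n0 : NeZero (2 * n) := ⟨by omega⟩
  have hcard : Fintype.card G = 4 * n := by
    rw [← Fintype.card_congr φ.toEquiv, QuaternionGroup.card]
  let K := AlgebraicClosure F
  have hK : (Fintype.card G : K) ≠ 0 := cast_K (G := G) hF
  have h2K : (2 : K) ≠ 0 := by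
    have := cast_ne_of_dvd (m := 2) hK ⟨2 * n, by rw [hcard]; ring⟩
    exact_mod_cast this
  obtain ⟨ζ, hζ⟩ := exists_prim K (2 * n) (cast_ne_of_dvd hK ⟨2, by rw [hcard]; ring⟩)
  have hζ0 : ζ ≠ 0 := hζ.ne_zero (by omega)
  let ψ : AddChar (ZMod (2 * n)) K := AddChar.zmodChar (2 * n) hζ.pow_eq_one
  have hψ1 : ψ 1 = ζ := by
    have := AddChar.zmodChar_apply' hζ.pow_eq_one 1
    simpa using this
  have hψn : ψ (n : ZMod (2 * n)) = -1 := by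
    have h1 := AddChar.zmodChar_apply' hζ.pow_eq_one n
    have h2 : ζ ^ n = -1 := by
      have h3 : (ζ ^ n) ^ 2 = 1 := by rw [← pow_mul, mul_comm]; exact hζ.pow_eq_one
      rcases (by rcases mul_eq_zero.mp (show (ζ ^ n - 1) * (ζ ^ n + 1) = 0 by linear_combination h3) with h | h; exacts [Or.inl (sub_eq_zero.mp h), Or.inr (eq_neg_of_add_eq_zero_left h)] : ζ ^ n = 1 ∨ ζ ^ n = -1) with h | h
      · exact absurd h (hζ.pow_ne_one_of_pos_of_lt (by omega) (by omega))
      · exact h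
    rw [← h2]; exact h1
  have hψ0 : ∀ i, ψ i ≠ 0 := fun i => pow_ne_zero _ hζ0
  have hψneg : ∀ i, ψ (-i) = (ψ i)⁻¹ := fun i => AddChar.map_neg_eq_inv ψ i
  have hψo : ∀ i, ψ i ^ (2 * n) = 1 := by
    intro i
    have h1 : (2 * n) • i = 0 := by
      rw [nsmul_eq_mul, ZMod.natCast_self, zero_mul]
    rw [← AddChar.map_nsmul_eq_pow, h1, AddChar.map_zero_eq_one]
  let w : QuaternionGroup n → MvPolynomial (Fin 2) K := fun g => match g with
    | .a i => C (ψ i) * X 0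
    | .xa i => C (ψ (-i)) * X 1
  have hw1 : ∀ g, (w g).totalDegree ≤ 1 := by
    rintro (i | i)
    · refine (totalDegree_mul _ _).trans ?_
      simp
    · refine (totalDegree_mul _ _).trans ?_
      simp
  have hwa : ∀ g, diagA ![ζ, ζ⁻¹] (w g) = w (g * .a 1) := by
    rintro (i | i)
    · simp only [QuaternionGroup.a_mul_a, w, diagA, map_mul, aeval_X, algHom_C, algebraMap_eq, AddChar.map_add_eq_mul, hψ1]
      simp; ring
    · simp only [QuaternionGroup.xa_mul_a, w, diagA, map_mul, aeval_X, algHom_C, algebraMap_eq,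
        AddChar.map_add_eq_mul, hψ1, hψneg, mul_inv]
      simp; ring
  have hwb : ∀ g, sw (diagA ![1, -1] (w g)) = w (g * .xa 0) := by
    rintro (i | i)
    · simp [QuaternionGroup.a_mul_xa, w, diagA, sw, map_mul, aeval_X, algHom_C, algebraMap_eq]
    · simp [QuaternionGroup.xa_mul_xa, w, diagA, sw, map_mul, aeval_X, algHom_C, algebraMap_eq,
        AddChar.map_add_eq_mul, hψn, sub_eq_add_neg]
  let N := Fintype.card G
  let e : G ≃ Fin N := Fintype.equivFin G
  refine ⟨N, regR F e, ?_⟩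
  intro hNB
  have hc2 : Fintype.card G / 2 + 1 = 2 * n + 1 := by omega
  rw [hc2] at hNB
  let π : MvPolynomial (Fin N) F →ₐ[F] MvPolynomial (Fin 2) K := aeval (fun i => w (φ.symm (e.symm i)))
  have hπX : ∀ g : G, π (X (e g)) = w (φ.symm g) := by
    intro g; simp [π]
  have heq : ∀ (B : MvPolynomial (Fin 2) K →ₐ[K] MvPolynomial (Fin 2) K) (g : QuaternionGroup n),
      (∀ h, B (w h) = w (h * g)) → ∀ f, π (polyAct (regR F e) (φ g) f) = B (π f) := by
    intro B g hB f
    have : π.comp (aeval (fun i => ∑ j, ((regR F e (φ g)).val i j) • (X j))) = (B.restrictScalars F).comp π := by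
      apply MvPolynomial.algHom_ext
      intro i
      obtain ⟨h, rfl⟩ := e.surjective i
      have h1 := regR_act F e (φ g) h
      have h2 : π (polyAct (regR F e) (φ g) (X (e h))) = B (π (X (e h))) := by
        rw [h1, hπX, hπX, hB, map_mul, MulEquiv.symm_apply_apply]
      exact h2
    exact congrArg (fun T => T f) this
  -- everything in the image is symmetric
  have hsym : ∀ f, IsPolyInvariant (regR F e) f → sw (π f) = π f := by
    intro f hf
    have h1 := hNB f hf
    have h2 : Algebra.adjoin F {h : MvPolynomial (Fin N) F | IsPolyInvariant (regR F e) h ∧ h.totalDegree ≤ 2 * n + 1}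
        ≤ AlgHom.equalizer ((sw.restrictScalars F).comp π) π := by
      rw [Algebra.adjoin_le_iff]
      rintro h ⟨hh, hd⟩
      change sw (π h) = π h
      refine low_sym (by omega) hζ h2K (π h) ((deg_aeval _ (fun i => hw1 _) h).trans hd) ?_ ?_
      · rw [← heq _ (.a 1) hwa, hh]
      · have := heq (sw.comp (diagA ![1, -1])) (.xa 0) hwb h
        rw [hh] at this
        exact this.symm
    exact h2 h1
  let x0 : G := φ (.xa 0)
  let f : MvPolynomial (Fin N) F := ∑ g : G, X (e g) ^ (2 * n + 1) * X (e (x0 * g))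
  have hf : IsPolyInvariant (regR F e) f := by
    intro g
    have h0 : ∀ h, (aeval (fun i => ∑ j, ((regR F e g).val i j) • (X j : MvPolynomial (Fin N) F))) (X (e h) : MvPolynomial (Fin N) F)
        = X (e (h * g)) := regR_act F e g
    change (aeval (fun i => ∑ j, ((regR F e g).val i j) • (X j : MvPolynomial (Fin N) F))) f = f
    simp only [f, map_sum, map_mul, map_pow, h0]
    exact Fintype.sum_equiv (Equiv.mulRight g) _ _ (fun h => by simp [mul_assoc])
  have hs := hsym f hf
  let m1 : Fin 2 →₀ ℕ := Finsupp.single 0 (2 * n + 1) + Finsupp.single 1 1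
  let m2 : Fin 2 →₀ ℕ := Finsupp.single 1 (2 * n + 1) + Finsupp.single 0 1
  have hm : m1.mapDomain (Equiv.swap (0 : Fin 2) 1) = m2 := by
    simp only [m1, m2, Finsupp.mapDomain_add, Finsupp.mapDomain_single, Equiv.swap_apply_left, Equiv.swap_apply_right]
  have hmne : m1 ≠ m2 := by
    intro h
    have := DFunLike.congr_fun h 0
    simp [m1, m2] at this
    omega
  have hco : coeff m2 (π f) = coeff m1 (π f) := by
    conv_lhs => rw [← hs]
    rw [← hm, coeff_sw]
  have hX1 : (X 0 ^ (2 * n + 1) * X 1 : MvPolynomial (Fin 2) K) = monomial m1 1 := by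
    rw [X_pow_eq_monomial, X, monomial_mul, one_mul]
  have hX2 : (X 1 ^ (2 * n + 1) * X 0 : MvPolynomial (Fin 2) K) = monomial m2 1 := by
    rw [X_pow_eq_monomial, X, monomial_mul, one_mul]
  have hterm : ∀ g : G, coeff m1 (π (X (e g) ^ (2 * n + 1) * X (e (x0 * g)))) -
      coeff m2 (π (X (e g) ^ (2 * n + 1) * X (e (x0 * g)))) = 1 := by
    intro g
    obtain ⟨q, rfl⟩ := φ.surjective g
    rw [map_mul, map_pow, hπX, hπX, ← map_mul φ, MulEquiv.symm_apply_apply, MulEquiv.symm_apply_apply]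
    rcases q with i | i
    · have : w (.a i) ^ (2 * n + 1) * w (.xa 0 * .a i) = monomial m1 1 := by
        rw [QuaternionGroup.xa_mul_a, zero_add, ← hX1]
        simp only [w, hψneg, mul_pow]
        have hC : (C (ψ i) : MvPolynomial (Fin 2) K) ^ (2 * n) = 1 := by rw [← C_pow, hψo, C_1]
        have : (C (ψ i) * C (ψ i)⁻¹ : MvPolynomial (Fin 2) K) = 1 := by
          rw [← C_mul, mul_inv_cancel₀ (hψ0 i), C_1]
        linear_combination (X 0 ^ (2 * n + 1) * X 1) * this +
          (X 0 ^ (2 * n + 1) * X 1 * C (ψ i) * C (ψ i)⁻¹) * hC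
      rw [this, coeff_monomial, coeff_monomial, if_pos rfl, if_neg hmne]; simp
    · have : w (.xa i) ^ (2 * n + 1) * w (.xa 0 * .xa i) = - monomial m2 1 := by
        rw [QuaternionGroup.xa_mul_xa, sub_zero, ← hX2]
        have hN : (C (-1 * ψ i) : MvPolynomial (Fin 2) K) = - C (ψ i) := by rw [neg_one_mul, C_neg]
        simp only [w, AddChar.map_add_eq_mul, hψn, mul_pow, hN]
        have hC : (C (ψ (-i)) : MvPolynomial (Fin 2) K) ^ (2 * n) = 1 := by rw [← C_pow, hψo, C_1]
        have : (C (ψ (-i)) * C (ψ i) : MvPolynomial (Fin 2) K) = 1 := by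
          rw [← C_mul, hψneg, inv_mul_cancel₀ (hψ0 i), C_1]
        linear_combination (-X 1 ^ (2 * n + 1) * X 0) * this -
          (X 1 ^ (2 * n + 1) * X 0 * C (ψ (-i)) * C (ψ i)) * hC
      rw [this, coeff_neg, coeff_neg, coeff_monomial, coeff_monomial, if_pos rfl, if_neg hmne.symm]; simp
  have hfin : coeff m1 (π f) - coeff m2 (π f) = (Fintype.card G : K) := by
    simp only [f, map_sum, coeff_sum]
    rw [← Finset.sum_sub_distrib]
    simp only [hterm]
    simp
  rw [hco, sub_self] at hfin
  exact hK hfin.symm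

end NB

/-- For a non-cyclic nilpotent group `G` with smallest prime divisor `p` of `|G|`,
`β(G) ≤ |G|/p + p − 1`, except if `p = 2` and `G` is dicyclic, in which case
`β(G) = |G|/2 + 2`. -/
theorem noether_bound_nilpotent {G : Type*} [Group G] [Fintype G]
    (hnc : ¬ IsCyclic G) (hnil : Group.IsNilpotent G)
    (p : ℕ) (hp : p.Prime) (hpdvd : p ∣ Fintype.card G)
    (hmin : ∀ q : ℕ, q.Prime → q ∣ Fintype.card G → p ≤ q)
    (F : Type*) [Field F] (hF : ¬ (ringChar F ∣ Fintype.card G)) :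
    (¬ (p = 2 ∧ IsDicyclic G) →
      ∀ (d : ℕ) (ρ : G →* Matrix.GeneralLinearGroup (Fin d) F),
        NoetherBoundLe ρ (Fintype.card G / p + p - 1)) ∧
    ((p = 2 ∧ IsDicyclic G) →
      (∀ (d : ℕ) (ρ : G →* Matrix.GeneralLinearGroup (Fin d) F),
        NoetherBoundLe ρ (Fintype.card G / 2 + 2)) ∧
      ∃ (d : ℕ) (ρ : G →* Matrix.GeneralLinearGroup (Fin d) F),
        ¬ NoetherBoundLe ρ (Fintype.card G / 2 + 1)) := by
  have hF' : (Fintype.card G : F) ≠ 0 := by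
    intro h
    exact hF ((ringChar.spec F _).mp h)
  have hN : 0 < Fintype.card G := Fintype.card_pos
  have h := NB.nil_thm hF' hnc hnil
  constructor
  · intro hnd d ρ
    rcases h with ⟨r, hr, hrr, hb⟩ | ⟨h2, hb⟩ | ⟨h2, hD, hb⟩
    · exact NB.nb_mono (NB.arith hp hr (hmin r hr (dvd_trans (dvd_mul_right r r) hrr)) hpdvd hrr hN) (hb d ρ)
    · have hp2 : p = 2 := le_antisymm (hmin 2 Nat.prime_two h2) hp.two_le
      subst hp2
      exact hb d ρ
    · have hp2 : p = 2 := le_antisymm (hmin 2 Nat.prime_two h2) hp.two_le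
      exact absurd ⟨hp2, hD⟩ hnd
  · rintro ⟨rfl, hD⟩
    refine ⟨fun d ρ => ?_, NB.lower hF' hD⟩
    rcases h with ⟨r, hr, hrr, hb⟩ | ⟨h2, hb⟩ | ⟨h2, -, hb⟩
    · refine NB.nb_mono ?_ (hb d ρ)
      have := NB.arith hp hr (hmin r hr (dvd_trans (dvd_mul_right r r) hrr)) hpdvd hrr hN
      omega
    · exact NB.nb_mono (by omega) (hb d ρ)
    · exact hb d ρ
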